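/- arXiv:1902.10564 — 2 statements merged into one kernel-verified Lean document; each statement's English description precedes it below -/
import Mathlib

section
/- Let K be a Cantor set in ℝ. Then every finitely generated periodic subgroup of diff^{1+Lip}(K) is finite. -/
open Set

/-- `K` is a Cantor set in `ℝ`: nonempty, compact, totally disconnected, perfect. -/
def IsCantorInR (K : Set ℝ) : Prop :=
  K.Nonempty ∧ IsCompact K ∧ IsTotallyDisconnected K ∧ Perfect K

open Classical in
/-- Apply a permutation of `K` to a real number (identity outside `K`). -/
noncomputable def apK (K : Set ℝ) (f : Equiv.Perm K) (y : ℝ) : ℝ :=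
  if h : y ∈ K then (f ⟨y, h⟩ : ℝ) else y

/-- `f` locally coincides with a `C¹` embedding of an open interval with
nowhere-vanishing derivative. -/
def IsD1 (K : Set ℝ) (f : Equiv.Perm K) : Prop :=
  ∀ x : K, ∃ a b : ℝ, (x : ℝ) ∈ Set.Ioo a b ∧
    ∃ F F' : ℝ → ℝ,
      (∀ y ∈ Set.Ioo a b, HasDerivAt F (F' y) y ∧ F' y ≠ 0) ∧
      ContinuousOn F' (Set.Ioo a b) ∧
      Set.InjOn F (Set.Ioo a b) ∧
      (∀ y : ℝ, y ∈ Set.Ioo a b → y ∈ K → F y = apK K f y)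

/-- `f` locally coincides with a `C¹` embedding of an open interval with
nowhere-vanishing derivative whose log-derivative is Lipschitz. -/
def IsD1Lip (K : Set ℝ) (f : Equiv.Perm K) : Prop :=
  ∀ x : K, ∃ a b : ℝ, (x : ℝ) ∈ Set.Ioo a b ∧
    ∃ F F' : ℝ → ℝ,
      (∀ y ∈ Set.Ioo a b, HasDerivAt F (F' y) y ∧ F' y ≠ 0) ∧
      ContinuousOn F' (Set.Ioo a b) ∧
      Set.InjOn F (Set.Ioo a b) ∧
      (∃ C : NNReal, LipschitzOnWith C (fun y => Real.log |F' y|) (Set.Ioo a b)) ∧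
      (∀ y : ℝ, y ∈ Set.Ioo a b → y ∈ K → F y = apK K f y)

/-- membership in `diff¹(K)`: a homeomorphism of `K` locally coinciding
with `C¹` diffeomorphisms of intervals of `ℝ`. -/
def MemDiff1 (K : Set ℝ) (f : Equiv.Perm K) : Prop :=
  Continuous (fun x : K => f x) ∧ Continuous (fun x : K => f.symm x) ∧ IsD1 K f

/-- membership in `diff^{1+Lip}(K)`. -/
def MemDiffLip (K : Set ℝ) (f : Equiv.Perm K) : Prop :=
  Continuous (fun x : K => f x) ∧ Continuous (fun x : K => f.symm x) ∧ IsD1Lip K f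

/-- The derivative of `f` at `x`, as a limit of difference quotients within `K`. -/
def HasDerivOnK (K : Set ℝ) (f : Equiv.Perm K) (x d : ℝ) : Prop :=
  Filter.Tendsto (fun y : ℝ => (apK K f y - apK K f x) / (y - x))
    (nhdsWithin x (K \ {x})) (nhds d)

/-- `f` is increasing on the interval `I`: it coincides on `I ∩ K` with an
increasing `C¹` diffeomorphism of `I` onto an interval of `ℝ`. -/
def IncreasingOnK (K : Set ℝ) (f : Equiv.Perm K) (I : Set ℝ) : Prop :=
  ∃ F F' : ℝ → ℝ,
    StrictMonoOn F I ∧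
    (∀ y ∈ I, HasDerivWithinAt F (F' y) I y ∧ 0 < F' y) ∧
    ContinuousOn F' I ∧
    (∀ y ∈ I, y ∈ K → F y = apK K f y)

/-- `A` is invariant under the subgroup `G`. -/
def IsInvariantSet (K : Set ℝ) (G : Subgroup (Equiv.Perm K)) (A : Set ℝ) : Prop :=
  ∀ g ∈ G, ∀ x ∈ A, apK K g x ∈ A

/-- `A` is a minimal invariant set for the action of `G` on `K`. -/
def IsMinimalInvariantSet (K : Set ℝ) (G : Subgroup (Equiv.Perm K)) (A : Set ℝ) : Prop :=
  A.Nonempty ∧ A ⊆ K ∧ IsClosed A ∧ IsInvariantSet K G A ∧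
    ∀ B : Set ℝ, B.Nonempty → B ⊆ A → IsClosed B → IsInvariantSet K G B → B = A

/-- The set of points of `K` fixed by every element of `H`. -/
def fixedSet (K : Set ℝ) (H : Subgroup (Equiv.Perm K)) : Set ℝ :=
  {x | x ∈ K ∧ ∀ g ∈ H, apK K g x = x}

/-- `a, b` generate a free subsemigroup: distinct nonempty positive words in
`a` and `b` define distinct elements. -/
def IsFreePair {M : Type*} [Monoid M] (a b : M) : Prop :=
  ∀ w₁ w₂ : List Bool, w₁ ≠ [] → w₂ ≠ [] →
    (w₁.map (fun t => if t then a else b)).prod = (w₂.map (fun t => if t then a else b)).prod →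
    w₁ = w₂

/-- `G` contains no free subsemigroup on two generators. -/
def HasNoFreeSubsemigroup {Γ : Type*} [Group Γ] (G : Subgroup Γ) : Prop :=
  ¬ ∃ a ∈ G, ∃ b ∈ G, IsFreePair a b

/-- `p` is accumulated on the left by `A`. -/
def AccLeft (p : ℝ) (A : Set ℝ) : Prop := ∀ α > 0, (Set.Ico (p - α) p ∩ A).Nonempty

/-- `p` is accumulated on the right by `A`. -/
def AccRight (p : ℝ) (A : Set ℝ) : Prop := ∀ α > 0, (Set.Ioc p (p + α) ∩ A).Nonempty

open Filter Topology MulAction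
open scoped Pointwise

/-- On the ball of radius `δ` around `x`, the map `f` is strictly monotone and distorts ratios of
distances by a factor at most `exp (C * D)` at scale `D`. -/
def TameAt {K : Set ℝ} (f : K → K) (δ C : ℝ) (x : K) : Prop :=
  (StrictMonoOn f (Metric.ball x δ) ∨ StrictAntiOn f (Metric.ball x δ)) ∧
    ∀ u ∈ Metric.ball x δ, ∀ v ∈ Metric.ball x δ, ∀ w ∈ Metric.ball x δ, ∀ D : ℝ,
      dist u v ≤ D → dist u w ≤ D →
        dist (f u) (f v) * dist u w ≤ Real.exp (C * D) * dist (f u) (f w) * dist u v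

section Germs

variable {G : Type*} [Group G] {K : Set ℝ} [MulAction G K]

/-- The subgroup of elements acting trivially near `x`. -/
def germStabilizer (G : Type*) [Group G] {K : Set ℝ} [MulAction G K] (x : K) : Subgroup G where
  carrier := {g | ∀ᶠ y in 𝓝 x, g • y = y}
  mul_mem' {g h} hg hh := by
    filter_upwards [hg, hh] with y h1 h2
    rw [mul_smul, h2, h1]
  one_mem' := by simp
  inv_mem' {g} hg := by
    filter_upwards [hg] with y hy
    rw [inv_smul_eq_iff, hy]

theorem germStabilizer_le_stabilizer (x : K) : germStabilizer G x ≤ stabilizer G x :=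
  fun g hg => (show ∀ᶠ y in 𝓝 x, g • y = y from hg).self_of_nhds

theorem orbit_finite_of_le_stabilizer {H : Subgroup G} (hH : H.index ≠ 0) {y : K}
    (hy : H ≤ stabilizer G y) : (orbit G y).Finite := by
  refine Set.finite_of_ncard_ne_zero ?_
  rw [← index_stabilizer]
  exact fun h => hH (Nat.eq_zero_of_zero_dvd (h ▸ Subgroup.index_dvd_of_le hy))

variable [ContinuousConstSMul G K]

theorem eventually_smul_eq_of_strictMonoOn {g : G} {x : K} {δ : ℝ} (hδ : 0 < δ) (hx : g • x = x)
    (hg : IsOfFinOrder g) (hmono : StrictMonoOn (g • · : K → K) (Metric.ball x δ)) :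
    ∀ᶠ y in 𝓝 x, g • y = y := by
  obtain ⟨n, hn, hgn⟩ := isOfFinOrder_iff_pow_eq_one.1 hg
  have hev : ∀ᶠ y in 𝓝 x, ∀ k ∈ Finset.range (n + 1), g ^ k • y ∈ Metric.ball x δ := by
    rw [Filter.eventually_all_finset]
    intro k _
    have hfix : g ^ k • x = x := pow_mem (show g ∈ stabilizer G x from hx) k
    have hc : Tendsto (fun y : K => g ^ k • y) (𝓝 x) (𝓝 x) := by
      have := (continuous_const_smul (T := K) (g ^ k)).tendsto x
      rwa [hfix] at this
    exact hc (Metric.ball_mem_nhds x hδ)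
  filter_upwards [hev] with y hy
  rcases lt_trichotomy (g • y) y with h | h | h
  · have key : ∀ k, 1 ≤ k → k ≤ n → g ^ k • y < y ∧ g ^ k • y ≤ g • y := by
      intro k hk
      induction k, hk using Nat.le_induction with
      | base => intro _; simpa using h
      | succ k hk ih =>
        intro hkn
        have := hmono (hy k (by simp; omega)) (by simpa using hy 0 (by simp))
          (ih (by omega)).1
        simp only [smul_smul, ← pow_succ'] at this
        exact ⟨this.trans h, this.le⟩
    have := (key n hn le_rfl).1
    simp [hgn] at this
  · exact h
  · have key : ∀ k, 1 ≤ k → k ≤ n → y < g ^ k • y := by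
      intro k hk
      induction k, hk using Nat.le_induction with
      | base => intro _; simpa using h
      | succ k hk ih =>
        intro hkn
        have := hmono (by simpa using hy 0 (by simp)) (hy k (by simp; omega))
          (ih (by omega))
        simp only [smul_smul, ← pow_succ'] at this
        exact h.trans this
    have := key n hn le_rfl
    simp [hgn] at this

theorem inv_mul_mem_germStabilizer (htame : ∀ (g : G) (x : K), ∃ δ > 0, ∃ C,
    TameAt (g • · : K → K) δ C x) (hper : ∀ g : G, IsOfFinOrder g) {x : K} {g h : G}
    (hg : g ∈ stabilizer G x) (hh : h ∈ stabilizer G x) (hg' : g ∉ germStabilizer G x)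
    (hh' : h ∉ germStabilizer G x) : g⁻¹ * h ∈ germStabilizer G x := by
  have hanti : ∀ k ∈ stabilizer G x, k ∉ germStabilizer G x →
      ∃ δ > 0, StrictAntiOn (k • · : K → K) (Metric.ball x δ) := by
    intro k hk hk'
    obtain ⟨δ, hδ, C, hm | hm, -⟩ := htame k x
    · exact (hk' (eventually_smul_eq_of_strictMonoOn hδ hk (hper k) hm)).elim
    · exact ⟨δ, hδ, hm⟩
  obtain ⟨δ₁, hδ₁, h₁⟩ := hanti g⁻¹ (inv_mem hg) (fun h => hg' (by simpa using h))
  obtain ⟨δ₂, hδ₂, h₂⟩ := hanti h hh hh'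
  have hc : Tendsto (fun y : K => h • y) (𝓝 x) (𝓝 x) := by
    have := (continuous_const_smul (T := K) h).tendsto x
    rwa [show h • x = x from hh] at this
  obtain ⟨δ₃, hδ₃, h₃⟩ := Metric.mem_nhds_iff.1 (hc (Metric.ball_mem_nhds x hδ₁))
  refine eventually_smul_eq_of_strictMonoOn (lt_min hδ₂ hδ₃)
    (mul_mem (inv_mem hg) hh : g⁻¹ * h ∈ stabilizer G x) (hper _) ?_
  intro a ha b hb hab
  have ha' := Metric.ball_subset_ball (min_le_left δ₂ δ₃) ha
  have hb' := Metric.ball_subset_ball (min_le_left δ₂ δ₃) hb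
  have := h₁ (h₃ (Metric.ball_subset_ball (min_le_right δ₂ δ₃) hb))
    (h₃ (Metric.ball_subset_ball (min_le_right δ₂ δ₃) ha)) (h₂ ha' hb' hab)
  simpa [mul_smul] using this

theorem index_germStabilizer_ne_zero (htame : ∀ (g : G) (x : K), ∃ δ > 0, ∃ C,
    TameAt (g • · : K → K) δ C x) (hper : ∀ g : G, IsOfFinOrder g) {x : K}
    (hx : (orbit G x).Finite) : (germStabilizer G x).index ≠ 0 := by
  have hst : (stabilizer G x).index ≠ 0 := by
    rw [index_stabilizer]
    exact (Set.ncard_pos hx).2 (nonempty_orbit x) |>.ne'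
  rw [← Subgroup.relIndex_mul_index (germStabilizer_le_stabilizer x)]
  refine mul_ne_zero ?_ hst
  by_cases hle : stabilizer G x ≤ germStabilizer G x
  · rw [Subgroup.relIndex_eq_one.2 hle]
    exact one_ne_zero
  obtain ⟨g, hg, hg'⟩ := SetLike.not_le_iff_exists.1 hle
  have : Finite (stabilizer G x ⧸ (germStabilizer G x).subgroupOf (stabilizer G x)) := by
    refine Set.finite_univ_iff.1 (Set.Finite.subset (Set.toFinite ({QuotientGroup.mk 1,
      QuotientGroup.mk ⟨g, hg⟩} : Set (stabilizer G x ⧸ _))) ?_)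
    rintro q -
    obtain ⟨⟨h, hh⟩, rfl⟩ := QuotientGroup.mk_surjective q
    by_cases hh' : h ∈ germStabilizer G x
    · left
      refine (QuotientGroup.eq.2 ?_).symm
      simpa [Subgroup.mem_subgroupOf] using hh'
    · right
      refine (QuotientGroup.eq.2 ?_).symm
      simpa [Subgroup.mem_subgroupOf] using
        inv_mul_mem_germStabilizer htame hper hg hh hg' hh'
  exact Subgroup.index_ne_zero_of_finite

theorem eventually_germStabilizer_le_stabilizer [Group.FG G] (htame : ∀ (g : G) (x : K), ∃ δ > 0,
    ∃ C, TameAt (g • · : K → K) δ C x) (hper : ∀ g : G, IsOfFinOrder g) {x : K}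
    (hx : (orbit G x).Finite) : ∀ᶠ y in 𝓝 x, germStabilizer G x ≤ stabilizer G y := by
  have : (germStabilizer G x).FiniteIndex := ⟨index_germStabilizer_ne_zero htame hper hx⟩
  obtain ⟨S, hS, hSfin⟩ := (Subgroup.fg_iff _).1
    ((Group.fg_iff_subgroup_fg _).1 (Subgroup.fg_of_index_ne_zero (germStabilizer G x)))
  have : ∀ᶠ y in 𝓝 x, ∀ s ∈ S, s • y = y := by
    rw [Filter.eventually_all_finite hSfin]
    intro s hs
    exact (hS ▸ Subgroup.subset_closure hs : s ∈ germStabilizer G x)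
  filter_upwards [this] with y hy
  rw [← hS, Subgroup.closure_le]
  exact hy

theorem isOpen_setOf_orbit_finite [Group.FG G] (htame : ∀ (g : G) (x : K), ∃ δ > 0, ∃ C,
    TameAt (g • · : K → K) δ C x) (hper : ∀ g : G, IsOfFinOrder g) :
    IsOpen {x : K | (orbit G x).Finite} := by
  refine isOpen_iff_mem_nhds.2 fun x hx => ?_
  filter_upwards [eventually_germStabilizer_le_stabilizer htame hper hx] with y hy
  exact orbit_finite_of_le_stabilizer (index_germStabilizer_ne_zero htame hper hx) hy

theorem finite_of_forall_orbit_finite [Group.FG G] [CompactSpace K] [FaithfulSMul G K]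
    (htame : ∀ (g : G) (x : K), ∃ δ > 0, ∃ C, TameAt (g • · : K → K) δ C x)
    (hper : ∀ g : G, IsOfFinOrder g) (horb : ∀ x : K, (orbit G x).Finite) : Finite G := by
  have key : ∃ H : Subgroup G, H.index ≠ 0 ∧ ∀ y ∈ (univ : Set K), H ≤ stabilizer G y := by
    refine isCompact_univ.induction_on (p := fun s => ∃ H : Subgroup G, H.index ≠ 0 ∧
      ∀ y ∈ s, H ≤ stabilizer G y) ⟨⊤, by simp, by simp⟩ ?_ ?_ ?_
    · rintro s t hst ⟨H, hH, h⟩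
      exact ⟨H, hH, fun y hy => h y (hst hy)⟩
    · rintro s t ⟨H₁, hH₁, h₁⟩ ⟨H₂, hH₂, h₂⟩
      refine ⟨H₁ ⊓ H₂, Subgroup.index_inf_ne_zero hH₁ hH₂, ?_⟩
      rintro y (hy | hy)
      · exact inf_le_left.trans (h₁ y hy)
      · exact inf_le_right.trans (h₂ y hy)
    · intro x _
      rw [nhdsWithin_univ]
      exact ⟨_, eventually_germStabilizer_le_stabilizer htame hper (horb x), germStabilizer G x,
        index_germStabilizer_ne_zero htame hper (horb x), fun _ hy => hy⟩
  obtain ⟨H, hH, h⟩ := key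
  have hbot : H = ⊥ := (Subgroup.eq_bot_iff_forall H).2 fun g hg =>
    FaithfulSMul.eq_of_smul_eq_smul (α := K) fun y => by
      rw [one_smul]
      exact h y (mem_univ y) hg
  rw [hbot, Subgroup.index_bot] at hH
  exact Nat.finite_of_card_ne_zero hH

theorem exists_minimal_subset [CompactSpace K] {A : Set K} (hA : IsClosed A) (hne : A.Nonempty)
    (hinv : ∀ (g : G), ∀ x ∈ A, g • x ∈ A) :
    ∃ M ⊆ A, IsClosed M ∧ M.Nonempty ∧ (∀ (g : G), ∀ x ∈ M, g • x ∈ M) ∧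
      ∀ p ∈ M, M ⊆ closure (orbit G p) := by
  obtain ⟨M, hMA, ⟨hMc, hMne, hMinv⟩, hMmin⟩ := zorn_superset_nonempty
    {B : Set K | IsClosed B ∧ B.Nonempty ∧ ∀ (g : G), ∀ x ∈ B, g • x ∈ B} (by
      intro c hc hchain hcne
      refine ⟨⋂₀ c, ⟨isClosed_sInter fun B hB => (hc hB).1, ?_, ?_⟩,
        fun B hB => sInter_subset_of_mem hB⟩
      · have : Nonempty c := hcne.to_subtype
        rw [sInter_eq_iInter]
        refine IsCompact.nonempty_iInter_of_directed_nonempty_isCompact_isClosed _ ?_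
          (fun B => (hc B.2).2.1) (fun B => (hc B.2).1.isCompact) (fun B => (hc B.2).1)
        exact (hchain.symm.directedOn (r := fun s t : Set K => s ⊇ t)).directed_val
      · exact fun g x hx B hB => (hc hB).2.2 g x (hx B hB))
    A ⟨hA, hne, hinv⟩
  refine ⟨M, hMA, hMc, hMne, hMinv, fun p hp => hMmin ⟨isClosed_closure,
    ⟨p, subset_closure (mem_orbit_self p)⟩, fun g x hx => ?_⟩ (closure_minimal ?_ hMc)⟩
  · exact map_mem_closure (continuous_const_smul g) hx fun y hy => mem_orbit_of_mem_orbit g hy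
  · rintro _ ⟨g, rfl⟩
    exact hMinv g p hp

end Germs

section Gaps

variable {K : Set ℝ}

theorem TameAt.of_ball_subset {f : K → K} {δ δ' C C' : ℝ} {x x' : K} (h : TameAt f δ C x)
    (hsub : Metric.ball x' δ' ⊆ Metric.ball x δ) (hC : C ≤ C') : TameAt f δ' C' x' := by
  refine ⟨h.1.imp (fun h => h.mono hsub) (fun h => h.mono hsub), ?_⟩
  intro u hu v hv w hw D huv huw
  refine (h.2 u (hsub hu) v (hsub hv) w (hsub hw) D huv huw).trans ?_
  have hD : 0 ≤ D := dist_nonneg.trans huv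
  gcongr

theorem TameAt.mono {f : K → K} {δ δ' C C' : ℝ} {x : K} (h : TameAt f δ C x) (hδ : δ' ≤ δ)
    (hC : C ≤ C') : TameAt f δ' C' x :=
  h.of_ball_subset (Metric.ball_subset_ball hδ) hC

theorem exists_uniform_tameAt [CompactSpace K] {f : K → K}
    (hf : ∀ x, ∃ δ > 0, ∃ C, TameAt f δ C x) : ∃ δ > 0, ∃ C, ∀ x, TameAt f δ C x := by
  have key : ∃ δ > 0, ∃ C, ∀ x ∈ (univ : Set K), TameAt f δ C x := by
    refine isCompact_univ.induction_on
      (p := fun s => ∃ δ > 0, ∃ C, ∀ x ∈ s, TameAt f δ C x) ⟨1, one_pos, 0, by simp⟩ ?_ ?_ ?_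
    · rintro s t hst ⟨δ, hδ, C, h⟩
      exact ⟨δ, hδ, C, fun x hx => h x (hst hx)⟩
    · rintro s t ⟨δ₁, hδ₁, C₁, h₁⟩ ⟨δ₂, hδ₂, C₂, h₂⟩
      refine ⟨min δ₁ δ₂, lt_min hδ₁ hδ₂, max C₁ C₂, ?_⟩
      rintro x (hx | hx)
      · exact (h₁ x hx).mono (min_le_left _ _) (le_max_left _ _)
      · exact (h₂ x hx).mono (min_le_right _ _) (le_max_right _ _)
    · intro x _
      obtain ⟨δ, hδ, C, h⟩ := hf x
      refine ⟨Metric.ball x (δ / 2),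
        mem_nhdsWithin_of_mem_nhds (Metric.ball_mem_nhds x (half_pos hδ)),
        δ / 2, half_pos hδ, C, fun y hy => h.of_ball_subset ?_ le_rfl⟩
      refine Metric.ball_subset_ball' ?_
      linarith [Metric.mem_ball.1 hy]
  simpa using key

theorem exists_uniform_tameAt_of_finite [CompactSpace K] {ι : Type*} {T : Set ι} (hT : T.Finite)
    {f : ι → K → K} (hf : ∀ i x, ∃ δ > 0, ∃ C, TameAt (f i) δ C x) :
    ∃ δ > 0, ∃ C ≥ 0, ∀ i ∈ T, ∀ x, TameAt (f i) δ C x := by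
  induction T, hT using Set.Finite.induction_on with
  | empty => exact ⟨1, one_pos, 0, le_rfl, by simp⟩
  | @insert i T _ _ ih =>
    obtain ⟨δ₁, hδ₁, C₁, hC₁, h₁⟩ := ih
    obtain ⟨δ₂, hδ₂, C₂, h₂⟩ := exists_uniform_tameAt (hf i)
    refine ⟨min δ₁ δ₂, lt_min hδ₁ hδ₂, max C₁ C₂, hC₁.trans (le_max_left _ _), ?_⟩
    rintro j (rfl | hj) x
    · exact (h₂ x).mono (min_le_right _ _) (le_max_right _ _)
    · exact (h₁ j hj x).mono (min_le_left _ _) (le_max_left _ _)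

/-- The endpoints, in either order, of the bounded complementary intervals of `M`. -/
def gaps (M : Set K) : Set (K × K) :=
  {q | q.1 ∈ M ∧ q.2 ∈ M ∧ q.1 ≠ q.2 ∧
    ∀ z ∈ M, ((z : ℝ) - q.1) * ((q.2 : ℝ) - z) ≤ 0}

theorem gaps_swap {M : Set K} {q : K × K} (hq : q ∈ gaps M) : q.swap ∈ gaps M :=
  ⟨hq.2.1, hq.1, hq.2.2.1.symm, fun z hz => by
    have := hq.2.2.2 z hz
    simp only [Prod.fst_swap, Prod.snd_swap]
    linarith⟩

theorem eq_of_mem_Ioo_of_mem_gaps {M : Set K} {p q : K × K} (hp : p ∈ gaps M) (hq : q ∈ gaps M)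
    {t : ℝ} (htp : t ∈ Ioo (p.1 : ℝ) p.2) (htq : t ∈ Ioo (q.1 : ℝ) q.2) : p = q := by
  obtain ⟨hp1, hp2, -, hp⟩ := hp
  obtain ⟨hq1, hq2, -, hq⟩ := hq
  obtain ⟨h1, h2⟩ := htp
  obtain ⟨h3, h4⟩ := htq
  have e1 : (p.1 : ℝ) = q.1 := by
    by_contra hne
    rcases lt_or_gt_of_ne hne with h | h
    · nlinarith [hp _ hq1]
    · nlinarith [hq _ hp1]
  have e2 : (p.2 : ℝ) = q.2 := by
    by_contra hne
    rcases lt_or_gt_of_ne hne with h | h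
    · nlinarith [hq _ hp2]
    · nlinarith [hp _ hq2]
  exact Prod.ext (Subtype.ext e1) (Subtype.ext e2)

theorem sum_gaps_le_of_lt {M : Set K} {a b : ℝ} (hab : a ≤ b) (hK : K ⊆ Icc a b)
    {s : Finset (K × K)} (hs : ∀ q ∈ s, q ∈ gaps M ∧ q.1 < q.2) :
    ∑ q ∈ s, dist q.1 q.2 ≤ b - a := by
  have hdisj : (s : Set (K × K)).PairwiseDisjoint fun q => Ioo (q.1 : ℝ) q.2 := by
    intro p hp q hq hne
    refine Set.disjoint_left.2 fun t htp htq => hne ?_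
    exact eq_of_mem_Ioo_of_mem_gaps (hs p hp).1 (hs q hq).1 htp htq
  have h1 := MeasureTheory.measure_biUnion_finset (μ := MeasureTheory.volume) hdisj
    fun _ _ => measurableSet_Ioo
  have h2 : MeasureTheory.volume (⋃ q ∈ s, Ioo (q.1 : ℝ) q.2) ≤ ENNReal.ofReal (b - a) := by
    rw [← Real.volume_Icc]
    refine MeasureTheory.measure_mono (iUnion₂_subset fun q _ => ?_)
    exact Ioo_subset_Icc_self.trans (Icc_subset_Icc (hK q.1.2).1 (hK q.2.2).2)
  rw [h1] at h2
  simp only [Real.volume_Ioo] at h2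
  rw [← ENNReal.ofReal_sum_of_nonneg fun q hq => sub_nonneg.2 (hs q hq).2.le,
    ENNReal.ofReal_le_ofReal_iff (sub_nonneg.2 hab)] at h2
  refine (Finset.sum_congr rfl fun q hq => ?_).trans_le h2
  rw [Subtype.dist_eq, dist_comm, Real.dist_eq]
  exact abs_of_pos (sub_pos.2 (hs q hq).2)

theorem sum_gaps_le {M : Set K} {a b : ℝ} (hab : a ≤ b) (hK : K ⊆ Icc a b) {s : Finset (K × K)}
    (hs : ∀ q ∈ s, q ∈ gaps M) : ∑ q ∈ s, dist q.1 q.2 ≤ 2 * (b - a) := by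
  classical
  rw [← Finset.sum_filter_add_sum_filter_not s fun q => q.1 < q.2]
  have h1 : ∑ q ∈ s with q.1 < q.2, dist q.1 q.2 ≤ b - a :=
    sum_gaps_le_of_lt (M := M) hab hK fun q hq => by
      rw [Finset.mem_filter] at hq
      exact ⟨hs q hq.1, hq.2⟩
  have h2 : ∑ q ∈ s with ¬ q.1 < q.2, dist q.1 q.2 ≤ b - a := by
    have := sum_gaps_le_of_lt (M := M) hab hK
      (s := (s.filter fun q => ¬ q.1 < q.2).map (Equiv.prodComm K K).toEmbedding) (by
        intro q hq
        obtain ⟨p, hp, rfl⟩ := Finset.mem_map.1 hq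
        rw [Finset.mem_filter] at hp
        exact ⟨gaps_swap (hs p hp.1), lt_of_le_of_ne (not_lt.1 hp.2) (hs p hp.1).2.2.1.symm⟩)
    rw [Finset.sum_map] at this
    simpa [dist_comm] using this
  linarith

theorem exists_subset_Icc_of_compactSpace (K : Set ℝ) [CompactSpace K] :
    ∃ R : ℝ, -R ≤ R ∧ K ⊆ Icc (-R) R := by
  obtain ⟨R, hR, h⟩ :=
    (isCompact_iff_compactSpace.2 ‹CompactSpace K›).isBounded.subset_closedBall_lt 0 0
  exact ⟨R, by linarith, by simpa [Real.closedBall_eq_Icc] using h⟩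

theorem finite_setOf_mem_gaps_le_dist [CompactSpace K] (M : Set K) {ε : ℝ} (hε : 0 < ε) :
    {q ∈ gaps M | ε ≤ dist q.1 q.2}.Finite := by
  obtain ⟨R, hR⟩ := exists_subset_Icc_of_compactSpace K
  have hsum : Summable fun q : gaps M => dist q.1.1 q.1.2 := by
    refine summable_of_sum_le (c := 2 * (R - -R)) (fun _ => dist_nonneg) fun u => ?_
    have := sum_gaps_le (M := M) (s := u.map (Function.Embedding.subtype _)) hR.1 hR.2 (by
      intro q hq
      obtain ⟨p, -, rfl⟩ := Finset.mem_map.1 hq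
      exact p.2)
    rwa [Finset.sum_map] at this
  have h := hsum.tendsto_cofinite_zero.eventually_lt_const hε
  refine (Set.Finite.image Subtype.val (Filter.eventually_cofinite.1 h)).subset ?_
  rintro q ⟨hq, hεq⟩
  exact ⟨⟨q, hq⟩, not_lt.2 hεq, rfl⟩

theorem exists_mem_gaps_between (hK : IsTotallyDisconnected K) {M : Set K} (hM : IsCompact M)
    {x y : K} (hx : x ∈ M) (hy : y ∈ M) (hxy : x < y) :
    ∃ q ∈ gaps M, q.1 < q.2 ∧ x ≤ q.1 ∧ q.2 ≤ y := by
  obtain ⟨t, ht, htK⟩ : ∃ t ∈ Icc (x : ℝ) y, t ∉ K := by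
    by_contra! h
    exact hxy.ne (Subtype.ext (hK _ h isPreconnected_Icc (left_mem_Icc.2 hxy.le)
      (right_mem_Icc.2 hxy.le)))
  have hne : ∀ z : K, (z : ℝ) ≠ t := fun z h => htK (h ▸ z.2)
  have hc1 : IsCompact (M ∩ {z : K | (z : ℝ) ≤ t}) :=
    hM.inter_right (isClosed_le continuous_subtype_val continuous_const)
  have hc2 : IsCompact (M ∩ {z : K | t ≤ (z : ℝ)}) :=
    hM.inter_right (isClosed_le continuous_const continuous_subtype_val)
  obtain ⟨a, ⟨haM, hat⟩, ha⟩ := hc1.exists_isMaxOn ⟨x, hx, ht.1⟩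
    (continuous_subtype_val (p := (· ∈ K))).continuousOn
  obtain ⟨b, ⟨hbM, hbt⟩, hb⟩ := hc2.exists_isMinOn ⟨y, hy, ht.2⟩
    (continuous_subtype_val (p := (· ∈ K))).continuousOn
  have hat' : (a : ℝ) < t := lt_of_le_of_ne hat (hne a)
  have hbt' : t < (b : ℝ) := lt_of_le_of_ne hbt (hne b).symm
  have hab : a < b := Subtype.coe_lt_coe.1 (hat'.trans hbt')
  refine ⟨(a, b), ⟨haM, hbM, hab.ne, fun z hz => ?_⟩, hab, ha ⟨hx, ht.1⟩, hb ⟨hy, ht.2⟩⟩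
  simp only
  rcases le_total (z : ℝ) t with h | h
  · have : (z : ℝ) ≤ a := ha ⟨hz, h⟩
    nlinarith
  · have : (b : ℝ) ≤ z := hb ⟨hz, h⟩
    nlinarith

theorem infinite_gaps (hK : IsTotallyDisconnected K) {M : Set K} (hM : IsCompact M)
    (hinf : M.Infinite) : (gaps M).Infinite := by
  intro hfin
  refine hinf (Set.Finite.of_injOn (f := fun x => {q ∈ gaps M | q.1 < q.2 ∧ q.2 ≤ x})
    (t := 𝒫 (gaps M)) (fun x _ q hq => hq.1) ?_ hfin.powerset)
  have key : ∀ x ∈ M, ∀ y ∈ M, x < y → {q ∈ gaps M | q.1 < q.2 ∧ q.2 ≤ x} ≠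
      {q ∈ gaps M | q.1 < q.2 ∧ q.2 ≤ y} := by
    intro x hx y hy hxy heq
    obtain ⟨q, hq, hlt, h1, h2⟩ := exists_mem_gaps_between hK hM hx hy hxy
    have : q ∈ {q ∈ gaps M | q.1 < q.2 ∧ q.2 ≤ x} := heq ▸ ⟨hq, hlt, h2⟩
    exact absurd (this.2.2.trans h1) (not_le.2 hlt)
  intro x hx y hy hxy
  rcases lt_trichotomy x y with h | h | h
  · exact (key x hx y hy h hxy).elim
  · exact h
  · exact (key y hy x hx h hxy.symm).elim

end Gaps

section Dynamics

variable {G : Type*} [Group G] {K : Set ℝ} [MulAction G K]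

theorem eventually_smul_mem_gaps [CompactSpace K] [ContinuousConstSMul G K] {M : Set K}
    (hM : ∀ (g : G), ∀ x ∈ M, g • x ∈ M) {g : G} {δ C : ℝ} (hδ : 0 < δ)
    (hg : ∀ x, TameAt (g • · : K → K) δ C x) :
    ∀ᶠ ε in 𝓝[>] (0 : ℝ), ∀ q ∈ gaps M, dist q.1 q.2 < ε → g • q ∈ gaps M := by
  obtain ⟨η, hη, hη'⟩ := Metric.uniformContinuous_iff.1
    (CompactSpace.uniformContinuous_of_continuous
    (continuous_const_smul (T := K) g⁻¹)) δ hδ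
  obtain ⟨ε₀, hε₀, hε₀'⟩ := Metric.uniformContinuous_iff.1
    (CompactSpace.uniformContinuous_of_continuous (continuous_const_smul (T := K) g)) η hη
  filter_upwards [Ioo_mem_nhdsGT (lt_min hε₀ hδ)] with ε hε
  rintro ⟨x, y⟩ ⟨hx, hy, hxy, hgap⟩ hlt
  refine ⟨hM g x hx, hM g y hy, fun h => hxy (MulAction.injective g h), fun z hz => ?_⟩
  by_contra! hpos
  simp only [Prod.smul_mk] at hpos
  obtain ⟨w, rfl⟩ : ∃ w, g • w = z := ⟨g⁻¹ • z, smul_inv_smul g z⟩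
  have hw : w ∈ M := by simpa using hM g⁻¹ _ hz
  have hxyη : dist (g • x) (g • y) < η := hε₀' ((hlt.trans hε.2).trans_le (min_le_left _ _))
  have hwη : dist (g • w) (g • x) < η := by
    refine lt_of_le_of_lt ?_ hxyη
    rw [Subtype.dist_eq, Subtype.dist_eq, Real.dist_eq, Real.dist_eq]
    rcases pos_and_pos_or_neg_and_neg_of_mul_pos hpos with ⟨h1, h2⟩ | ⟨h1, h2⟩
    · rw [abs_of_pos h1, abs_of_neg (by linarith)]
      linarith
    · rw [abs_of_neg h1, abs_of_pos (by linarith)]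
      linarith
  have hwδ : w ∈ Metric.ball x δ := by simpa using hη' hwη
  have hxδ : x ∈ Metric.ball x δ := Metric.mem_ball_self hδ
  have hyδ : y ∈ Metric.ball x δ := by
    rw [Metric.mem_ball, dist_comm]
    exact (hlt.trans hε.2).trans_le (min_le_right _ _)
  have hwgap := hgap w hw
  simp only at hwgap
  rcases (hg x).1 with h | h <;>
    rcases pos_and_pos_or_neg_and_neg_of_mul_pos hpos with ⟨h1, h2⟩ | ⟨h1, h2⟩
  · have e1 : (x : ℝ) < w := (h.lt_iff_lt hxδ hwδ).1 (Subtype.coe_lt_coe.1 (sub_pos.1 h1))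
    have e2 : (w : ℝ) < y := (h.lt_iff_lt hwδ hyδ).1 (Subtype.coe_lt_coe.1 (sub_pos.1 h2))
    nlinarith
  · have e1 : (w : ℝ) < x := (h.lt_iff_lt hwδ hxδ).1 (Subtype.coe_lt_coe.1 (sub_neg.1 h1))
    have e2 : (y : ℝ) < w := (h.lt_iff_lt hyδ hwδ).1 (Subtype.coe_lt_coe.1 (sub_neg.1 h2))
    nlinarith
  · have e1 : (w : ℝ) < x := (h.lt_iff_gt hxδ hwδ).1 (Subtype.coe_lt_coe.1 (sub_pos.1 h1))
    have e2 : (y : ℝ) < w := (h.lt_iff_gt hwδ hyδ).1 (Subtype.coe_lt_coe.1 (sub_pos.1 h2))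
    nlinarith
  · have e1 : (x : ℝ) < w := (h.lt_iff_gt hwδ hxδ).1 (Subtype.coe_lt_coe.1 (sub_neg.1 h1))
    have e2 : (w : ℝ) < y := (h.lt_iff_gt hyδ hwδ).1 (Subtype.coe_lt_coe.1 (sub_neg.1 h2))
    nlinarith

theorem exists_smul_of_walk {Γ : SimpleGraph (K × K)} {T : Set G} {δ C : ℝ} (hC : 0 ≤ C)
    (htame : ∀ t ∈ T, ∀ x, TameAt (t • · : K → K) δ C x)
    (hΓ : ∀ p q, Γ.Adj p q → p.1 ≠ p.2 ∧ dist p.1 p.2 < δ ∧ ∃ t ∈ T, t • p = q)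
    {p q : K × K} (w : Γ.Walk p q) :
    ∃ g : G, g • p = q ∧ ∀ z, dist z p.1 * Real.exp
      (C * (w.support.map fun v => dist v.1 v.2).sum) ≤ dist p.1 p.2 →
        dist (g • z) q.1 ≤ dist q.1 q.2 := by
  induction w with
  | @nil u =>
    refine ⟨1, one_smul _ _, fun z hz => ?_⟩
    rw [one_smul]
    refine le_trans (le_mul_of_one_le_right dist_nonneg (Real.one_le_exp ?_)) hz
    exact mul_nonneg hC (by simp [dist_nonneg])
  | @cons u v q h w ih =>
    obtain ⟨g, rfl, hg⟩ := ih
    obtain ⟨hne, hlt, t, ht, rfl⟩ := hΓ u v h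
    refine ⟨g * t, mul_smul _ _ _, fun z hz => ?_⟩
    rw [mul_smul]
    refine hg _ ?_
    rw [SimpleGraph.Walk.support_cons, List.map_cons, List.sum_cons] at hz
    set σ := (w.support.map fun v => dist v.1 v.2).sum
    have hσ : 0 ≤ σ := List.sum_nonneg (by
      intro a ha
      obtain ⟨b, -, rfl⟩ := List.mem_map.1 ha
      exact dist_nonneg)
    have hpos : 0 < dist u.1 u.2 := dist_pos.2 hne
    have hδ : 0 < δ := hpos.trans hlt
    have hzu : dist z u.1 ≤ dist u.1 u.2 :=
      le_trans (le_mul_of_one_le_right dist_nonneg (Real.one_le_exp (by positivity))) hz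
    have := (htame t ht u.1).2 u.1 (Metric.mem_ball_self hδ) z
      (Metric.mem_ball.2 (hzu.trans_lt hlt)) u.2
      (by rwa [Metric.mem_ball, dist_comm]) (dist u.1 u.2) (by rwa [dist_comm]) le_rfl
    simp only [Prod.smul_fst, Prod.smul_snd]
    rw [mul_add, Real.exp_add] at hz
    refine le_of_mul_le_mul_right ?_ hpos
    calc dist (t • z) (t • u.1) * Real.exp (C * σ) * dist u.1 u.2
        = dist (t • u.1) (t • z) * dist u.1 u.2 * Real.exp (C * σ) := by
          rw [dist_comm (t • z)]; ring
      _ ≤ Real.exp (C * dist u.1 u.2) * dist (t • u.1) (t • u.2) * dist u.1 z *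
            Real.exp (C * σ) := by gcongr
      _ = dist (t • u.1) (t • u.2) * (dist z u.1 * (Real.exp (C * dist u.1 u.2) *
            Real.exp (C * σ))) := by rw [dist_comm u.1 z]; ring
      _ ≤ dist (t • u.1) (t • u.2) * dist u.1 u.2 := by gcongr

/-- The graph of moves between the elements of `A` by the elements of `T`. -/
def moveGraph {α : Type*} [MulAction G α] (T : Set G) (A : Set α) : SimpleGraph α where
  Adj p q := p ≠ q ∧ p ∈ A ∧ q ∈ A ∧ (∃ t ∈ T, t • p = q) ∧ ∃ t ∈ T, t • q = p
  symm := ⟨fun _ _ h => ⟨h.1.symm, h.2.2.1, h.2.1, h.2.2.2.2, h.2.2.2.1⟩⟩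
  loopless := ⟨fun _ h => h.1 rfl⟩

theorem exists_infinite_component {α : Type*} [MulAction G α] {T : Set G} (hT : T.Finite)
    (hTinv : ∀ t ∈ T, t⁻¹ ∈ T) (hgen : Submonoid.closure T = ⊤) {A B : Set α} (hB : B.Finite)
    (hA : A.Infinite) (horb : ∀ q ∈ A, (orbit G q).Infinite)
    (hAB : ∀ t ∈ T, ∀ q ∈ A, t • q ∈ A ∪ B) :
    ∃ p ∈ A, {q | (moveGraph T A).Reachable p q}.Infinite ∧
      {q | (moveGraph T A).Reachable p q} ⊆ A := by
  have hsub : ∀ p ∈ A, {q | (moveGraph T A).Reachable p q} ⊆ A := by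
    rintro p hp q ⟨w⟩
    induction w with
    | nil => exact hp
    | cons h _ ih => exact ih h.2.2.1
  by_contra! hcon
  have hfin : ∀ p ∈ A, {q | (moveGraph T A).Reachable p q}.Finite := fun p hp =>
    Set.not_infinite.1 fun h => hcon p hp h (hsub p hp)
  have hbad : {q ∈ A | ∃ t ∈ T, t • q ∈ B}.Finite := by
    refine (hT.biUnion fun t _ => hB.preimage (MulAction.injective t).injOn).subset ?_
    rintro q ⟨-, t, ht, hq⟩
    exact mem_biUnion ht hq
  refine hA ((hbad.biUnion fun b hb => hfin b hb.1).subset fun p hp => ?_)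
  by_contra hp'
  refine horb p hp ((hfin p hp).subset ?_)
  have hclosed : ∀ t ∈ T, ∀ q, (moveGraph T A).Reachable p q →
      (moveGraph T A).Reachable p (t • q) := by
    intro t ht q hq
    have hqA := hsub p hp hq
    rcases hAB t ht q hqA with h | h
    · by_cases heq : q = t • q
      · rwa [← heq]
      · exact hq.trans (SimpleGraph.Adj.reachable
          ⟨heq, hqA, h, ⟨t, ht, rfl⟩, t⁻¹, hTinv t ht, inv_smul_smul t q⟩)
    · exact (hp' (mem_biUnion ⟨hqA, t, ht, h⟩ hq.symm)).elim
  rintro _ ⟨g, rfl⟩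
  have hg : g ∈ Submonoid.closure T := hgen ▸ Submonoid.mem_top g
  induction hg using Submonoid.closure_induction_left with
  | one => simp
  | mul_left t ht g _ ih =>
    simp only [mem_ofPred_eq, mul_smul]
    exact hclosed t ht _ ih

theorem exists_finite_symmetric_generators (G : Type*) [Group G] [Group.FG G] :
    ∃ T : Set G, T.Finite ∧ (∀ t ∈ T, t⁻¹ ∈ T) ∧ Submonoid.closure T = ⊤ := by
  obtain ⟨S, hS, hSfin⟩ := Group.fg_iff.1 ‹Group.FG G›
  refine ⟨S ∪ S⁻¹, hSfin.union hSfin.inv, fun t ht => ?_, ?_⟩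
  · simpa [or_comm] using ht
  · rw [← Subgroup.closure_toSubmonoid, hS]
    rfl

/-- A finite order bijection cannot map a set into a subset of small diameter. -/
theorem not_isOfFinOrder_of_contracting {g : G} {A : Set K} {c w x : K} {η : ℝ}
    (hη : Metric.ball c η ⊆ A) (hg : ∀ z ∈ A, g • z ∈ Metric.ball c η) (hw : w ∈ A) (hx : x ∈ A)
    (hwx : 2 * η ≤ dist w x) : ¬ IsOfFinOrder g := by
  intro h
  obtain ⟨n, hn, hgn⟩ := isOfFinOrder_iff_pow_eq_one.1 h
  have hmem : ∀ z ∈ A, z ∈ Metric.ball c η := by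
    intro z hz
    have hpow : ∀ k, g ^ k • z ∈ A := by
      intro k
      induction k with
      | zero => simpa using hz
      | succ k ih =>
        rw [pow_succ', mul_smul]
        exact hη (hg _ ih)
    obtain ⟨m, rfl⟩ := Nat.exists_eq_succ_of_ne_zero hn.ne'
    have := hg _ (hpow m)
    rwa [smul_smul, ← pow_succ', hgn, one_smul] at this
  have h1 := Metric.mem_ball.1 (hmem w hw)
  have h2 := Metric.mem_ball'.1 (hmem x hx)
  linarith [dist_triangle w c x]

theorem orbit_finite [Group.FG G] [CompactSpace K] [ContinuousConstSMul G K]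
    (hdisc : IsTotallyDisconnected K) (hperf : Perfect K)
    (htame : ∀ (g : G) (x : K), ∃ δ > 0, ∃ C, TameAt (g • · : K → K) δ C x)
    (hper : ∀ g : G, IsOfFinOrder g) (x : K) : (orbit G x).Finite := by
  by_contra hx
  obtain ⟨M, hMsub, hMc, hMne, hMinv, hMmin⟩ := exists_minimal_subset (G := G)
    (isOpen_setOf_orbit_finite htame hper).isClosed_compl ⟨x, hx⟩ (by
      intro g y hy
      simpa [orbit_smul] using hy)
  have hMinf : M.Infinite := by
    obtain ⟨y, hy⟩ := hMne
    refine Set.Infinite.mono ?_ (hMsub hy)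
    rintro _ ⟨g, rfl⟩
    exact hMinv g y hy
  obtain ⟨T, hTfin, hTinv, hTgen⟩ := exists_finite_symmetric_generators G
  obtain ⟨δ, hδ, C, hC, hT⟩ := exists_uniform_tameAt_of_finite hTfin
    (f := fun t : G => (t • · : K → K)) htame
  obtain ⟨ε, hεgap, hε⟩ : ∃ ε : ℝ, (∀ t ∈ T, ∀ q ∈ gaps M, dist q.1 q.2 < ε → t • q ∈ gaps M) ∧
      ε ∈ Ioo 0 δ :=
    (((Filter.eventually_all_finite hTfin).2 fun t ht =>
      eventually_smul_mem_gaps hMinv hδ (hT t ht)).and (Ioo_mem_nhdsGT hδ)).exists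
  set A : Set (K × K) := {q ∈ gaps M | dist q.1 q.2 < ε}
  have hBfin := finite_setOf_mem_gaps_le_dist M hε.1
  have hAinf : A.Infinite := by
    intro hfin
    refine infinite_gaps hdisc hMc.isCompact hMinf ((hfin.union hBfin).subset fun q hq => ?_)
    exact (lt_or_ge (dist q.1 q.2) ε).imp (fun h => ⟨hq, h⟩) (fun h => ⟨hq, h⟩)
  obtain ⟨p, hp, hQinf, hQsub⟩ := exists_infinite_component hTfin hTinv hTgen hBfin hAinf
    (by
      intro q hq hfin
      refine hMsub hq.1.1 ((hfin.image Prod.fst).subset ?_)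
      rintro _ ⟨g, rfl⟩
      exact ⟨g • q, mem_orbit q g, rfl⟩)
    (by
      intro t ht q hq
      have := hεgap t ht q hq.1 hq.2
      exact (lt_or_ge (dist (t • q).1 (t • q).2) ε).imp (fun h => ⟨this, h⟩) (fun h => ⟨this, h⟩))
  set Q := {q | (moveGraph T A).Reachable p q}
  obtain ⟨R, hR, hKR⟩ := exists_subset_Icc_of_compactSpace K
  set L := 2 * (R - -R)
  have hp0 : 0 < dist p.1 p.2 := dist_pos.2 hp.1.2.2.1
  set r := dist p.1 p.2 * Real.exp (-(C * L)) with hr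
  have hr0 : 0 < r := by positivity
  have hcontr : ∀ q ∈ Q, ∃ g : G, ∀ z ∈ Metric.closedBall p.1 r,
      dist (g • z) q.1 ≤ dist q.1 q.2 := by
    intro q hq
    classical
    obtain ⟨w, hw⟩ := SimpleGraph.Reachable.exists_isPath hq
    obtain ⟨g, -, hg⟩ := exists_smul_of_walk hC hT (by
      rintro a b ⟨-, ha, -, hab, -⟩
      exact ⟨ha.1.2.2.1, ha.2.trans hε.2, hab⟩) w
    refine ⟨g, fun z hz => hg z ?_⟩
    have hsum : (w.support.map fun v => dist v.1 v.2).sum ≤ L := by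
      rw [← List.sum_toFinset _ hw.support_nodup]
      refine sum_gaps_le (M := M) hR hKR fun v hv => ?_
      exact (hQsub (w.takeUntil v (List.mem_toFinset.1 hv)).reachable).1
    calc dist z p.1 * Real.exp (C * (w.support.map fun v => dist v.1 v.2).sum)
        ≤ r * Real.exp (C * L) := by
          gcongr
          exact hz
      _ = dist p.1 p.2 := by
          rw [hr, mul_assoc, ← Real.exp_add]
          simp
  obtain ⟨w, hw, hwp⟩ : ∃ w ∈ Metric.closedBall p.1 r, w ≠ p.1 := by
    have := accPt_iff_nhds.1 (hperf.acc _ p.1.2) _ (Metric.closedBall_mem_nhds (p.1 : ℝ) hr0)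
    obtain ⟨y, ⟨hyr, hyK⟩, hy⟩ := this
    exact ⟨⟨y, hyK⟩, hyr, fun h => hy (congrArg Subtype.val h)⟩
  have hne : NeBot (cofinite ⊓ 𝓟 Q) := cofinite_inf_principal_neBot_iff.2 hQinf
  obtain ⟨c, hcM, hc⟩ := hMc.isCompact (f := map Prod.fst (cofinite ⊓ 𝓟 Q)) (by
    rw [Filter.le_principal_iff, Filter.mem_map]
    exact Filter.mem_inf_of_right fun q hq => (hQsub hq).1.1)
  set η := min (r / 2) (dist w p.1 / 2)
  have hη0 : 0 < η := lt_min (half_pos hr0) (half_pos (dist_pos.2 hwp))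
  obtain ⟨_, ⟨h, rfl⟩, hhc⟩ := Metric.mem_closure_iff.1 (hMmin c hcM hp.1.1) (r / 2) (half_pos hr0)
  obtain ⟨ρ, hρ, hρ'⟩ := Metric.continuous_iff.1 (continuous_const_smul (T := K) h) c η hη0
  have hsmall : ∀ᶠ q in cofinite ⊓ 𝓟 Q, q ∈ Q ∧ dist q.1 q.2 < ρ / 2 := by
    have h1 : ∀ᶠ q in cofinite ⊓ 𝓟 Q, q ∈ Q := Filter.mem_inf_of_right (mem_principal_self Q)
    have h2 : ∀ᶠ q in cofinite ⊓ 𝓟 Q, q ∉ {q ∈ gaps M | ρ / 2 ≤ dist q.1 q.2} :=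
      Filter.mem_inf_of_left
        (finite_setOf_mem_gaps_le_dist M (half_pos hρ)).compl_mem_cofinite
    filter_upwards [h1, h2] with q hq hq'
    exact ⟨hq, lt_of_not_ge fun h => hq' ⟨(hQsub hq).1, h⟩⟩
  obtain ⟨q, hqc, hqQ, hqρ⟩ := ((mapClusterPt_iff_frequently.1 hc _
    (Metric.ball_mem_nhds c (half_pos hρ))).and_eventually hsmall).exists
  obtain ⟨g, hg⟩ := hcontr q hqQ
  refine not_isOfFinOrder_of_contracting (g := h * g) (c := h • c) (η := η) ?_ ?_ hw
    (Metric.mem_closedBall_self hr0.le) ?_ (hper _)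
  · refine Metric.ball_subset_closedBall.trans (Metric.closedBall_subset_closedBall' ?_)
    have := min_le_left (r / 2) (dist w p.1 / 2)
    rw [dist_comm] at hhc
    change η + dist (h • c) p.1 ≤ r
    change dist (h • c) p.1 < r / 2 at hhc
    linarith
  · intro z hz
    rw [mul_smul]
    refine hρ' _ ?_
    have h1 := hg z hz
    have h2 := Metric.mem_ball.1 hqc
    linarith [dist_triangle (g • z) q.1 c]
  · have := min_le_right (r / 2) (dist w p.1 / 2)
    linarith

end Dynamics

theorem exists_mem_uIcc_dist_eq {s : Set ℝ} (hs : s.OrdConnected) {F F' : ℝ → ℝ}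
    (hF : ∀ y ∈ s, HasDerivAt F (F' y) y) {u v : ℝ} (hu : u ∈ s) (hv : v ∈ s) :
    ∃ c ∈ uIcc u v, dist (F u) (F v) = |F' c| * dist u v := by
  wlog huv : u ≤ v generalizing u v
  · obtain ⟨c, hc, h⟩ := this hv hu (le_of_not_ge huv)
    exact ⟨c, uIcc_comm u v ▸ hc, by rw [dist_comm, h, dist_comm]⟩
  rcases huv.eq_or_lt with rfl | huv
  · exact ⟨u, left_mem_uIcc, by simp⟩
  have hsub : Icc u v ⊆ s := hs.out hu hv
  obtain ⟨c, hc, h⟩ := exists_hasDerivAt_eq_slope F F' huv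
    (fun y hy => (hF y (hsub hy)).continuousAt.continuousWithinAt)
    (fun y hy => hF y (hsub (Ioo_subset_Icc_self hy)))
  refine ⟨c, Icc_subset_uIcc (Ioo_subset_Icc_self hc), ?_⟩
  rw [h, Real.dist_eq, Real.dist_eq, abs_sub_comm, abs_sub_comm u, ← abs_mul,
    div_mul_cancel₀ _ (sub_pos.2 huv).ne']

theorem exists_tameAt_of_isD1Lip {K : Set ℝ} {f : Equiv.Perm K} (hf : IsD1Lip K f) (x : K) :
    ∃ δ > 0, ∃ C, TameAt f δ C x := by
  obtain ⟨a, b, hx, F, F', hF, -, hinj, ⟨C, hlip⟩, heq⟩ := hf x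
  obtain ⟨δ, hδ, hsub⟩ := Metric.isOpen_iff.1 isOpen_Ioo _ hx
  have hmem : ∀ y ∈ Metric.ball x δ, (y : ℝ) ∈ Ioo a b := fun y hy => hsub hy
  have hval : ∀ y ∈ Metric.ball x δ, F y = f y := fun y hy => by
    rw [heq y (hmem y hy) y.2, apK, dif_pos y.2]
  refine ⟨δ, hδ, 2 * C, ?_, ?_⟩
  · have hcont : ContinuousOn F (Ioo a b) := fun y hy =>
      (hF y hy).1.continuousAt.continuousWithinAt
    refine (hcont.strictMonoOn_of_injOn_Ioo (hx.1.trans hx.2) hinj).imp ?_ ?_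
    · intro h y hy z hz hyz
      rw [← Subtype.coe_lt_coe, ← hval y hy, ← hval z hz]
      exact h (hmem y hy) (hmem z hz) hyz
    · intro h y hy z hz hyz
      rw [← Subtype.coe_lt_coe, ← hval y hy, ← hval z hz]
      exact h (hmem y hy) (hmem z hz) hyz
  · intro u hu v hv w hw D huv huw
    obtain ⟨c, hc, hcF⟩ := exists_mem_uIcc_dist_eq ordConnected_Ioo (fun y hy => (hF y hy).1)
      (hmem u hu) (hmem v hv)
    obtain ⟨d, hd, hdF⟩ := exists_mem_uIcc_dist_eq ordConnected_Ioo (fun y hy => (hF y hy).1)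
      (hmem u hu) (hmem w hw)
    have hc' : c ∈ Ioo a b := ordConnected_Ioo.uIcc_subset (hmem u hu) (hmem v hv) hc
    have hd' : d ∈ Ioo a b := ordConnected_Ioo.uIcc_subset (hmem u hu) (hmem w hw) hd
    have hcd : dist c d ≤ 2 * D := by
      have h1 := Real.dist_left_le_of_mem_uIcc hc
      have h2 := Real.dist_left_le_of_mem_uIcc hd
      have h3 := dist_triangle_left c d (u : ℝ)
      rw [Subtype.dist_eq] at huv huw
      linarith
    have hratio : |F' c| ≤ Real.exp (2 * C * D) * |F' d| := by
      have h1 := (le_abs_self _).trans (hlip.dist_le_mul c hc' d hd')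
      have h2 : (C : ℝ) * dist c d ≤ C * (2 * D) := by gcongr
      rw [← Real.exp_log (abs_pos.2 (hF c hc').2), ← Real.exp_log (abs_pos.2 (hF d hd').2),
        ← Real.exp_add]
      refine Real.exp_le_exp.2 ?_
      linarith
    rw [Subtype.dist_eq (f u), Subtype.dist_eq (f u), ← hval u hu, ← hval v hv, ← hval w hw, hcF,
      hdF, Subtype.dist_eq u, Subtype.dist_eq u]
    calc |F' c| * dist (u : ℝ) v * dist (u : ℝ) w
        ≤ Real.exp (2 * C * D) * |F' d| * dist (u : ℝ) v * dist (u : ℝ) w := by gcongr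
      _ = Real.exp (2 * C * D) * (|F' d| * dist (u : ℝ) w) * dist (u : ℝ) v := by ring

/-- Every finitely generated periodic subgroup of
`diff^{1+Lip}(K)` of a Cantor set `K ⊆ ℝ` is finite. -/
theorem burnside_property (K : Set ℝ) (hK : IsCantorInR K)
    (G : Subgroup (Equiv.Perm K))
    (hdiff : ∀ g ∈ G, MemDiffLip K g)
    (hFG : G.FG)
    (hper : ∀ g ∈ G, IsOfFinOrder g) :
    (G : Set (Equiv.Perm K)).Finite := by
  have : CompactSpace K := isCompact_iff_compactSpace.1 hK.2.1
  have : ContinuousConstSMul G K := ⟨fun g => (hdiff g g.2).1⟩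
  have : Group.FG G := (Group.fg_iff_subgroup_fg G).2 hFG
  have htame : ∀ (g : G) (x : K), ∃ δ > 0, ∃ C, TameAt (g • · : K → K) δ C x := fun g x =>
    exists_tameAt_of_isD1Lip (hdiff g g.2).2.2 x
  have hper' : ∀ g : G, IsOfFinOrder g := fun g => Submonoid.isOfFinOrder_coe.1 (hper g g.2)
  exact Set.finite_coe_iff.1 (finite_of_forall_orbit_finite htame hper'
    (orbit_finite hK.2.2.1 hK.2.2.2 htame hper'))
end

section
/- Let K be a Cantor set in ℝ, let n ≥ 3 and let Γ be a finite-index subgroup of SL_n(ℤ). Then every group homomorphism from Γ to diff^{1+Lip}(K) has finite image. -/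
open Set

section SpecialLinear

open Matrix.SpecialLinearGroup
open scoped commutatorElement

variable {ι : Type*} [Fintype ι] [DecidableEq ι]

theorem transvection_smul_apply {i j : ι} (h : i ≠ j) (c : ℤ) (v : ι → ℤ) (l : ι) :
    (transvection h c • v) l = v l + if l = i then c * v j else 0 := by
  rw [Matrix.SpecialLinearGroup.smul_def, Matrix.smul_eq_mulVec, transvection_coe,
    Matrix.add_mulVec, Matrix.one_mulVec, Matrix.single_mulVec]
  simp [Function.update_apply]

/-- The group generated by the transvections with indices in `s`. -/
def elementaryGroup (s : Finset ι) : Subgroup (Matrix.SpecialLinearGroup ι ℤ) :=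
  Subgroup.closure {g | ∃ i ∈ s, ∃ j ∈ s, ∃ h : i ≠ j, ∃ c : ℤ, g = transvection h c}

theorem transvection_mem_elementaryGroup {s : Finset ι} {i j : ι} (hi : i ∈ s) (hj : j ∈ s)
    (h : i ≠ j) (c : ℤ) : transvection h c ∈ elementaryGroup s :=
  Subgroup.subset_closure ⟨i, hi, j, hj, h, c, rfl⟩

theorem smul_eq_self_of_mem_elementaryGroup {s : Finset ι} {g : Matrix.SpecialLinearGroup ι ℤ}
    (hg : g ∈ elementaryGroup s) {w : ι → ℤ} (hw : ∀ j ∈ s, w j = 0) : g • w = w := by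
  have : elementaryGroup s ≤ MulAction.stabilizer (Matrix.SpecialLinearGroup ι ℤ) w := by
    refine (Subgroup.closure_le _).2 ?_
    rintro _ ⟨i, _, j, hj, h, c, rfl⟩
    ext l
    simp [transvection_smul_apply, hw j hj]
  exact this hg

theorem smul_apply_of_mem_elementaryGroup {s : Finset ι} {g : Matrix.SpecialLinearGroup ι ℤ}
    (hg : g ∈ elementaryGroup s) {l : ι} (hl : l ∉ s) (v : ι → ℤ) : (g • v) l = v l := by
  induction hg using Subgroup.closure_induction generalizing v with
  | mem x hx =>
    obtain ⟨i, hi, j, _, h, c, rfl⟩ := hx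
    have : l ≠ i := fun e => hl (e ▸ hi)
    simp [transvection_smul_apply, this]
  | one => simp
  | mul x y _ _ hx hy => rw [mul_smul, hx, hy]
  | inv x _ hx => rw [← hx (x⁻¹ • v), smul_inv_smul]

/-- Euclid's algorithm on the coordinates in `s`. -/
theorem exists_elementary_reduction {s : Finset ι} {k m : ι} (hk : k ∈ s) (hm : m ∈ s)
    (hkm : k ≠ m) (v : ι → ℤ) :
    ∃ g ∈ elementaryGroup s, (∀ i ∈ s, i ≠ k → (g • v) i = 0) ∧ 0 ≤ (g • v) k := by
  induction hN : ∑ i ∈ s, (v i).natAbs using Nat.strong_induction_on generalizing v with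
  | _ N ih =>
  have step : ∀ w : ι → ℤ, (∃ g ∈ elementaryGroup s, w = g • v) →
      (∃ g ∈ elementaryGroup s, (∀ i ∈ s, i ≠ k → (g • w) i = 0) ∧ 0 ≤ (g • w) k) →
      ∃ g ∈ elementaryGroup s, (∀ i ∈ s, i ≠ k → (g • v) i = 0) ∧ 0 ≤ (g • v) k := by
    rintro _ ⟨g, hg, rfl⟩ ⟨g', hg', h⟩
    exact ⟨g' * g, mul_mem hg' hg, by simpa only [mul_smul] using h⟩
  by_cases hex : ∃ i ∈ s, ∃ j ∈ s, i ≠ j ∧ v j ≠ 0 ∧ (v j).natAbs ≤ (v i).natAbs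
  · obtain ⟨i, hi, j, hj, hij, hj0, hle⟩ := hex
    refine step _ ⟨_, transvection_mem_elementaryGroup hi hj hij (-(v i / v j)), rfl⟩
      (ih _ ?_ _ rfl)
    rw [← hN]
    refine Finset.sum_lt_sum (fun l _ => ?_) ⟨i, hi, ?_⟩
    all_goals
      have hmod : ((v i) % (v j)).natAbs < (v j).natAbs := by
        have h1 := Int.emod_nonneg (v i) hj0
        have h2 := Int.emod_lt_abs (v i) hj0
        zify
        rwa [abs_of_nonneg h1]
      have heq : v i + -(v i / v j) * v j = v i % v j := by
        rw [Int.emod_def]; ring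
      rw [transvection_smul_apply]
    · split_ifs with hl
      · subst hl
        rw [heq]
        omega
      · simp
    · rw [if_pos rfl, heq]
      omega
  · push Not at hex
    have hz : ∀ i ∈ s, v i ≠ 0 → ∀ j ∈ s, j ≠ i → v j = 0 := by
      intro i hi h0 j hj hji
      by_contra hj0
      have h1 := hex i hi j hj hji.symm hj0
      have h2 := hex j hj i hi hji h0
      omega
    have single : ∃ w : ι → ℤ, (∃ g ∈ elementaryGroup s, w = g • v) ∧
        ∀ j ∈ s, j ≠ k → w j = 0 := by
      by_cases h : ∃ i ∈ s, i ≠ k ∧ v i ≠ 0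
      · obtain ⟨i, hi, hik, h0⟩ := h
        refine ⟨_, ⟨transvection hik (-1) * transvection hik.symm 1,
          mul_mem (transvection_mem_elementaryGroup hi hk _ _)
            (transvection_mem_elementaryGroup hk hi _ _), rfl⟩, fun j hj hjk => ?_⟩
        have hk0 := hz i hi h0 k hk hik.symm
        rw [mul_smul]
        simp only [transvection_smul_apply]
        by_cases hji : j = i
        · subst hji; simp [hjk, hk0]
        · simp [hjk, hji, hz i hi h0 j hj hji]
      · push Not at h
        exact ⟨v, ⟨1, one_mem _, by simp⟩, h⟩
    obtain ⟨w, hw, hw0⟩ := single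
    refine step w hw ?_
    rcases le_total 0 (w k) with h | h
    · exact ⟨1, one_mem _, by simpa using hw0, by simpa using h⟩
    · refine ⟨transvection hkm.symm (-1) * (transvection hkm 2 * transvection hkm.symm (-1)),
        mul_mem (transvection_mem_elementaryGroup hm hk _ _)
          (mul_mem (transvection_mem_elementaryGroup hk hm _ _)
            (transvection_mem_elementaryGroup hm hk _ _)), fun j hj hjk => ?_, ?_⟩
      · have := hw0 m hm hkm.symm
        simp only [mul_smul, transvection_smul_apply]
        by_cases hjm : j = m
        · subst hjm; simp [hjk, hkm, this]; ring
        · simp [hjk, hjm, hw0 j hj hjk]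
      · have := hw0 m hm hkm.symm
        simp only [mul_smul, transvection_smul_apply]
        simp [hkm, this]; linarith

theorem smul_single_one_apply (A : Matrix.SpecialLinearGroup ι ℤ) (i j : ι) :
    (A • (Pi.single j 1 : ι → ℤ)) i = A i j := by
  rw [Matrix.SpecialLinearGroup.smul_def, Matrix.smul_eq_mulVec, Matrix.mulVec_single_one]
  rfl

theorem eq_one_of_smul_single {A : Matrix.SpecialLinearGroup ι ℤ}
    (h : ∀ j, A • (Pi.single j 1 : ι → ℤ) = Pi.single j 1) : A = 1 := by
  ext i j
  rw [← smul_single_one_apply, h, ← smul_single_one_apply, one_smul]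

theorem smul_eq_self_of_smul_single {A : Matrix.SpecialLinearGroup ι ℤ} {s : Finset ι}
    (h : ∀ j ∉ s, A • (Pi.single j 1 : ι → ℤ) = Pi.single j 1) {r : ι → ℤ}
    (hr : ∀ j ∈ s, r j = 0) : A • r = r := by
  have hsum : r = ∑ j, r j • (Pi.single j 1 : ι → ℤ) := by
    ext l; simp [Finset.sum_apply, Pi.single_apply]
  rw [hsum, Finset.smul_sum]
  refine Finset.sum_congr rfl fun j _ => ?_
  by_cases hj : j ∈ s
  · simp [hr j hj]
  · rw [smul_comm, h j hj]

theorem transvection_smul_single_of_ne {i j l : ι} (h : i ≠ j) (hl : l ≠ j) (c : ℤ) :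
    transvection h c • (Pi.single l 1 : ι → ℤ) = Pi.single l 1 := by
  ext x
  simp [transvection_smul_apply, Pi.single_apply, hl.symm]

theorem exists_clear_column (k : ι) (t : Finset ι) (r : ι → ℤ) (hk : r k = 0)
    (hr : ∀ l ∉ t, r l = 0) :
    ∃ g ∈ elementaryGroup (Finset.univ : Finset ι),
      g • ((Pi.single k 1 : ι → ℤ) + r) = Pi.single k 1 ∧
      ∀ j ≠ k, g • (Pi.single j 1 : ι → ℤ) = Pi.single j 1 := by
  induction t using Finset.induction_on generalizing r with
  | empty =>
    have : r = 0 := funext fun l => hr l (by simp)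
    exact ⟨1, one_mem _, by simp [this], by simp⟩
  | insert l t _ ih =>
    by_cases hlk : l = k
    · subst hlk
      refine ih r hk fun x hx => ?_
      by_cases hxl : x = l
      · rw [hxl, hk]
      · exact hr x (by simp [hx, hxl])
    · obtain ⟨g, hg, h1, h2⟩ := ih (Function.update r l 0)
        (by rw [Function.update_of_ne (Ne.symm hlk), hk]) (fun x hx => by
          by_cases hxl : x = l
          · simp [hxl]
          · rw [Function.update_of_ne hxl]; exact hr x (by simp [hx, hxl]))
      refine ⟨g * transvection hlk (-r l), mul_mem hg
        (transvection_mem_elementaryGroup (by simp) (by simp) _ _), ?_, fun j hj => ?_⟩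
      · refine Eq.trans ?_ h1
        rw [mul_smul]
        congr 1
        ext x
        rw [transvection_smul_apply]
        by_cases hxl : x = l
        · subst hxl; simp [hk, hlk]
        · simp [hxl]
      · rw [mul_smul, transvection_smul_single_of_ne _ hj, h2 j hj]

/-- `SL_n(ℤ)` is generated by transvections. -/
theorem elementaryGroup_univ_eq_top :
    elementaryGroup (Finset.univ : Finset ι) = ⊤ := by
  have key : ∀ s : Finset ι, ∀ A : Matrix.SpecialLinearGroup ι ℤ,
      (∀ j ∉ s, A • (Pi.single j 1 : ι → ℤ) = Pi.single j 1) →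
      A ∈ elementaryGroup (Finset.univ : Finset ι) := by
    intro s
    induction s using Finset.induction_on with
    | empty =>
      intro A h
      rw [eq_one_of_smul_single fun j => h j (by simp)]
      exact one_mem _
    | insert k s hks ih =>
      intro A h
      have reduce : ∃ g ∈ elementaryGroup (Finset.univ : Finset ι),
          (∀ j ∉ insert k s, g • (Pi.single j 1 : ι → ℤ) = Pi.single j 1) ∧
          (∀ i ∈ s, (g • A • (Pi.single k 1 : ι → ℤ)) i = 0) ∧
          (g • A • (Pi.single k 1 : ι → ℤ)) k = 1 := by
        rcases s.eq_empty_or_nonempty with rfl | ⟨m, hm⟩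
        · refine ⟨1, one_mem _, by simp, by simp, ?_⟩
          rw [one_smul, smul_single_one_apply]
          have hA : (A : Matrix ι ι ℤ) = (1 : Matrix ι ι ℤ).updateCol k (fun i => A i k) := by
            ext i j
            by_cases hj : j = k
            · subst hj; simp
            · rw [Matrix.updateCol_ne hj, ← smul_single_one_apply, h j (by simpa using hj),
                Matrix.one_apply, Pi.single_apply]
          have hd : ((1 : Matrix ι ι ℤ).updateCol k (fun i => A i k)).det = 1 := by
            rw [← hA]; exact A.2
          rw [← Matrix.cramer_apply] at hd
          simpa using hd
        · obtain ⟨g, hg, h1, h2⟩ := exists_elementary_reduction (Finset.mem_insert_self k s)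
            (Finset.mem_insert_of_mem hm) (fun e => hks (e ▸ hm))
            (A • (Pi.single k 1 : ι → ℤ))
          have hfix : ∀ j ∉ insert k s, g • (Pi.single j 1 : ι → ℤ) = Pi.single j 1 :=
            fun j hj => smul_eq_self_of_mem_elementaryGroup hg fun i hi => by
              rw [Pi.single_apply, if_neg]; rintro rfl; exact hj hi
          refine ⟨g, Subgroup.closure_mono ?_ hg, hfix, fun i hi => h1 i
            (Finset.mem_insert_of_mem hi) (fun e => hks (e ▸ hi)), ?_⟩
          · rintro _ ⟨i, _, j, _, hij, c, rfl⟩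
            exact ⟨i, by simp, j, by simp, hij, c, rfl⟩
          · set w := g • A • (Pi.single k 1 : ι → ℤ) with hw
            have hgA : ∀ j ∉ insert k s,
                (g * A)⁻¹ • (Pi.single j 1 : ι → ℤ) = Pi.single j 1 := fun j hj => by
              rw [inv_smul_eq_iff, mul_smul, h j hj, hfix j hj]
            have hr : (g * A)⁻¹ • (w - w k • (Pi.single k 1 : ι → ℤ)) =
                w - w k • (Pi.single k 1 : ι → ℤ) := by
              refine smul_eq_self_of_smul_single hgA fun j hj => ?_
              by_cases hjk : j = k
              · subst hjk; simp
              · simp [hjk, h1 j hj hjk]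
            have hw' : (g * A)⁻¹ • w = (Pi.single k 1 : ι → ℤ) := by
              rw [inv_smul_eq_iff, mul_smul]
            rw [smul_sub, hw', smul_comm] at hr
            have := congrFun hr k
            simp only [Pi.sub_apply, Pi.smul_apply, Pi.single_eq_same, smul_eq_mul] at this
            have hdvd : w k ∣ 1 := ⟨((g * A)⁻¹ • (Pi.single k 1 : ι → ℤ)) k, by linarith⟩
            exact Int.eq_one_of_dvd_one h2 hdvd
      obtain ⟨g, hg, h1, h2, h3⟩ := reduce
      set w := g • A • (Pi.single k 1 : ι → ℤ) with hw
      obtain ⟨g', hg', h4, h5⟩ := exists_clear_column k Finset.univ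
        (w - (Pi.single k 1 : ι → ℤ)) (by simp [h3]) (by simp)
      rw [add_sub_cancel] at h4
      have hr : ∀ i ∈ s, (w - (Pi.single k 1 : ι → ℤ)) i = 0 := fun i hi => by
        have : i ≠ k := fun e => hks (e ▸ hi)
        simp [h2 i hi, this]
      have := ih (g' * (g * A)) fun j hj => by
        rw [mul_smul, mul_smul]
        by_cases hjk : j = k
        · subst hjk; exact h4
        · have hj' : j ∉ insert k s := by simp [hj, hjk]
          rw [h j hj', h1 j hj', h5 j hjk]
      exact (Subgroup.mul_mem_cancel_left _ hg).1 ((Subgroup.mul_mem_cancel_left _ hg').1 this)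
  exact eq_top_iff.2 fun A _ => key Finset.univ A (by simp)

theorem isUnit_of_dvd_smul_single {A : Matrix.SpecialLinearGroup ι ℤ} {z : ι} {m : ℤ}
    (h : ∀ i, m ∣ (A • (Pi.single z 1 : ι → ℤ)) i) : m ∣ 1 := by
  choose c hc using h
  have hv : A • (Pi.single z 1 : ι → ℤ) = m • c := funext fun i => by simpa using hc i
  have h1 : (Pi.single z 1 : ι → ℤ) = m • (A⁻¹ • c) := by
    rw [← smul_comm, ← hv, inv_smul_smul]
  have := congrFun h1 z
  simp only [Pi.single_eq_same, Pi.smul_apply, smul_eq_mul] at this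
  exact ⟨_, this⟩

theorem exists_mem_smul_single_eq {N : Subgroup (Matrix.SpecialLinearGroup ι ℤ)} [N.Normal] {q : ℤ}
    (hN : ∀ i j (h : i ≠ j), transvection h q ∈ N) (hι : 3 ≤ Fintype.card ι)
    (A : Matrix.SpecialLinearGroup ι ℤ) (z : ι) (hA : ∀ i, q ∣ A i z - (1 : Matrix ι ι ℤ) i z) :
    ∃ ν ∈ N, ν • (Pi.single z 1 : ι → ℤ) = A • (Pi.single z 1 : ι → ℤ) := by
  set e : ι → ℤ := Pi.single z 1 with he
  set s : Finset ι := Finset.univ.erase z with hs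
  have hscard : 1 < s.card := by
    rw [hs, Finset.card_erase_of_mem (Finset.mem_univ _), Finset.card_univ]; omega
  obtain ⟨k, hk, m, hm, hkm⟩ := Finset.one_lt_card.1 hscard
  have hkz : k ≠ z := (Finset.mem_erase.1 hk).1
  have hmz : m ≠ z := (Finset.mem_erase.1 hm).1
  have hns : ∀ j, j ∉ s → j = z := fun j hj => by simpa [hs] using hj
  have hge : ∀ g ∈ elementaryGroup s, g • e = e := fun g hg =>
    smul_eq_self_of_mem_elementaryGroup hg fun j hj => by
      simp [he, (Finset.mem_erase.1 hj).1]
  have back : ∀ g ∈ elementaryGroup s, ∀ v : ι → ℤ, (∃ ν ∈ N, ν • e = g • v) →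
      ∃ ν ∈ N, ν • e = v := by
    rintro g hg v ⟨ν, hν, h⟩
    refine ⟨g⁻¹ * ν * g⁻¹⁻¹, Subgroup.Normal.conj_mem inferInstance _ hν _, ?_⟩
    rw [inv_inv, mul_smul, mul_smul, hge g hg, h, inv_smul_smul]
  have back' : ∀ g ∈ N, ∀ v : ι → ℤ, (∃ ν ∈ N, ν • e = g • v) → ∃ ν ∈ N, ν • e = v := by
    rintro g hg v ⟨ν, hν, h⟩
    exact ⟨g⁻¹ * ν, mul_mem (inv_mem hg) hν, by rw [mul_smul, h, inv_smul_smul]⟩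
  choose b hb using hA
  set a : ℤ := A z z with ha
  set b' : ι → ℤ := Function.update b z 0 with hb'
  have hv : A • e = a • e + q • b' := by
    ext i
    rw [smul_single_one_apply]
    by_cases hi : i = z
    · subst hi; simp [he, hb']; rfl
    · have := hb i
      rw [Matrix.one_apply_ne hi, sub_zero] at this
      simp [he, hb', hi, this]
  obtain ⟨g₁, hg₁, h11, h12⟩ := exists_elementary_reduction hk hm hkm b'
  have hg₁b : g₁ • b' = (g₁ • b') k • (Pi.single k 1 : ι → ℤ) := by
    ext i
    by_cases hi : i = k
    · subst hi; simp
    · by_cases hiz : i = z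
      · subst hiz
        rw [smul_apply_of_mem_elementaryGroup hg₁ (by simp [hs])]
        simp [hb', hkz.symm]
      · simp [h11 i (by simp [hs, hiz]) hi, hi]
  set d := (g₁ • b') k
  set c : ι → ℤ := d • (Pi.single k 1 : ι → ℤ) + a • Pi.single m 1 with hc
  have h2 : transvection hmz q • g₁ • A • e = a • e + q • c := by
    rw [hv, smul_add, smul_comm, hge g₁ hg₁, smul_comm g₁ q, hg₁b]
    ext i
    rw [transvection_smul_apply]
    by_cases hi : i = m
    · subst hi; simp [he, hc, hmz, hkz.symm, hkm.symm]
    · simp [he, hc, hi]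
  obtain ⟨g₂, hg₂, h21, h22⟩ := exists_elementary_reduction hk hm hkm c
  have hg₂c : g₂ • c = (g₂ • c) k • (Pi.single k 1 : ι → ℤ) := by
    ext i
    by_cases hi : i = k
    · subst hi; simp
    · by_cases hiz : i = z
      · subst hiz
        rw [smul_apply_of_mem_elementaryGroup hg₂ (by simp [hs])]
        simp [hc, hkz.symm, hmz.symm]
      · simp [h21 i (by simp [hs, hiz]) hi, hi]
  set p := (g₂ • c) k
  have h3 : g₂ • transvection hmz q • g₁ • A • e = a • e + (q * p) • (Pi.single k 1 : ι → ℤ) := by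
    rw [h2, smul_add, smul_comm, hge g₂ hg₂, smul_comm g₂ q, hg₂c, smul_smul]
  have hpa : p ∣ a := by
    have : c = p • (g₂⁻¹ • (Pi.single k 1 : ι → ℤ)) := by
      rw [← smul_comm, ← hg₂c, inv_smul_smul]
    have := congrFun this m
    simp [hc, hkm.symm] at this
    exact ⟨_, this⟩
  have hp1 : p = 1 := by
    refine Int.eq_one_of_dvd_one h22 (isUnit_of_dvd_smul_single
      (A := g₂ * (transvection hmz q * (g₁ * A))) (z := z) fun i => ?_)
    rw [mul_smul, mul_smul, mul_smul, h3]
    refine dvd_add ?_ ?_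
    · simpa using hpa.mul_right _
    · simpa [mul_assoc] using (dvd_mul_right p _).mul_left q
  refine back g₁ hg₁ _ (back' _ (hN _ _ hmz) _ (back g₂ hg₂ _ ?_))
  rw [h3, hp1, mul_one]
  obtain ⟨r, hr⟩ : ∃ r, a = 1 + r * q := ⟨b z, by
    have := hb z
    rw [Matrix.one_apply_eq] at this
    rw [mul_comm, ← this]; change a = _; rw [ha]; ring⟩
  refine ⟨transvection hkz.symm r * transvection hkz q * (transvection hkz.symm r)⁻¹,
    Subgroup.Normal.conj_mem inferInstance _ (hN _ _ hkz) _, ?_⟩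
  have hfix : (transvection hkz.symm r)⁻¹ • e = e := by
    rw [inv_smul_eq_iff, transvection_smul_single_of_ne _ hkz.symm]
  rw [mul_smul, mul_smul, hfix]
  ext i
  simp only [transvection_smul_apply]
  by_cases hiz : i = z
  · subst hiz; simp [he, hkz, hkz.symm, hr]
  · simp [he, hiz, Pi.single_apply]

theorem mem_of_eq_one_add_vecMulVec {N : Subgroup (Matrix.SpecialLinearGroup ι ℤ)} {q : ℤ}
    (hN : ∀ i j (h : i ≠ j), transvection h q ∈ N) (z : ι) (s : Finset ι) :
    ∀ u : ι → ℤ, u z = 0 → (∀ l ∉ s, u l = 0) → ∀ X : Matrix.SpecialLinearGroup ι ℤ,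
      (X : Matrix ι ι ℤ) = 1 + Matrix.vecMulVec (Pi.single z 1) (q • u) → X ∈ N := by
  induction s using Finset.induction_on with
  | empty =>
    intro u _ h X hX
    have : u = 0 := funext fun l => h l (by simp)
    have hX1 : X = 1 := Subtype.ext (by simpa [this] using hX)
    rw [hX1]; exact one_mem _
  | insert l s _ ih =>
    intro u hz h X hX
    by_cases hl : l = z
    · subst hl
      exact ih u hz (fun x hx => by
        by_cases hxl : x = l
        · rw [hxl, hz]
        · exact h x (by simp [hx, hxl])) X hX
    · have hmem : transvection (Ne.symm hl) (-(u l * q)) ∈ N := by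
        have : ∀ n : ℤ, transvection (Ne.symm hl) (n * q) = transvection (Ne.symm hl) q ^ n := by
          intro n
          induction n using Int.induction_on with
          | zero => simp
          | succ n ihn => rw [zpow_add_one, ← ihn, ← transvection_add]; ring_nf
          | pred n ihn =>
            rw [zpow_sub_one, ← ihn, transvection_inv, ← transvection_add]; ring_nf
        rw [← neg_mul, this]
        exact zpow_mem (hN _ _ _) _
      refine (Subgroup.mul_mem_cancel_left _ hmem).1 (ih (Function.update u l 0)
        (by rw [Function.update_of_ne (Ne.symm hl), hz]) (fun x hx => ?_) _ ?_)
      · by_cases hxl : x = l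
        · simp [hxl]
        · rw [Function.update_of_ne hxl]; exact h x (by simp [hx, hxl])
      · rw [Matrix.SpecialLinearGroup.coe_mul, hX, transvection_coe]
        have h0 : Matrix.single z l (-(u l * q)) *
            Matrix.vecMulVec (Pi.single z 1) (q • u) = (0 : Matrix ι ι ℤ) := by
          rw [Matrix.mul_vecMulVec, Matrix.single_mulVec]
          ext i j
          simp [Matrix.vecMulVec_apply, hl]
        rw [add_mul, one_mul, mul_add, h0, mul_one, add_zero, add_assoc]
        congr 1
        ext i j
        by_cases hi : i = z <;> by_cases hj : j = l <;>
          simp [Matrix.vecMulVec_apply, hi, hj, eq_comm (a := z),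
            eq_comm (a := l), mul_comm]

theorem finite_commutatorSet_of_finiteIndex_center {G : Type*} [Group G]
    [(Subgroup.center G).FiniteIndex] : Finite (commutatorSet G) := by
  refine ((Set.finite_range fun p : (G ⧸ Subgroup.center G) × (G ⧸ Subgroup.center G) =>
    ⁅p.1.out, p.2.out⁆).subset ?_).to_subtype
  rintro _ ⟨a, b, rfl⟩
  obtain ⟨⟨z, hz⟩, h1⟩ := QuotientGroup.mk_out_eq_mul (Subgroup.center G) a
  obtain ⟨⟨w, hw⟩, h2⟩ := QuotientGroup.mk_out_eq_mul (Subgroup.center G) b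
  refine ⟨(a, b), ?_⟩
  simp only [h1, h2, commutatorElement_def, mul_inv_rev]
  rw [Subgroup.mem_center_iff] at hz hw
  have e1 : ∀ g, z * g = g * z := fun g => (hz g).symm
  have e2 : ∀ g, w * g = g * w := fun g => (hw g).symm
  have e3 : ∀ g, z⁻¹ * g = g * z⁻¹ := fun g => by
    rw [inv_mul_eq_iff_eq_mul, ← mul_assoc, e1, mul_assoc, mul_inv_cancel, mul_one]
  have e4 : ∀ g, w⁻¹ * g = g * w⁻¹ := fun g => by
    rw [inv_mul_eq_iff_eq_mul, ← mul_assoc, e2, mul_assoc, mul_inv_cancel, mul_one]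
  calc a * z * (b * w) * (z⁻¹ * a⁻¹) * (w⁻¹ * b⁻¹)
      = a * (z * (b * w)) * (z⁻¹ * a⁻¹) * (w⁻¹ * b⁻¹) := by group
    _ = a * b * (w * a⁻¹) * (w⁻¹ * b⁻¹) := by rw [e1]; group
    _ = a * b * a⁻¹ * b⁻¹ := by rw [e2]; group

theorem mem_ker_map_castRingHom_iff {q : ℕ} {A : Matrix.SpecialLinearGroup ι ℤ} :
    A ∈ (Matrix.SpecialLinearGroup.map (n := ι) (Int.castRingHom (ZMod q))).ker ↔
      ∀ i j, (q : ℤ) ∣ A i j - (1 : Matrix ι ι ℤ) i j := by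
  rw [MonoidHom.mem_ker, Matrix.SpecialLinearGroup.ext_iff]
  refine forall₂_congr fun i j => ?_
  rw [← ZMod.intCast_zmod_eq_zero_iff_dvd, Int.cast_sub, sub_eq_zero]
  rw [Matrix.SpecialLinearGroup.map_apply_coe, Matrix.SpecialLinearGroup.coe_one]
  simp only [RingHom.mapMatrix_apply, Matrix.map_apply, Matrix.one_apply]
  by_cases h : i = j <;> simp [h]

theorem commutator_transvection_mem {N : Subgroup (Matrix.SpecialLinearGroup ι ℤ)} [N.Normal]
    {q : ℕ} (hq : q ≠ 0) (hN : ∀ i j (h : i ≠ j), transvection h (q : ℤ) ∈ N)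
    (hNq : N ≤ (Matrix.SpecialLinearGroup.map (n := ι) (Int.castRingHom (ZMod q))).ker)
    (hι : 3 ≤ Fintype.card ι) {A : Matrix.SpecialLinearGroup ι ℤ}
    (hA : A ∈ (Matrix.SpecialLinearGroup.map (n := ι) (Int.castRingHom (ZMod q))).ker)
    {z j : ι} (h : z ≠ j) (c : ℤ) :
    A * transvection h c * A⁻¹ * (transvection h c)⁻¹ ∈ N := by
  obtain ⟨ν, hν, hνe⟩ := exists_mem_smul_single_eq hN hι A z
    fun i => mem_ker_map_castRingHom_iff.1 hA i z
  set T := transvection h c with hT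
  set B := ν⁻¹ * A with hB
  have hBe : B⁻¹ • (Pi.single z 1 : ι → ℤ) = Pi.single z 1 := by
    rw [hB, mul_inv_rev, inv_inv, mul_smul, hνe, inv_smul_smul]
  have hBe' : B • (Pi.single z 1 : ι → ℤ) = Pi.single z 1 := by
    rw [hB, mul_smul, ← hνe, inv_smul_smul]
  have hBq : B⁻¹ ∈ (Matrix.SpecialLinearGroup.map (n := ι) (Int.castRingHom (ZMod q))).ker :=
    inv_mem (mul_mem (inv_mem (hNq hν)) hA)
  choose w hw using mem_ker_map_castRingHom_iff.1 hBq j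
  have hBz : ∀ i, B⁻¹ i z = (Pi.single z 1 : ι → ℤ) i := fun i => by
    rw [← smul_single_one_apply, hBe]
  have hX : B * T * B⁻¹ * T⁻¹ ∈ N := by
    refine mem_of_eq_one_add_vecMulVec hN z Finset.univ (c • w) ?_ (by simp) _ ?_
    · have := hw z
      rw [hBz, Matrix.one_apply_ne h.symm, Pi.single_eq_of_ne h.symm, sub_zero, zero_eq_mul] at this
      simp [this.resolve_left (by exact_mod_cast hq)]
    · have hs : ∀ c, Matrix.single z j c =
          Matrix.vecMulVec (Pi.single z 1 : ι → ℤ) (Pi.single j c) := by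
        intro c
        ext x y
        by_cases hx : x = z <;> by_cases hy : y = j <;>
          simp [Matrix.vecMulVec_apply, hx, hy, eq_comm (a := z), eq_comm (a := j)]
      have hBT : B * T * B⁻¹ * T⁻¹ = B * T * B⁻¹ * transvection h (-c) := by
        rw [hT, transvection_inv]
      have hBv : (B : Matrix ι ι ℤ).mulVec (Pi.single z 1) = Pi.single z 1 := hBe'
      have hBB :
          (B : Matrix ι ι ℤ) * ((B⁻¹ : Matrix.SpecialLinearGroup ι ℤ) : Matrix ι ι ℤ) = 1 := by
        rw [← Matrix.SpecialLinearGroup.coe_mul, mul_inv_cancel, Matrix.SpecialLinearGroup.coe_one]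
      have h1 : (B : Matrix ι ι ℤ) * (1 + Matrix.single z j c) *
          ((B⁻¹ : Matrix.SpecialLinearGroup ι ℤ) : Matrix ι ι ℤ) =
          1 + Matrix.vecMulVec (Pi.single z 1) (c • fun l => B⁻¹ j l) := by
        rw [mul_add, mul_one, add_mul, hBB, hs, Matrix.mul_vecMulVec, hBv, Matrix.vecMulVec_mul]
        congr 2
        ext l
        simp [Matrix.single_vecMul]
      rw [hBT, Matrix.SpecialLinearGroup.coe_mul, Matrix.SpecialLinearGroup.coe_mul,
        Matrix.SpecialLinearGroup.coe_mul, hT, transvection_coe, transvection_coe, h1]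
      have hz0 : B⁻¹ j z = 0 := by rw [hBz, Pi.single_eq_of_ne h.symm]
      have h2 : Matrix.vecMulVec (Pi.single z 1) (c • fun l => B⁻¹ j l) * Matrix.single z j (-c) =
          (0 : Matrix ι ι ℤ) := by
        have h3 : (c • fun l => B⁻¹ j l) ⬝ᵥ (Pi.single z 1 : ι → ℤ) = 0 := by
          rw [dotProduct_single_one]
          simp only [Pi.smul_apply, smul_eq_mul]
          rw [hz0, mul_zero]
        rw [hs, Matrix.vecMulVec_mul_vecMulVec, h3, zero_smul, Matrix.vecMulVec_zero]
      rw [add_mul, one_mul, mul_add, mul_one, h2, add_zero, add_assoc]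
      congr 1
      ext x y
      have := hw y
      by_cases hx : x = z
      · by_cases hy : y = j
        · subst hx hy
          rw [Matrix.one_apply_eq] at this
          simp [Matrix.vecMulVec_apply]
          linear_combination c * this
        · rw [Matrix.one_apply_ne (Ne.symm hy)] at this
          simp [Matrix.vecMulVec_apply, hx, Ne.symm hy]
          linear_combination c * this
      · simp [Matrix.vecMulVec_apply, hx, Ne.symm hx]
  have : A * T * A⁻¹ * T⁻¹ = ν * (B * T * B⁻¹ * T⁻¹) * (T * ν⁻¹ * T⁻¹) := by rw [hB]; group
  rw [this]
  exact mul_mem (mul_mem hν hX) (Subgroup.Normal.conj_mem inferInstance _ (inv_mem hν) _)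

theorem transvection_eq_commutator {i j l : ι} (hil : i ≠ l) (hlj : l ≠ j) (hij : i ≠ j) (c d : ℤ) :
    transvection hij (c * d) = ⁅transvection hil c, transvection hlj d⁆ := by
  rw [commutatorElement_def, eq_mul_inv_iff_mul_eq, eq_mul_inv_iff_mul_eq]
  apply Subtype.ext
  simp only [Matrix.SpecialLinearGroup.coe_mul, transvection_coe, add_mul, mul_add, one_mul,
    mul_one, Matrix.single_mul_single_same]
  simp only [Matrix.single_mul_single_of_ne, ne_eq, hij.symm, hlj.symm, not_false_eq_true,
    add_zero, zero_mul]
  abel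

theorem exists_ne_ne_of_three_le_card (hι : 3 ≤ Fintype.card ι) (i j : ι) :
    ∃ l, i ≠ l ∧ l ≠ j := by
  by_contra! H
  have : (Finset.univ : Finset ι) ⊆ {i, j} := fun l _ => by
    by_cases h : i = l
    · simp [h]
    · simp [H l h]
  have := Finset.card_le_card this
  have h2 := Finset.card_le_two (a := i) (b := j)
  rw [Finset.card_univ] at this
  omega

theorem finiteIndex_of_transvection_mem {N : Subgroup (Matrix.SpecialLinearGroup ι ℤ)} [N.Normal]
    {q : ℕ} (hq : q ≠ 0) (hN : ∀ i j (h : i ≠ j), transvection h (q : ℤ) ∈ N)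
    (hι : 3 ≤ Fintype.card ι) : N.FiniteIndex := by
  set Γ := (Matrix.SpecialLinearGroup.map (n := ι) (Int.castRingHom (ZMod q))).ker with hΓ
  set P := N ⊓ Γ with hP
  have : NeZero q := ⟨hq⟩
  have hPt : ∀ i j (h : i ≠ j), transvection h (q : ℤ) ∈ P := fun i j h =>
    ⟨hN i j h, mem_ker_map_castRingHom_iff.2 fun x y => by
      rw [transvection_coe, Matrix.add_apply, add_sub_cancel_left, Matrix.single_apply]
      split_ifs <;> simp⟩
  have hgen := elementaryGroup_univ_eq_top (ι := ι)
  set π := QuotientGroup.mk' P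
  have hπ : Function.Surjective π := QuotientGroup.mk'_surjective P
  have hcen : Γ.map π ≤ Subgroup.center _ := by
    rintro _ ⟨A, hA, rfl⟩
    rw [Subgroup.mem_center_iff]
    have : (⊤ : Subgroup (Matrix.SpecialLinearGroup ι ℤ)) ≤
        (Subgroup.centralizer {π A}).comap π := by
      rw [← hgen, elementaryGroup, Subgroup.closure_le]
      rintro _ ⟨z, -, j, -, h, c, rfl⟩
      have := commutator_transvection_mem hq hPt inf_le_right hι hA h c
      rw [SetLike.mem_coe, Subgroup.mem_comap, Subgroup.mem_centralizer_singleton_iff,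
        ← map_mul, ← map_mul]
      have h1 : π (A * transvection h c * A⁻¹ * (transvection h c)⁻¹) = 1 :=
        (QuotientGroup.eq_one_iff _).2 this
      rw [mul_assoc, ← mul_inv_rev, map_mul, map_inv, mul_inv_eq_one] at h1
      exact h1.symm
    intro g
    obtain ⟨g, rfl⟩ := hπ g
    exact Subgroup.mem_centralizer_singleton_iff.1 (this (Subgroup.mem_top g))
  have : Γ.FiniteIndex := Subgroup.finiteIndex_ker _
  have : (Γ.map π).FiniteIndex :=
    ⟨fun h => Subgroup.FiniteIndex.index_ne_zero (H := Γ) (Nat.eq_zero_of_zero_dvd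
      (h ▸ Subgroup.index_map_dvd Γ hπ))⟩
  have : (Subgroup.center (Matrix.SpecialLinearGroup ι ℤ ⧸ P)).FiniteIndex :=
    Subgroup.finiteIndex_of_le hcen
  have := finite_commutatorSet_of_finiteIndex_center (G := Matrix.SpecialLinearGroup ι ℤ ⧸ P)
  have hperf : (⊤ : Subgroup (Matrix.SpecialLinearGroup ι ℤ)) ≤ (_root_.commutator _).comap π := by
    rw [← hgen, elementaryGroup, Subgroup.closure_le]
    rintro _ ⟨i, -, j, -, h, c, rfl⟩
    obtain ⟨l, hil, hlj⟩ := exists_ne_ne_of_three_le_card hι i j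
    rw [SetLike.mem_coe, Subgroup.mem_comap, ← mul_one c, transvection_eq_commutator hil hlj,
      map_commutatorElement]
    exact Subgroup.commutator_mem_commutator (Subgroup.mem_top _) (Subgroup.mem_top _)
  have hfin : Finite (Matrix.SpecialLinearGroup ι ℤ ⧸ P) := by
    have : Finite (_root_.commutator (Matrix.SpecialLinearGroup ι ℤ ⧸ P)) := inferInstance
    have h2 : (_root_.commutator (Matrix.SpecialLinearGroup ι ℤ ⧸ P)) = ⊤ := by
      rw [eq_top_iff]
      intro g _
      obtain ⟨g, rfl⟩ := hπ g
      exact hperf (Subgroup.mem_top g)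
    rw [h2] at this
    exact Finite.of_equiv _ Subgroup.topEquiv.toEquiv
  have : P.FiniteIndex := Subgroup.finiteIndex_of_finite_quotient
  exact Subgroup.finiteIndex_of_le (H := P) inf_le_left

theorem transvection_pow {i j : ι} (h : i ≠ j) (c : ℤ) (n : ℕ) :
    transvection h c ^ n = transvection h (n * c) := by
  induction n with
  | zero => simp
  | succ n ih =>
    rw [pow_succ, ih, ← transvection_add]
    congr 1
    push_cast
    ring

theorem transvection_commute_transvection {i j x y : ι} (h : i ≠ j) (h' : x ≠ y) (c d : ℤ)
    (hjx : j ≠ x) (hyi : y ≠ i) : Commute (transvection h c) (transvection h' d) := by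
  apply Subtype.ext
  simp only [Matrix.SpecialLinearGroup.coe_mul, transvection_coe, add_mul, mul_add, one_mul,
    mul_one]
  rw [Matrix.single_mul_single_of_ne _ _ _ _ hjx, Matrix.single_mul_single_of_ne _ _ _ _ hyi]
  abel

theorem conj_mul_conj_comm {G : Type*} [Group G] (g : G) {x y : G} (h : Commute x y) :
    g * x * g⁻¹ * (g * y * g⁻¹) = g * y * g⁻¹ * (g * x * g⁻¹) := by
  rw [conj_mul, conj_mul, h.eq]

theorem exists_pow_mem_normalCore {G κ : Type*} [Group G] [Finite κ] {Γ M : Subgroup G}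
    [Γ.FiniteIndex] (hM : ∀ γ ∈ Γ, ∀ x ∈ M, γ * x * γ⁻¹ ∈ M) (t : κ → G)
    (ht : ∀ g p, ∃ m : ℕ, m ≠ 0 ∧ g * t p ^ m * g⁻¹ ∈ M) :
    ∃ q : ℕ, q ≠ 0 ∧ ∀ p, t p ^ q ∈ M.normalCore := by
  choose m hm0 hm using ht
  have : Finite (G ⧸ Γ) := Subgroup.finite_quotient_of_finiteIndex
  have := Fintype.ofFinite (G ⧸ Γ)
  have := Fintype.ofFinite κ
  refine ⟨∏ x : (G ⧸ Γ) × κ, m (x.1.out)⁻¹ x.2, Finset.prod_ne_zero_iff.2 fun x _ => hm0 _ _,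
    fun p g => ?_⟩
  obtain ⟨⟨γ, hγ⟩, h1⟩ := QuotientGroup.mk_out_eq_mul Γ g⁻¹
  have hd := Finset.dvd_prod_of_mem (fun x : (G ⧸ Γ) × κ => m (x.1.out)⁻¹ x.2)
    (Finset.mem_univ ((QuotientGroup.mk g⁻¹ : G ⧸ Γ), p))
  obtain ⟨d, hd⟩ := hd
  have h2 := hM γ hγ _ (pow_mem (hm ((QuotientGroup.mk g⁻¹ : G ⧸ Γ).out)⁻¹ p) d)
  rw [conj_pow, ← pow_mul, ← hd, h1] at h2
  convert h2 using 1
  simp only [mul_inv_rev, inv_inv]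
  group

theorem finite_range_of_commutator_pow_eq_one {H : Type*} [Group H] (hι : 3 ≤ Fintype.card ι)
    {Γ : Subgroup (Matrix.SpecialLinearGroup ι ℤ)} (hΓ : Γ.index ≠ 0) (φ : Γ →* H)
    (hφ : ∀ a b c : Γ, a * b = c * (b * a) → Commute c a → Commute c b → ∃ m > 0, φ c ^ m = 1) :
    (Set.range φ).Finite := by
  have hΓi : Γ.FiniteIndex := ⟨hΓ⟩
  set k := Γ.normalCore.index with hk
  have hk0 : k ≠ 0 := Subgroup.FiniteIndex.index_ne_zero
  have hpow : ∀ x, x ^ k ∈ Γ := fun x => Γ.normalCore_le (Subgroup.pow_index_mem _ x)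
  set M := φ.ker.map Γ.subtype with hM
  have hMn : ∀ γ ∈ Γ, ∀ x ∈ M, γ * x * γ⁻¹ ∈ M := by
    intro γ hγ y hy
    obtain ⟨x, hx, rfl⟩ := Subgroup.mem_map.1 hy
    refine Subgroup.mem_map.2 ⟨⟨γ, hγ⟩ * x * ⟨γ, hγ⟩⁻¹, ?_, ?_⟩
    · exact (MonoidHom.normal_ker φ).conj_mem _ hx _
    · simp only [map_mul, map_inv, Subgroup.subtype_apply]
  have key : ∀ (g : Matrix.SpecialLinearGroup ι ℤ) (p : {p : ι × ι // p.1 ≠ p.2}), ∃ m : ℕ, m ≠ 0 ∧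
      g * transvection p.2 (1 : ℤ) ^ m * g⁻¹ ∈ M := by
    rintro g ⟨⟨i, j⟩, h⟩
    change i ≠ j at h
    obtain ⟨l, hil, hlj⟩ := exists_ne_ne_of_three_le_card hι i j
    have hmem : ∀ {x y : ι} (hxy : x ≠ y) (n : ℕ),
        g * transvection hxy ((k * n : ℕ) : ℤ) * g⁻¹ ∈ Γ := by
      intro x y hxy n
      have := hpow (g * transvection hxy (n : ℤ) * g⁻¹)
      rwa [conj_pow, transvection_pow, ← Nat.cast_mul] at this
    obtain ⟨m, hm, hc⟩ := hφ ⟨_, hmem hil 1⟩ ⟨_, hmem hlj 1⟩ ⟨_, hmem h k⟩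
      (Subtype.ext (by
        have := transvection_eq_commutator hil hlj h (k : ℤ) (k : ℤ)
        simp only [Subgroup.coe_mul, mul_one, Nat.cast_mul, this, commutatorElement_def]
        group))
      (Subtype.ext (conj_mul_conj_comm g (transvection_commute_transvection h hil _ _ (Ne.symm h)
        (Ne.symm hil))))
      (Subtype.ext (conj_mul_conj_comm g (transvection_commute_transvection h hlj _ _ (Ne.symm hlj)
        (Ne.symm h))))
    refine ⟨m * (k * k), by positivity, Subgroup.mem_map.2 ⟨(⟨_, hmem h k⟩ : Γ) ^ m, ?_, ?_⟩⟩
    · rw [MonoidHom.mem_ker, map_pow, hc]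
    · rw [map_pow, Subgroup.subtype_apply, conj_pow, transvection_pow, transvection_pow,
        ← Nat.cast_mul, mul_one]
  obtain ⟨q, hq0, hq⟩ := exists_pow_mem_normalCore hMn _ key
  have hN : ∀ i j (h : i ≠ j), transvection h (q : ℤ) ∈ M.normalCore := by
    intro i j h
    have := hq ⟨(i, j), h⟩
    rwa [transvection_pow, mul_one] at this
  have hNf := finiteIndex_of_transvection_mem hq0 hN hι
  have hMf : M.FiniteIndex := Subgroup.finiteIndex_of_le M.normalCore_le
  have h3 : M.index = φ.ker.index * Γ.index := Subgroup.index_map_subtype _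
  have h4 : φ.ker.index ≠ 0 := fun h => hMf.index_ne_zero (by rw [h3, h, zero_mul])
  rw [Subgroup.index_ker] at h4
  have := Nat.finite_of_card_ne_zero h4
  exact Set.toFinite (φ.range : Set H)

end SpecialLinear

section Contraction

/-- In the coordinate `c`, the logarithms of any two difference quotients of `f` on `S` taken inside
an interval of length `ℓ` differ by at most `L * ℓ`. -/
def LogSlopeLipschitzOn {X : Type*} (c : X → ℝ) (f : X → X) (S : Set X) (L : ℝ) : Prop :=
  ∀ u v : ℝ, ∀ y ∈ S, ∀ z ∈ S, ∀ y' ∈ S, ∀ z' ∈ S,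
    c y ∈ Icc u v → c z ∈ Icc u v → c y' ∈ Icc u v → c z' ∈ Icc u v →
    |c (f z) - c (f y)| * |c z' - c y'| ≤
      Real.exp (L * (v - u)) * (|c (f z') - c (f y')| * |c z - c y|)

theorem false_of_commute_contraction {X : Type*} [TopologicalSpace X] {c : X → ℝ}
    (hc : Topology.IsEmbedding c) {T : Set X} (hT : IsCompact T) {p L : ℝ} (hL : 0 ≤ L) {x : X}
    (hx : x ∈ T) (hTx : ∀ y ∈ T, p ≤ c y ∧ c y ≤ c x) {f h : X → X} (hf : MapsTo f T T)
    (hh : MapsTo h T T) (hfm : ∀ y ∈ T, ∀ z ∈ T, c y < c z → c (f y) < c (f z))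
    (hhm : ∀ y ∈ T, ∀ z ∈ T, c y < c z → c (h y) < c (h z))
    (hfs : LogSlopeLipschitzOn c f T L) (hhs : LogSlopeLipschitzOn c h T L)
    (hcont : Continuous h) (hcomm : ∀ y ∈ T, f (h y) = h (f y)) (hlt : c (h x) < c x)
    (hr : ∀ r : ℕ, c (f x) < c (h^[r] x)) : False := by
  have hfT : ∀ n, MapsTo (f^[n]) T T := fun n => hf.iterate n
  have hhT : ∀ n, MapsTo (h^[n]) T T := fun n => hh.iterate n
  have hfmn : ∀ n, ∀ y ∈ T, ∀ z ∈ T, c y < c z → c (f^[n] y) < c (f^[n] z) := by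
    intro n
    induction n with
    | zero => intro y _ z _ h; exact h
    | succ n ih =>
      intro y hy z hz h
      rw [Function.iterate_succ_apply', Function.iterate_succ_apply']
      exact hfm _ (hfT n hy) _ (hfT n hz) (ih y hy z hz h)
  have hhmn : ∀ n, ∀ y ∈ T, ∀ z ∈ T, c y < c z → c (h^[n] y) < c (h^[n] z) := by
    intro n
    induction n with
    | zero => intro y _ z _ h; exact h
    | succ n ih =>
      intro y hy z hz h
      rw [Function.iterate_succ_apply', Function.iterate_succ_apply']
      exact hhm _ (hhT n hy) _ (hhT n hz) (ih y hy z hz h)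
  have hfmle : ∀ n, ∀ y ∈ T, ∀ z ∈ T, c y ≤ c z → c (f^[n] y) ≤ c (f^[n] z) := by
    intro n y hy z hz hyz
    rcases hyz.lt_or_eq with h | h
    · exact (hfmn n y hy z hz h).le
    · rw [hc.injective h]
  have hcommn : ∀ n m, ∀ y ∈ T, f^[n] (h^[m] y) = h^[m] (f^[n] y) := by
    have h1 : ∀ m, ∀ y ∈ T, f (h^[m] y) = h^[m] (f y) := by
      intro m
      induction m with
      | zero => intro y _; rfl
      | succ m ih =>
        intro y hy
        rw [Function.iterate_succ_apply', Function.iterate_succ_apply', hcomm _ (hhT m hy), ih y hy]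
    intro n
    induction n with
    | zero => intro m y _; rfl
    | succ n ih =>
      intro m y hy
      rw [Function.iterate_succ_apply, Function.iterate_succ_apply, h1 m y hy, ih m _ (hf hy)]
  -- the limit of the `h`-orbit of `x`
  have hstep : ∀ m, c (h^[m + 1] x) < c (h^[m] x) := by
    intro m
    rw [Function.iterate_succ_apply]
    exact hhmn m _ (hh hx) _ hx hlt
  have hanti : Antitone fun m => c (h^[m] x) := antitone_nat_of_succ_le fun m => (hstep m).le
  have hbdd : BddBelow (range fun m => c (h^[m] x)) :=
    ⟨p, by rintro _ ⟨m, rfl⟩; exact (hTx _ (hhT m hx)).1⟩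
  have hlim := tendsto_atTop_ciInf hanti hbdd
  obtain ⟨x', hx'T, hx'⟩ : (⨅ m, c (h^[m] x)) ∈ c '' T :=
    (hT.image hc.continuous).isClosed.mem_of_tendsto hlim
      (Filter.Eventually.of_forall fun m => mem_image_of_mem c (hhT m hx))
  rw [← hx'] at hlim
  have hx'le : ∀ m, c x' ≤ c (h^[m] x) := fun m => hx' ▸ ciInf_le hbdd m
  have hx'lt : c x' < c x := (hx'le 1).trans_lt hlt
  have hfx' : c (f x) ≤ c x' := hx' ▸ le_ciInf fun m => (hr m).le
  have hlimX : Filter.Tendsto (fun m => h^[m] x) Filter.atTop (nhds x') :=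
    hc.isInducing.tendsto_nhds_iff.2 hlim
  have hhx' : h x' = x' := by
    refine hc.injective (tendsto_nhds_unique
      (((hc.continuous.comp hcont).tendsto x').comp hlimX) ?_)
    have := (Filter.tendsto_add_atTop_iff_nat 1).2 hlim
    simpa only [Function.comp_def, Function.iterate_succ_apply'] using this
  set u : ℕ → ℝ := fun n => c (f^[n] x) with hu
  set v : ℕ → ℝ := fun n => c (f^[n] x') with hv
  have huv : ∀ n, u (n + 1) ≤ v n := fun n => by
    simp only [hu, hv]
    rw [Function.iterate_succ_apply]
    exact hfmle n _ (hf hx) _ hx'T hfx'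
  have hvu : ∀ n, v n < u n := fun n => hfmn n _ hx'T _ hx hx'lt
  have huanti : Antitone u := antitone_nat_of_succ_le fun n => (huv n).trans (hvu n).le
  have hubdd : BddBelow (range u) :=
    ⟨p, by rintro _ ⟨m, rfl⟩; exact (hTx _ (hfT m hx)).1⟩
  have hulim := tendsto_atTop_ciInf huanti hubdd
  have hsum : ∀ n, ∑ i ∈ Finset.range n, (u i - v i) ≤ c x - p := by
    intro n
    have : ∑ i ∈ Finset.range n, (u i - v i) ≤ u 0 - u n := by
      rw [← Finset.sum_range_sub']
      exact Finset.sum_le_sum fun i _ => by linarith [huv i]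
    have h2 : p ≤ u n := (hTx _ (hfT n hx)).1
    have h3 : u 0 = c x := rfl
    linarith
  have hdist : ∀ n, ∀ y ∈ T, ∀ z ∈ T, ∀ y' ∈ T, ∀ z' ∈ T,
      c x' ≤ c y → c x' ≤ c z → c x' ≤ c y' → c x' ≤ c z' →
      |c (f^[n] z) - c (f^[n] y)| * |c z' - c y'| ≤
        Real.exp (L * ∑ i ∈ Finset.range n, (u i - v i)) *
          (|c (f^[n] z') - c (f^[n] y')| * |c z - c y|) := by
    intro n y hy z hz y' hy' z' hz' h1 h2 h3 h4
    have hIcc : ∀ n, ∀ w ∈ T, c x' ≤ c w → c (f^[n] w) ∈ Icc (v n) (u n) := fun n w hw hxw =>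
      ⟨hfmle n _ hx'T _ hw hxw, hfmle n _ hw _ hx (hTx w hw).2⟩
    by_cases hyz : c z' - c y' = 0
    · rw [hyz]; simp only [abs_zero, mul_zero]; positivity
    have hpos : ∀ n, 0 < |c (f^[n] z') - c (f^[n] y')| := by
      intro n
      rw [abs_pos, sub_ne_zero]
      rcases lt_or_gt_of_ne (sub_ne_zero.1 hyz) with h | h
      · exact (hfmn n _ hz' _ hy' h).ne
      · exact (hfmn n _ hy' _ hz' h).ne'
    induction n with
    | zero => simp [mul_comm]
    | succ n ih =>
      have key := hfs (v n) (u n) _ (hfT n hy) _ (hfT n hz) _ (hfT n hy') _ (hfT n hz')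
        (hIcc n y hy h1) (hIcc n z hz h2) (hIcc n y' hy' h3) (hIcc n z' hz' h4)
      simp only [← Function.iterate_succ_apply' f] at key
      rw [Finset.sum_range_succ, mul_add, Real.exp_add]
      refine le_of_mul_le_mul_right ?_ (hpos n)
      calc _ = (|c (f^[n+1] z) - c (f^[n+1] y)| * |c (f^[n] z') - c (f^[n] y')|) *
              |c z' - c y'| := by ring
        _ ≤ (Real.exp (L * (u n - v n)) * (|c (f^[n+1] z') - c (f^[n+1] y')| *
              |c (f^[n] z) - c (f^[n] y)|)) * |c z' - c y'| :=
            mul_le_mul_of_nonneg_right key (abs_nonneg _)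
        _ = Real.exp (L * (u n - v n)) * |c (f^[n+1] z') - c (f^[n+1] y')| *
              (|c (f^[n] z) - c (f^[n] y)| * |c z' - c y'|) := by ring
        _ ≤ Real.exp (L * (u n - v n)) * |c (f^[n+1] z') - c (f^[n+1] y')| * _ :=
            mul_le_mul_of_nonneg_left ih (by positivity)
        _ = _ := by ring
  have hhslope : ∀ n m, Real.exp (-(L * (u n - u (n + 2)))) ^ m * (u n - c (h (f^[n] x))) ≤
      c (h^[m] (f^[n] x)) - c (h^[m + 1] (f^[n] x)) := by
    intro n m
    induction m with
    | zero => simp [hu]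
    | succ m ih =>
      have hmem : ∀ m, c (h^[m] (f^[n] x)) ∈ Icc (v (n + 1)) (u n) := by
        intro m
        rw [← hcommn n m x hx]
        exact ⟨((hvu (n + 1)).le.trans (huv n)).trans (hfmle n _ hx'T _ (hhT m hx) (hx'le m)),
          hfmle n _ (hhT m hx) _ hx (hTx _ (hhT m hx)).2⟩
      have hfix : ∀ n, h (f^[n] x') = f^[n] x' := fun n => by
        have := hcommn n 1 x' hx'T
        simp only [Function.iterate_one] at this
        rw [← this, hhx']
      have hmem' : ∀ m, h^[m] (f^[n] x) ∈ T := fun m => hhT m (hfT n hx)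
      have key := hhs (v (n + 1)) (u n) _ (hfT (n + 1) hx'T) _ (hfT n hx'T) _ (hmem' (m + 1)) _
        (hmem' m) ⟨le_rfl, ((hvu (n + 1)).le.trans (huv n)).trans (hvu n).le⟩
        ⟨(hvu (n + 1)).le.trans (huv n), (hvu n).le⟩ (hmem (m + 1)) (hmem m)
      rw [hfix, hfix, ← Function.iterate_succ_apply' h, ← Function.iterate_succ_apply' h] at key
      have hmono : ∀ m, c (h^[m + 1] (f^[n] x)) < c (h^[m] (f^[n] x)) := by
        intro m
        rw [← hcommn n m x hx, ← hcommn n (m + 1) x hx]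
        exact hfmn n _ (hhT _ hx) _ (hhT _ hx) (hstep m)
      have hvv : v (n + 1) < v n := (hvu (n + 1)).trans_le (huv n)
      have e1 : |c (f^[n] x') - c (f^[n + 1] x')| = v n - v (n + 1) := abs_of_pos (sub_pos.2 hvv)
      rw [e1, abs_of_pos (sub_pos.2 (hmono m)), abs_of_pos (sub_pos.2 (hmono (m + 1)))] at key
      have key2 : c (h^[m] (f^[n] x)) - c (h^[m + 1] (f^[n] x)) ≤ Real.exp (L * (u n - v (n + 1))) *
          (c (h^[m + 1] (f^[n] x)) - c (h^[m + 1 + 1] (f^[n] x))) := by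
        refine le_of_mul_le_mul_left ?_ (sub_pos.2 hvv)
        linarith
      have key3 : Real.exp (L * (u n - v (n + 1))) ≤ Real.exp (L * (u n - u (n + 2))) :=
        Real.exp_le_exp.2 (mul_le_mul_of_nonneg_left (by linarith [huv (n + 1)]) hL)
      rw [pow_succ', mul_assoc, Real.exp_neg, inv_mul_le_iff₀ (Real.exp_pos _), ← Real.exp_neg]
      exact ih.trans (key2.trans (mul_le_mul_of_nonneg_right key3
        (sub_pos.2 (hmono (m + 1))).le))
  have hmain : ∀ m, c x - c (h x) ≤
      Real.exp (L * (c x - p)) * (c (h^[m] x) - c (h^[m + 1] x)) := by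
    intro m
    have hfin : ∀ n, Real.exp (-(L * (u n - u (n + 2)))) ^ m * (c x - c (h x)) ≤
        Real.exp (L * (c x - p)) * (c (h^[m] x) - c (h^[m + 1] x)) := by
      intro n
      have h1 := hdist n (h^[m + 1] x) (hhT _ hx) (h^[m] x) (hhT _ hx) (h x) (hh hx) x hx
        (hx'le _) (hx'le _) (hx'le 1) hx'lt.le
      have h2 := hhslope n m
      rw [← hcommn n m x hx, ← hcommn n (m + 1) x hx] at h2
      have hh1 := hcommn n 1 x hx
      simp only [Function.iterate_one] at hh1
      rw [← hh1] at h2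
      have hpos : 0 < u n - c (f^[n] (h x)) := sub_pos.2 (hfmn n _ (hh hx) _ hx hlt)
      rw [abs_of_pos (sub_pos.2 (hfmn n _ (hhT _ hx) _ (hhT _ hx) (hstep m))),
        abs_of_pos (sub_pos.2 hlt), abs_of_pos hpos, abs_of_pos (sub_pos.2 (hstep m))] at h1
      have h3 : Real.exp (L * ∑ i ∈ Finset.range n, (u i - v i)) ≤ Real.exp (L * (c x - p)) :=
        Real.exp_le_exp.2 (mul_le_mul_of_nonneg_left (hsum n) hL)
      refine le_of_mul_le_mul_left ?_ hpos
      calc _ = (Real.exp (-(L * (u n - u (n + 2)))) ^ m * (u n - c (f^[n] (h x)))) *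
              (c x - c (h x)) := by ring
        _ ≤ _ := mul_le_mul_of_nonneg_right h2 (sub_pos.2 hlt).le
        _ ≤ _ := h1
        _ ≤ _ := mul_le_mul_of_nonneg_right h3
              (mul_nonneg hpos.le (sub_pos.2 (hstep m)).le)
        _ = _ := by ring
    refine le_of_tendsto' (f := fun n => Real.exp (-(L * (u n - u (n + 2)))) ^ m *
      (c x - c (h x))) (x := Filter.atTop) ?_ hfin
    have h4 : Filter.Tendsto (fun n => u (n + 2)) Filter.atTop (nhds (⨅ i, u i)) :=
      (Filter.tendsto_add_atTop_iff_nat 2).2 hulim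
    have h5 := ((((hulim.sub h4).const_mul L).neg.rexp).pow m).mul_const (c x - c (h x))
    simpa using h5
  have h6 : Filter.Tendsto (fun m => Real.exp (L * (c x - p)) * (c (h^[m] x) - c (h^[m + 1] x)))
      Filter.atTop (nhds 0) := by
    have := (hlim.sub ((Filter.tendsto_add_atTop_iff_nat 1).2 hlim)).const_mul
      (Real.exp (L * (c x - p)))
    simpa using this
  have := ge_of_tendsto' h6 hmain
  linarith

theorem pow_mul_pow_of_mul_eq {G : Type*} [Group G] {f g h : G} (hfg : f * g = h * (g * f))
    (hf : Commute h f) (hg : Commute h g) (m n : ℕ) :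
    f ^ m * g ^ n = h ^ (m * n) * (g ^ n * f ^ m) := by
  have h1 : ∀ n, f * g ^ n = h ^ n * (g ^ n * f) := by
    intro n
    induction n with
    | zero => simp
    | succ n ih =>
      rw [pow_succ g, ← mul_assoc, ih, mul_assoc, mul_assoc, hfg, ← mul_assoc (g ^ n) h,
        ← (hg.pow_right n).eq, pow_succ h]
      simp only [mul_assoc]
  induction m with
  | zero => simp
  | succ m ih =>
    rw [pow_succ' f, mul_assoc, ih, ← mul_assoc f, ← (hf.pow_left (m * n)).eq, mul_assoc,
      ← mul_assoc f, h1, add_mul, one_mul, pow_add]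
    simp only [mul_assoc]

section Kopell

variable {X : Type*} [TopologicalSpace X] {c : X → ℝ} {L : ℝ} {p x : X}

/-- A permutation fixing `p` which is increasing with Lipschitz logarithmic slopes on the part of
`X` with coordinates between those of `p` and `x`. -/
structure TameBetween (c : X → ℝ) (L : ℝ) (p x : X) (φ : Equiv.Perm X) : Prop where
  continuous : Continuous φ
  map_base : φ p = p
  mono : ∀ y ∈ c ⁻¹' Icc (c p) (c x), ∀ z ∈ c ⁻¹' Icc (c p) (c x), c y < c z → c (φ y) < c (φ z)
  slope : LogSlopeLipschitzOn c φ (c ⁻¹' Icc (c p) (c x)) L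

theorem TameBetween.mapsTo (hc : Function.Injective c) {φ : Equiv.Perm X}
    (hφ : TameBetween c L p x φ) (hpx : c p ≤ c x) (hx : c (φ x) ≤ c x) :
    MapsTo φ (c ⁻¹' Icc (c p) (c x)) (c ⁻¹' Icc (c p) (c x)) := by
  have hle : ∀ y ∈ c ⁻¹' Icc (c p) (c x), ∀ z ∈ c ⁻¹' Icc (c p) (c x), c y ≤ c z →
      c (φ y) ≤ c (φ z) := by
    intro y hy z hz h
    rcases h.lt_or_eq with h | h
    · exact (hφ.mono y hy z hz h).le
    · rw [hc h]
  intro y hy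
  refine ⟨?_, (hle y hy x ⟨hpx, le_rfl⟩ hy.2).trans hx⟩
  have := hle p ⟨le_rfl, hpx⟩ y hy hy.1
  rwa [hφ.map_base] at this

theorem false_of_commutator_contraction [CompactSpace X] (hc : Topology.IsEmbedding c) (hL : 0 ≤ L)
    (hpx : c p ≤ c x) {f g h : Equiv.Perm X} (hfg : f * g = h * (g * f)) (hhf : Commute h f)
    (hhg : Commute h g) (hf : TameBetween c L p x f) (hg : TameBetween c L p x g)
    (hh : TameBetween c L p x h) (hfx : c (f x) ≤ c x) (hgx : c (g x) ≤ c x)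
    (hhx : c (h x) < c x) : False := by
  set T := c ⁻¹' Icc (c p) (c x) with hT
  have hxT : x ∈ T := ⟨hpx, le_rfl⟩
  have hTc : IsCompact T := (isClosed_Icc.preimage hc.continuous).isCompact
  have hfT := hf.mapsTo hc.injective hpx hfx
  have hgT := hg.mapsTo hc.injective hpx hgx
  have hhT := hh.mapsTo hc.injective hpx hhx.le
  have core : ∀ φ : Equiv.Perm X, TameBetween c L p x φ → MapsTo φ T T → Commute h φ →
      ∃ r : ℕ, c ((h ^ r) x) ≤ c (φ x) := by
    intro φ hφ hφT hhφ
    by_contra! H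
    refine false_of_commute_contraction hc hTc hL hxT (fun y hy => hy) hφT hhT hφ.mono hh.mono
      hφ.slope hh.slope hh.continuous (fun y _ => ?_) hhx (fun r => ?_)
    · exact (DFunLike.congr_fun hhφ.eq y).symm
    · rw [← Equiv.Perm.coe_pow]; exact H r
  have mapsPow : ∀ φ : Equiv.Perm X, MapsTo φ T T → ∀ n : ℕ, MapsTo (φ ^ n : Equiv.Perm X) T T := by
    intro φ hφ n
    rw [Equiv.Perm.coe_pow]; exact hφ.iterate n
  have monoPow : ∀ φ : Equiv.Perm X, TameBetween c L p x φ → MapsTo φ T T → ∀ n : ℕ,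
      ∀ y ∈ T, ∀ z ∈ T, c y < c z → c ((φ ^ n) y) < c ((φ ^ n) z) := by
    intro φ hφ hφT n
    induction n with
    | zero => intro y _ z _ h; exact h
    | succ n ih =>
      intro y hy z hz h
      rw [pow_succ', Equiv.Perm.mul_apply, Equiv.Perm.mul_apply]
      exact hφ.mono _ (mapsPow φ hφT n hy) _ (mapsPow φ hφT n hz) (ih y hy z hz h)
  have monoPowLe : ∀ φ : Equiv.Perm X, TameBetween c L p x φ → MapsTo φ T T → ∀ n : ℕ,
      ∀ y ∈ T, ∀ z ∈ T, c y ≤ c z → c ((φ ^ n) y) ≤ c ((φ ^ n) z) := by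
    intro φ hφ hφT n y hy z hz h
    rcases h.lt_or_eq with h | h
    · exact (monoPow φ hφ hφT n y hy z hz h).le
    · rw [hc.injective h]
  have lower : ∀ φ : Equiv.Perm X, TameBetween c L p x φ → MapsTo φ T T → Commute h φ →
      ∃ r : ℕ, ∀ n : ℕ, c ((h ^ (r * n)) x) ≤ c ((φ ^ n) x) := by
    intro φ hφ hφT hhφ
    obtain ⟨r, hr⟩ := core φ hφ hφT hhφ
    refine ⟨r, fun n => ?_⟩
    induction n with
    | zero => simp
    | succ n ih =>
      calc c ((h ^ (r * (n + 1))) x) = c ((h ^ r) ((h ^ (r * n)) x)) := by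
            rw [mul_add, mul_one, add_comm, pow_add, Equiv.Perm.mul_apply]
        _ ≤ c ((h ^ r) ((φ ^ n) x)) := monoPowLe h hh hhT r _ (mapsPow h hhT _ hxT) _
            (mapsPow φ hφT _ hxT) ih
        _ = c ((φ ^ n) ((h ^ r) x)) := by
            rw [← Equiv.Perm.mul_apply, (hhφ.pow_pow r n).eq, Equiv.Perm.mul_apply]
        _ ≤ c ((φ ^ n) (φ x)) := monoPowLe φ hφ hφT n _ (mapsPow h hhT _ hxT) _ (hφT hxT) hr
        _ = c ((φ ^ (n + 1)) x) := by rw [pow_succ, Equiv.Perm.mul_apply]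
  obtain ⟨r, hr⟩ := lower f hf hfT hhf
  obtain ⟨s, hs⟩ := lower g hg hgT hhg
  have up : ∀ φ : Equiv.Perm X, TameBetween c L p x φ → MapsTo φ T T → ∀ n : ℕ,
      c ((φ ^ n) x) ≤ c x := fun φ _ hφT n => (mapsPow φ hφT n hxT).2
  set n := r + s + 1 with hn
  have h1 : c ((h ^ (s * n)) ((h ^ (r * n)) x)) ≤ c ((f ^ n) ((g ^ n) x)) :=
    calc _ ≤ c ((h ^ (s * n)) ((f ^ n) x)) := monoPowLe h hh hhT _ _ (mapsPow h hhT _ hxT) _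
            (mapsPow f hfT _ hxT) (hr n)
      _ = c ((f ^ n) ((h ^ (s * n)) x)) := by
            rw [← Equiv.Perm.mul_apply, (hhf.pow_pow (s * n) n).eq, Equiv.Perm.mul_apply]
      _ ≤ _ := monoPowLe f hf hfT n _ (mapsPow h hhT _ hxT) _ (mapsPow g hgT _ hxT) (hs n)
  rw [← Equiv.Perm.mul_apply, ← pow_add, ← Equiv.Perm.mul_apply,
    pow_mul_pow_of_mul_eq hfg hhf hhg] at h1
  have h2 : c ((h ^ (n * n) * (g ^ n * f ^ n)) x) ≤ c ((h ^ (n * n)) x) :=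
    monoPowLe h hh hhT _ _ (mapsPow g hgT _ (mapsPow f hfT _ hxT)) _ hxT
      (mapsPow g hgT _ (mapsPow f hfT _ hxT)).2
  have h3 : c ((h ^ (n * n)) x) < c ((h ^ (s * n + r * n)) x) := by
    have : n * n = s * n + r * n + n := by rw [hn]; ring
    rw [this, pow_add _ (s * n + r * n), Equiv.Perm.mul_apply]
    refine monoPow h hh hhT _ _ (mapsPow h hhT _ hxT) _ hxT ?_
    rw [hn, pow_succ', Equiv.Perm.mul_apply]
    exact (monoPowLe h hh hhT 1 _ (mapsPow h hhT _ hxT) _ hxT (up h hh hhT _)).trans_lt hhx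
  exact absurd (h1.trans h2) (not_le.2 h3)

theorem apply_eq_of_commutator_of_le [CompactSpace X] (hc : Topology.IsEmbedding c) (hL : 0 ≤ L)
    (hpx : c p ≤ c x) {f g h : Equiv.Perm X} (hfg : f * g = h * (g * f)) (hhf : Commute h f)
    (hhg : Commute h g) (hf : TameBetween c L p x f) (hg : TameBetween c L p x g)
    (hh : TameBetween c L p x h) (hh' : TameBetween c L p x h⁻¹) (hfx : c (f x) ≤ c x)
    (hgx : c (g x) ≤ c x) (hhx : c (h x) ≤ c x ∨ c (h⁻¹ x) ≤ c x) : h x = x := by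
  rcases hhx with hhx | hhx
  · by_contra hne
    exact false_of_commutator_contraction hc hL hpx hfg hhf hhg hf hg hh hfx hgx
      (hhx.lt_of_ne (hc.injective.ne hne))
  · by_contra hne
    have hne' : h⁻¹ x ≠ x := fun e => hne (by rw [Equiv.Perm.inv_eq_iff_eq] at e; exact e.symm)
    refine false_of_commutator_contraction hc hL hpx (h := h⁻¹) (f := g) (g := f) ?_ hhg.inv_left
      hhf.inv_left hg hf hh' hgx hfx (hhx.lt_of_ne (hc.injective.ne hne'))
    rw [hfg, inv_mul_cancel_left]

theorem apply_eq_of_commutator [CompactSpace X] (hc : Topology.IsEmbedding c) (hL : 0 ≤ L)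
    (hpx : c p ≤ c x) {f g h : Equiv.Perm X} (hfg : f * g = h * (g * f)) (hhf : Commute h f)
    (hhg : Commute h g)
    (H : ∀ φ ∈ ({f, g, h} : Set (Equiv.Perm X)), TameBetween c L p x φ ∧
      TameBetween c L p x φ⁻¹ ∧ (c (φ x) ≤ c x ∨ c (φ⁻¹ x) ≤ c x)) : h x = x := by
  obtain ⟨hf, hf', hfx⟩ := H f (by simp)
  obtain ⟨hg, hg', hgx⟩ := H g (by simp)
  obtain ⟨hh, hh', hhx⟩ := H h (by simp)
  have inv_left : ∀ {f g h : Equiv.Perm X}, f * g = h * (g * f) → Commute h f → Commute h g →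
      f⁻¹ * g = h⁻¹ * (g * f⁻¹) := by
    intro f g h e h1 _
    rw [inv_mul_eq_iff_eq_mul, ← mul_assoc, ← h1.inv_left.eq, mul_assoc, ← mul_assoc f, e]
    group
  have inv_right : ∀ {f g h : Equiv.Perm X}, f * g = h * (g * f) → Commute h f → Commute h g →
      f * g⁻¹ = h⁻¹ * (g⁻¹ * f) := by
    intro f g h e h1 h2
    rw [mul_inv_eq_iff_eq_mul, ← mul_assoc, h2.inv_left.inv_right.eq, mul_assoc, mul_assoc, e]
    group
  have hinv : h⁻¹ x = x → h x = x := fun e => by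
    rw [Equiv.Perm.inv_eq_iff_eq] at e; exact e.symm
  rcases hfx with hfx | hfx <;> rcases hgx with hgx | hgx
  · exact apply_eq_of_commutator_of_le hc hL hpx hfg hhf hhg hf hg hh hh' hfx hgx hhx
  · exact hinv (apply_eq_of_commutator_of_le hc hL hpx (inv_right hfg hhf hhg) hhf.inv_left
      hhg.inv_left.inv_right hf hg' hh' (by rwa [inv_inv]) hfx hgx
        (by rw [inv_inv]; exact hhx.symm))
  · exact hinv (apply_eq_of_commutator_of_le hc hL hpx (inv_left hfg hhf hhg)
      hhf.inv_left.inv_right hhg.inv_left hf' hg hh' (by rwa [inv_inv]) hfx hgx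
      (by rw [inv_inv]; exact hhx.symm))
  · have := inv_right (inv_left hfg hhf hhg) hhf.inv_left.inv_right hhg.inv_left
    rw [inv_inv] at this
    exact apply_eq_of_commutator_of_le hc hL hpx this hhf.inv_right hhg.inv_right hf' hg' hh hh'
      hfx hgx hhx

end Kopell

end Contraction

section CantorSet

theorem LogSlopeLipschitzOn.mono {X : Type*} {c : X → ℝ} {f : X → X} {S S' : Set X} {L L' : ℝ}
    (h : LogSlopeLipschitzOn c f S L) (hS : S' ⊆ S) (hL : L ≤ L') :
    LogSlopeLipschitzOn c f S' L' := by
  intro u v y hy z hz y' hy' z' hz' h1 h2 h3 h4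
  refine (h u v y (hS hy) z (hS hz) y' (hS hy') z' (hS hz') h1 h2 h3 h4).trans
    (mul_le_mul_of_nonneg_right (Real.exp_le_exp.2 (mul_le_mul_of_nonneg_right hL ?_))
      (by positivity))
  linarith [h1.1, h1.2]

theorem LogSlopeLipschitzOn.neg {X : Type*} {c : X → ℝ} {f : X → X} {S : Set X} {L : ℝ}
    (h : LogSlopeLipschitzOn c f S L) : LogSlopeLipschitzOn (fun x => -c x) f S L := by
  intro u v y hy z hz y' hy' z' hz' h1 h2 h3 h4
  have key : ∀ w, -c w ∈ Icc u v → c w ∈ Icc (-v) (-u) := fun w hw =>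
    ⟨by linarith [hw.2], by linarith [hw.1]⟩
  have := h (-v) (-u) y hy z hz y' hy' z' hz' (key _ h1) (key _ h2) (key _ h3) (key _ h4)
  simp only [neg_sub_neg]
  rw [abs_sub_comm (c (f y)), abs_sub_comm (c y'), abs_sub_comm (c (f y')), abs_sub_comm (c y)]
  rwa [neg_sub_neg] at this

theorem exists_uniform_of_finite {α : Type*} {F : Set α} (hF : F.Finite) {P : α → ℝ → ℝ → Prop}
    (hmono : ∀ a δ δ' L L', δ' ≤ δ → L ≤ L' → P a δ L → P a δ' L')
    (h : ∀ a ∈ F, ∃ δ > 0, ∃ L ≥ 0, P a δ L) : ∃ δ > 0, ∃ L ≥ 0, ∀ a ∈ F, P a δ L := by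
  induction F, hF using Set.Finite.induction_on with
  | empty => exact ⟨1, one_pos, 0, le_rfl, by simp⟩
  | @insert a F _ _ ih =>
    obtain ⟨δ, hδ, L, hL, h1⟩ := ih fun b hb => h b (mem_insert_of_mem _ hb)
    obtain ⟨δ', hδ', L', hL', h2⟩ := h a (mem_insert _ _)
    refine ⟨min δ δ', lt_min hδ hδ', max L L', le_max_of_le_left hL, ?_⟩
    rintro b (rfl | hb)
    · exact hmono _ _ _ _ _ (min_le_right _ _) (le_max_right _ _) h2
    · exact hmono _ _ _ _ _ (min_le_left _ _) (le_max_left _ _) (h1 b hb)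

variable {K : Set ℝ}

/-- On the ball of radius `δ` around `x`, the map `f` is strictly monotone and its logarithmic
slopes are Lipschitz. -/
def HasChartAt (f : K → K) (x : K) (δ L : ℝ) : Prop :=
  LogSlopeLipschitzOn (Subtype.val : K → ℝ) f (Metric.ball x δ) L ∧
    ((∀ y ∈ Metric.ball x δ, ∀ z ∈ Metric.ball x δ, y < z → f y < f z) ∨
      (∀ y ∈ Metric.ball x δ, ∀ z ∈ Metric.ball x δ, y < z → f z < f y))

theorem HasChartAt.mono {f : K → K} {x x' : K} {δ δ' L L' : ℝ} (h : HasChartAt f x δ L)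
    (hδ : Metric.ball x' δ' ⊆ Metric.ball x δ) (hL : L ≤ L') : HasChartAt f x' δ' L' :=
  ⟨h.1.mono hδ hL, h.2.imp (fun H y hy z hz => H y (hδ hy) z (hδ hz))
    fun H y hy z hz => H y (hδ hy) z (hδ hz)⟩

theorem IsD1Lip.exists_hasChartAt {f : Equiv.Perm K} (hf : IsD1Lip K f) (x : K) :
    ∃ δ > 0, ∃ L ≥ 0, HasChartAt f x δ L := by
  obtain ⟨a, b, hx, F, F', hF, hF'c, hinj, ⟨C, hC⟩, hFf⟩ := hf x
  obtain ⟨δ, hδ, hball⟩ := Metric.isOpen_iff.1 isOpen_Ioo (x : ℝ) hx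
  have hmem : ∀ y ∈ Metric.ball x δ, (y : ℝ) ∈ Ioo a b := fun y hy => hball hy
  have hval : ∀ y ∈ Metric.ball x δ, F y = f y := fun y hy => by
    rw [hFf y (hmem y hy) y.2]
    simp [apK]
  refine ⟨δ, hδ, C, C.2, ?_, ?_⟩
  · intro u v y hy z hz y' hy' z' hz' h1 h2 h3 h4
    have slope : ∀ y ∈ Metric.ball x δ, ∀ z ∈ Metric.ball x δ, (y : ℝ) ∈ Icc u v →
        (z : ℝ) ∈ Icc u v → (y : ℝ) < z → ∃ ξ ∈ Ioo a b ∩ Icc u v,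
          |(f z : ℝ) - f y| = |F' ξ| * |(z : ℝ) - y| := by
      intro y hy z hz h1 h2 hyz
      have hsub : Icc (y : ℝ) z ⊆ Ioo a b := fun t ht =>
        ⟨(hmem y hy).1.trans_le ht.1, ht.2.trans_lt (hmem z hz).2⟩
      obtain ⟨ξ, hξ, h⟩ := exists_hasDerivAt_eq_slope F F' hyz
        (fun t ht => (hF t (hsub ht)).1.continuousAt.continuousWithinAt)
        (fun t ht => (hF t (hsub (Ioo_subset_Icc_self ht))).1)
      refine ⟨ξ, ⟨hsub (Ioo_subset_Icc_self hξ), h1.1.trans hξ.1.le, hξ.2.le.trans h2.2⟩, ?_⟩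
      rw [h, hval y hy, hval z hz, ← abs_mul, div_mul_cancel₀ _ (sub_pos.2 hyz).ne']
    have slope' : ∀ y ∈ Metric.ball x δ, ∀ z ∈ Metric.ball x δ, (y : ℝ) ∈ Icc u v →
        (z : ℝ) ∈ Icc u v → (y : ℝ) ≠ z → ∃ ξ ∈ Ioo a b ∩ Icc u v,
          |(f z : ℝ) - f y| = |F' ξ| * |(z : ℝ) - y| := by
      intro y hy z hz h1 h2 hyz
      rcases lt_or_gt_of_ne hyz with h | h
      · exact slope y hy z hz h1 h2 h
      · rw [abs_sub_comm, abs_sub_comm (z : ℝ)]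
        exact slope z hz y hy h2 h1 h
    by_cases hyz : (y : ℝ) = z
    · rw [Subtype.ext hyz]; simp
    by_cases hyz' : (y' : ℝ) = z'
    · rw [hyz']; simp only [sub_self, abs_zero, mul_zero]; positivity
    obtain ⟨ξ, ⟨hξ, hξ1⟩, e⟩ := slope' y hy z hz h1 h2 hyz
    obtain ⟨ξ', ⟨hξ', hξ1'⟩, e'⟩ := slope' y' hy' z' hz' h3 h4 hyz'
    rw [e, e']
    have hl := hC.dist_le_mul ξ hξ ξ' hξ'
    have h5 : Real.log |F' ξ| - Real.log |F' ξ'| ≤ C * (v - u) :=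
      (le_abs_self _).trans (hl.trans
        (mul_le_mul_of_nonneg_left (Real.dist_le_of_mem_Icc hξ1 hξ1') C.2))
    have h6 : |F' ξ| ≤ Real.exp (C * (v - u)) * |F' ξ'| := by
      have p1 : 0 < |F' ξ| := abs_pos.2 (hF ξ hξ).2
      have p2 : 0 < |F' ξ'| := abs_pos.2 (hF ξ' hξ').2
      rw [← Real.exp_log p1, ← Real.exp_log p2, ← Real.exp_add, Real.exp_le_exp]
      linarith
    calc _ ≤ (Real.exp (C * (v - u)) * |F' ξ'|) * |(z : ℝ) - y| * |(z' : ℝ) - y'| :=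
          mul_le_mul_of_nonneg_right (mul_le_mul_of_nonneg_right h6 (abs_nonneg _)) (abs_nonneg _)
      _ = _ := by ring
  · have hFc : ContinuousOn F (Ioo a b) := fun t ht => (hF t ht).1.continuousAt.continuousWithinAt
    rcases hFc.strictMonoOn_of_injOn_Ioo (hx.1.trans hx.2) hinj with h | h
    · left
      intro y hy z hz hyz
      have := h (hmem y hy) (hmem z hz) hyz
      rwa [hval y hy, hval z hz] at this
    · right
      intro y hy z hz hyz
      have := h (hmem y hy) (hmem z hz) hyz
      rwa [hval y hy, hval z hz] at this

theorem IsD1Lip.exists_uniform_chart [CompactSpace K] {f : Equiv.Perm K} (hf : IsD1Lip K f) :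
    ∃ δ > 0, ∃ L ≥ 0, ∀ x, HasChartAt f x δ L := by
  choose δ hδ L hL h using hf.exists_hasChartAt
  obtain ⟨t, -, ht⟩ := isCompact_univ.elim_nhds_subcover (fun x => Metric.ball x (δ x))
    fun x _ => Metric.ball_mem_nhds x (hδ x)
  obtain ⟨ε, hε, hlb⟩ := lebesgue_number_lemma_of_metric (s := (univ : Set K)) (ι := t)
    (c := fun x => Metric.ball x.1 (δ x.1)) isCompact_univ (fun _ => Metric.isOpen_ball) (by
      intro y hy
      obtain ⟨x, hx, hy⟩ := mem_iUnion₂.1 (ht hy)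
      exact mem_iUnion.2 ⟨⟨x, hx⟩, hy⟩)
  refine ⟨ε, hε, ∑ x ∈ t, L x, Finset.sum_nonneg fun x _ => hL x, fun y => ?_⟩
  obtain ⟨⟨x, hx⟩, hxy⟩ := hlb y (mem_univ _)
  exact (h x).mono hxy (Finset.single_le_sum (fun x _ => hL x) hx)

theorem MemDiffLip.exists_strictMono_sq {ψ : Equiv.Perm K} {p : K} (h : MemDiffLip K ψ)
    (h2 : MemDiffLip K (ψ ^ 2)) (hp : ψ p = p) : ∃ δ > 0, ∃ L ≥ 0,
      (∀ y ∈ Metric.ball p δ, ∀ z ∈ Metric.ball p δ, y < z → (ψ ^ 2) y < (ψ ^ 2) z) ∧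
        LogSlopeLipschitzOn (Subtype.val : K → ℝ) (ψ ^ 2 : Equiv.Perm K) (Metric.ball p δ) L := by
  obtain ⟨δ₁, hδ₁, L₁, -, -, h1⟩ := h.2.2.exists_hasChartAt p
  obtain ⟨δ₂, hδ₂, L₂, hL₂, h3, -⟩ := h2.2.2.exists_hasChartAt p
  obtain ⟨δ₃, hδ₃, h4⟩ := Metric.continuousAt_iff.1 (h.1.continuousAt (x := p)) δ₁ hδ₁
  rw [hp] at h4
  refine ⟨min δ₁ (min δ₂ δ₃), lt_min hδ₁ (lt_min hδ₂ hδ₃), L₂, hL₂, ?_,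
    h3.mono (Metric.ball_subset_ball ((min_le_right _ _).trans (min_le_left _ _))) le_rfl⟩
  intro y hy z hz hyz
  have m1 : ∀ {y}, y ∈ Metric.ball p (min δ₁ (min δ₂ δ₃)) → y ∈ Metric.ball p δ₁ :=
    fun hy => Metric.ball_subset_ball (min_le_left _ _) hy
  have m2 : ∀ {y}, y ∈ Metric.ball p (min δ₁ (min δ₂ δ₃)) → ψ y ∈ Metric.ball p δ₁ :=
    fun hy => h4 (Metric.ball_subset_ball ((min_le_right _ _).trans (min_le_right _ _)) hy)
  rw [sq, Equiv.Perm.mul_apply, Equiv.Perm.mul_apply]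
  rcases h1 with h1 | h1
  · exact h1 _ (m2 hy) _ (m2 hz) (h1 _ (m1 hy) _ (m1 hz) hyz)
  · exact h1 _ (m2 hz) _ (m2 hy) (h1 _ (m1 hy) _ (m1 hz) hyz)

theorem exists_ball_pow_four_apply_eq [CompactSpace K] {G : Subgroup (Equiv.Perm K)}
    (hG : ∀ g ∈ G, MemDiffLip K g) {a b c : Equiv.Perm K} (ha : a ∈ G) (hb : b ∈ G) (hc : c ∈ G)
    (hab : a * b = c * (b * a)) (hca : Commute c a) (hcb : Commute c b) {p : K} (hap : a p = p)
    (hbp : b p = p) : ∃ δ > 0, ∀ x ∈ Metric.ball p δ, (c ^ 4) x = x := by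
  have hcp : c p = p := by
    have := congrArg (fun g : Equiv.Perm K => g p) hab
    simpa [hap, hbp, eq_comm] using this
  have inv_apply : ∀ {φ : Equiv.Perm K}, φ p = p → φ⁻¹ p = p := fun h => by
    rw [Equiv.Perm.inv_eq_iff_eq, h]
  set F : Set (Equiv.Perm K) := {a, a⁻¹, b, b⁻¹, c ^ 2, (c ^ 2)⁻¹} with hF
  have hFfin : F.Finite := by simp [hF]
  have hFG : ∀ ψ ∈ F, ψ ∈ G ∧ ψ p = p := by
    have hcp2 : (c ^ 2) p = p := by rw [sq, Equiv.Perm.mul_apply, hcp, hcp]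
    rintro ψ (rfl | rfl | rfl | rfl | rfl | rfl)
    exacts [⟨ha, hap⟩, ⟨inv_mem ha, inv_apply hap⟩, ⟨hb, hbp⟩, ⟨inv_mem hb, inv_apply hbp⟩,
      ⟨pow_mem hc 2, hcp2⟩, ⟨inv_mem (pow_mem hc 2), inv_apply hcp2⟩]
  have hsq : ∀ ψ ∈ F, (ψ ^ 2) p = p := fun ψ hψ => by
    rw [sq, Equiv.Perm.mul_apply, (hFG ψ hψ).2, (hFG ψ hψ).2]
  obtain ⟨δ, hδ, L, hL, hchart⟩ := exists_uniform_of_finite hFfin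
    (P := fun ψ δ L => (∀ y ∈ Metric.ball p δ, ∀ z ∈ Metric.ball p δ,
      y < z → (ψ ^ 2) y < (ψ ^ 2) z) ∧
        LogSlopeLipschitzOn (Subtype.val : K → ℝ) (ψ ^ 2 : Equiv.Perm K) (Metric.ball p δ) L)
    (fun ψ δ δ' L L' hδ hL h => ⟨fun y hy z hz => h.1 y (Metric.ball_subset_ball hδ hy) z
      (Metric.ball_subset_ball hδ hz), h.2.mono (Metric.ball_subset_ball hδ) hL⟩)
    (fun ψ hψ => (hG ψ (hFG ψ hψ).1).exists_strictMono_sq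
      (hG _ (pow_mem (hFG ψ hψ).1 2)) (hFG ψ hψ).2)
  obtain ⟨δ₁, hδ₁, -, -, hmaps⟩ := exists_uniform_of_finite hFfin
    (P := fun ψ δ₁ _ => ∀ x ∈ Metric.ball p δ₁, (ψ ^ 2) x ∈ Metric.ball p δ)
    (fun ψ δ δ' L L' hδ _ h x hx => h x (Metric.ball_subset_ball hδ hx))
    (fun ψ hψ => by
      obtain ⟨ε, hε, h⟩ := Metric.continuousAt_iff.1
        ((hG _ (pow_mem (hFG ψ hψ).1 2)).1.continuousAt (x := p)) δ hδ
      rw [hsq ψ hψ] at h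
      exact ⟨ε, hε, 0, le_rfl, fun x hx => h hx⟩)
  refine ⟨min δ δ₁, lt_min hδ hδ₁, fun x hx => ?_⟩
  have hxδ : x ∈ Metric.ball p δ := Metric.ball_subset_ball (min_le_left _ _) hx
  have hxδ₁ : x ∈ Metric.ball p δ₁ := Metric.ball_subset_ball (min_le_right _ _) hx
  have hrel : a ^ 2 * b ^ 2 = c ^ 4 * (b ^ 2 * a ^ 2) := pow_mul_pow_of_mul_eq hab hca hcb 2 2
  have h4 : c ^ 4 = (c ^ 2) ^ 2 := by rw [← pow_mul]
  have hca' : Commute (c ^ 4) (a ^ 2) := hca.pow_pow 4 2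
  have hcb' : Commute (c ^ 4) (b ^ 2) := hcb.pow_pow 4 2
  have hpair : ∀ φ ∈ ({a ^ 2, b ^ 2, c ^ 4} : Set (Equiv.Perm K)),
      ∃ ψ ∈ F, ψ⁻¹ ∈ F ∧ φ = ψ ^ 2 := by
    rintro φ (rfl | rfl | rfl)
    exacts [⟨a, by simp [hF], by simp [hF], rfl⟩, ⟨b, by simp [hF], by simp [hF], rfl⟩,
      ⟨c ^ 2, by simp [hF], by simp [hF], h4⟩]
  have hdich : ∀ ψ ∈ F, ψ⁻¹ ∈ F → x < (ψ ^ 2) x → (ψ⁻¹ ^ 2) x < x := fun ψ hψ hψ' hlt => by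
    have := (hchart _ hψ').1 x hxδ _ (hmaps ψ hψ x hxδ₁) hlt
    rwa [inv_pow, Equiv.Perm.inv_def, Equiv.symm_apply_apply, ← Equiv.Perm.inv_def,
      ← inv_pow] at this
  rcases le_total p x with hpx | hpx
  · have hsub : (Subtype.val : K → ℝ) ⁻¹' Icc (p : ℝ) x ⊆ Metric.ball p δ := fun y hy => by
      rw [Metric.mem_ball, Subtype.dist_eq, Real.dist_eq, abs_lt] at hxδ ⊢
      constructor <;> linarith [hy.1, hy.2, hxδ.1, hxδ.2]
    have htame : ∀ ψ ∈ F, TameBetween (Subtype.val : K → ℝ) L p x (ψ ^ 2) := fun ψ hψ =>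
      ⟨(hG _ (pow_mem (hFG ψ hψ).1 2)).1, hsq ψ hψ, fun y hy z hz h =>
        (hchart ψ hψ).1 y (hsub hy) z (hsub hz) h, (hchart ψ hψ).2.mono hsub le_rfl⟩
    refine apply_eq_of_commutator Topology.IsEmbedding.subtypeVal hL hpx hrel hca' hcb' ?_
    intro φ hφ
    obtain ⟨ψ, hψ, hψ', rfl⟩ := hpair φ hφ
    rw [← inv_pow]
    refine ⟨htame ψ hψ, htame _ hψ', ?_⟩
    rcases le_or_gt ((ψ ^ 2) x) x with h | h
    · exact Or.inl h
    · exact Or.inr (hdich ψ hψ hψ' h).le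
  · have hsub : (fun y : K => -(y : ℝ)) ⁻¹' Icc (-(p : ℝ)) (-x) ⊆ Metric.ball p δ := fun y hy => by
      have h1 := hy.1
      have h2 := hy.2
      rw [Metric.mem_ball, Subtype.dist_eq, Real.dist_eq, abs_lt] at hxδ ⊢
      constructor <;> linarith [hxδ.1, hxδ.2]
    have htame : ∀ ψ ∈ F, TameBetween (fun y : K => -(y : ℝ)) L p x (ψ ^ 2) := fun ψ hψ =>
      ⟨(hG _ (pow_mem (hFG ψ hψ).1 2)).1, hsq ψ hψ, fun y hy z hz h =>
        neg_lt_neg ((hchart ψ hψ).1 z (hsub hz) y (hsub hy) (neg_lt_neg_iff (α := ℝ).1 h)),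
        ((hchart ψ hψ).2.mono hsub le_rfl).neg⟩
    refine apply_eq_of_commutator
      ((Homeomorph.neg ℝ).isEmbedding.comp Topology.IsEmbedding.subtypeVal) hL
      (neg_le_neg hpx) hrel hca' hcb' ?_
    intro φ hφ
    obtain ⟨ψ, hψ, hψ', rfl⟩ := hpair φ hφ
    rw [← inv_pow]
    refine ⟨htame ψ hψ, htame _ hψ', ?_⟩
    rcases le_or_gt x ((ψ ^ 2) x) with h | h
    · exact Or.inl (neg_le_neg h)
    · refine Or.inr (neg_le_neg ?_)
      have := (hchart _ hψ').1 _ (hmaps ψ hψ x hxδ₁) x hxδ h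
      rw [inv_pow, Equiv.Perm.inv_def, Equiv.symm_apply_apply, ← Equiv.Perm.inv_def,
        ← inv_pow] at this
      exact this.le

/-- `e` is a pair of distinct points of `M`, in either order, with no point of `M` strictly
between them. -/
def IsGapPair (M : Set K) (e : K × K) : Prop :=
  e.1 ∈ M ∧ e.2 ∈ M ∧ e.1 ≠ e.2 ∧ ∀ y ∈ M, y ∈ uIcc e.1 e.2 → y = e.1 ∨ y = e.2

theorem IsGapPair.swap {M : Set K} {e : K × K} (he : IsGapPair M e) : IsGapPair M e.swap :=
  ⟨he.2.1, he.1, he.2.2.1.symm, fun y hy h => (he.2.2.2 y hy (by rwa [uIcc_comm])).symm⟩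

theorem IsGapPair.dist_pos {M : Set K} {e : K × K} (he : IsGapPair M e) : 0 < dist e.1 e.2 :=
  _root_.dist_pos.2 he.2.2.1

theorem IsGapPair.le_or_le {M : Set K} {e : K × K} (he : IsGapPair M e) (hlt : e.1 < e.2) {y : K}
    (hy : y ∈ M) : y ≤ e.1 ∨ e.2 ≤ y := by
  by_contra! h
  rcases he.2.2.2 y hy (by rw [uIcc_of_le hlt.le]; exact ⟨h.1.le, h.2.le⟩) with rfl | rfl
  · exact lt_irrefl _ h.1
  · exact lt_irrefl _ h.2

theorem sum_dist_le_of_lt {M : Set K} {m R : ℝ} (hK : K ⊆ Icc m R) {P : Finset (K × K)}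
    (hP : ∀ e ∈ P, IsGapPair M e) (hlt : ∀ e ∈ P, e.1 < e.2) :
    ∑ e ∈ P, dist e.1 e.2 ≤ |R - m| := by
  have hdisj : (P : Set (K × K)).PairwiseDisjoint fun e => Ioo (e.1 : ℝ) e.2 := by
    intro e he e' he' hne
    refine disjoint_left.2 fun t ht ht' => hne ?_
    have h1 := hP e he
    have h1' := hP e' he'
    have l := hlt e he
    have l' := hlt e' he'
    have a1 : e.1 < e'.2 := Subtype.coe_lt_coe.1 (ht.1.trans ht'.2)
    have a2 : e'.1 < e.2 := Subtype.coe_lt_coe.1 (ht'.1.trans ht.2)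
    have b1 := (h1.le_or_le l h1'.1).resolve_right a2.not_ge
    have b2 := (h1'.le_or_le l' h1.1).resolve_right a1.not_ge
    have b3 := (h1.le_or_le l h1'.2.1).resolve_left a1.not_ge
    have b4 := (h1'.le_or_le l' h1.2.1).resolve_left a2.not_ge
    exact Prod.ext (le_antisymm b2 b1) (le_antisymm b3 b4)
  have hvol := MeasureTheory.measure_biUnion_finset (μ := MeasureTheory.volume) hdisj
    fun _ _ => measurableSet_Ioo
  have hsub : (⋃ e ∈ P, Ioo (e.1 : ℝ) e.2) ⊆ Icc m R := by
    refine iUnion₂_subset fun e _ t ht => ?_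
    exact ⟨(hK e.1.2).1.trans ht.1.le, ht.2.le.trans (hK e.2.2).2⟩
  have hle := MeasureTheory.measure_mono (μ := MeasureTheory.volume) hsub
  rw [hvol, Real.volume_Icc] at hle
  simp only [Real.volume_Ioo] at hle
  rw [← ENNReal.ofReal_sum_of_nonneg
    (fun e he => sub_nonneg.2 (Subtype.coe_le_coe.2 (hlt e he).le))] at hle
  have hsum : ∑ e ∈ P, dist e.1 e.2 = ∑ e ∈ P, ((e.2 : ℝ) - e.1) :=
    Finset.sum_congr rfl fun e he => by
      rw [dist_comm, Subtype.dist_eq, Real.dist_eq,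
        abs_of_nonneg (sub_nonneg.2 (Subtype.coe_le_coe.2 (hlt e he).le))]
  rw [hsum]
  exact (ENNReal.ofReal_le_ofReal_iff (abs_nonneg _)).1
    (hle.trans (ENNReal.ofReal_le_ofReal (le_abs_self _)))

theorem exists_sum_dist_le [CompactSpace K] (M : Set K) : ∃ Λ, 0 ≤ Λ ∧ ∀ P : Finset (K × K),
    (∀ e ∈ P, IsGapPair M e) → ∑ e ∈ P, dist e.1 e.2 ≤ Λ := by
  classical
  have hK : IsCompact K := isCompact_iff_compactSpace.2 ‹_›
  obtain ⟨m, hm⟩ := hK.bddBelow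
  obtain ⟨R, hR⟩ := hK.bddAbove
  have hsub : K ⊆ Icc m R := fun x hx => ⟨hm hx, hR hx⟩
  refine ⟨|R - m| + |R - m|, by positivity, fun P hP => ?_⟩
  rw [← Finset.sum_filter_add_sum_filter_not P (fun e => e.1 < e.2)]
  refine add_le_add (sum_dist_le_of_lt hsub (M := M)
    (fun e he => hP e (Finset.mem_filter.1 he).1) fun e he => (Finset.mem_filter.1 he).2) ?_
  have := sum_dist_le_of_lt hsub (M := M) (P := {e ∈ P | ¬ e.1 < e.2}.map
    (Equiv.prodComm K K).toEmbedding) ?_ ?_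
  · rw [Finset.sum_map] at this
    simpa [dist_comm] using this
  · intro e he
    obtain ⟨e', he', rfl⟩ := Finset.mem_map.1 he
    exact (hP e' (Finset.mem_filter.1 he').1).swap
  · intro e he
    obtain ⟨e', he', rfl⟩ := Finset.mem_map.1 he
    obtain ⟨h1, h2⟩ := Finset.mem_filter.1 he'
    exact (not_lt.1 h2).lt_of_ne (hP e' h1).2.2.1.symm

theorem finite_setOf_isGapPair_le_dist [CompactSpace K] (M : Set K) {ε : ℝ} (hε : 0 < ε) :
    {e | IsGapPair M e ∧ ε ≤ dist e.1 e.2}.Finite := by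
  obtain ⟨Λ, -, hsum⟩ := exists_sum_dist_le M
  by_contra hinf
  obtain ⟨n, hn⟩ := exists_nat_gt (Λ / ε)
  obtain ⟨P, hP, hcard⟩ := Set.Infinite.exists_subset_card_eq hinf n
  have h1 := hsum P fun e he => (hP he).1
  have h2 : (n : ℝ) * ε ≤ ∑ e ∈ P, dist e.1 e.2 := by
    rw [← hcard, ← nsmul_eq_mul]
    exact Finset.card_nsmul_le_sum _ _ _ fun e he => (hP he).2
  rw [div_lt_iff₀ hε] at hn
  linarith

theorem exists_isGapPair_between [CompactSpace K] (hK : IsTotallyDisconnected K) {M : Set K}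
    (hM : IsClosed M) {a b : K} (ha : a ∈ M) (hb : b ∈ M) (hab : a < b) :
    ∃ e, IsGapPair M e ∧ dist e.1 e.2 ≤ dist a b := by
  obtain ⟨t, ht, hta, htb⟩ := isTotallyDisconnected_iff_lt.1 hK a a.2 b b.2 hab
  have hc : Continuous (Subtype.val : K → ℝ) := continuous_subtype_val
  obtain ⟨u, ⟨huM, hut⟩, hu⟩ := ((hM.inter (isClosed_le hc continuous_const)).isCompact
    (s := M ∩ {y : K | (y : ℝ) ≤ t})).exists_isGreatest ⟨a, ha, hta.le⟩
  obtain ⟨v, ⟨hvM, hvt⟩, hv⟩ := ((hM.inter (isClosed_le continuous_const hc)).isCompact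
    (s := M ∩ {y : K | t ≤ (y : ℝ)})).exists_isLeast ⟨b, hb, htb.le⟩
  have hau : a ≤ u := hu ⟨ha, hta.le⟩
  have hvb : v ≤ b := hv ⟨hb, htb.le⟩
  have hut' : (u : ℝ) < t := lt_of_le_of_ne hut fun h => ht (h ▸ u.2)
  have hvt' : t < v := lt_of_le_of_ne hvt fun h => ht (h ▸ v.2)
  have huv : u < v := Subtype.coe_lt_coe.1 (hut'.trans hvt')
  refine ⟨(u, v), ⟨huM, hvM, huv.ne, fun y hy h => ?_⟩, ?_⟩
  · rw [uIcc_of_le huv.le] at h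
    rcases le_total (y : ℝ) t with hyt | hyt
    · exact Or.inl (le_antisymm (hu ⟨hy, hyt⟩) h.1)
    · exact Or.inr (le_antisymm h.2 (hv ⟨hy, hyt⟩))
  · have h1 : (a : ℝ) ≤ u := hau
    have h2 : (v : ℝ) ≤ b := hvb
    rw [dist_comm, dist_comm a, Subtype.dist_eq, Subtype.dist_eq, Real.dist_eq, Real.dist_eq,
      abs_of_pos (by linarith : (0 : ℝ) < v - u), abs_of_pos (by linarith : (0 : ℝ) < b - a)]
    linarith

theorem exists_isGapPair_dist_lt [CompactSpace K] (hK : IsTotallyDisconnected K) {M : Set K}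
    (hM : IsClosed M) (hinf : M.Infinite) {ε : ℝ} (hε : 0 < ε) :
    ∃ e, IsGapPair M e ∧ dist e.1 e.2 < ε := by
  obtain ⟨x, hxM, hx⟩ := hinf.exists_accPt_of_subset_isCompact hM.isCompact subset_rfl
  obtain ⟨y, ⟨hy, hyM⟩, hne⟩ := accPt_iff_nhds.1 hx _ (Metric.ball_mem_nhds x hε)
  have : ∃ a ∈ M, ∃ b ∈ M, a < b ∧ dist a b < ε := by
    rcases lt_or_gt_of_ne hne with h | h
    · exact ⟨y, hyM, x, hxM, h, hy⟩
    · exact ⟨x, hxM, y, hyM, h, by rwa [dist_comm]⟩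
  obtain ⟨a, ha, b, hb, hab, hlt⟩ := this
  obtain ⟨e, he, hle⟩ := exists_isGapPair_between hK hM ha hb hab
  exact ⟨e, he, hle.trans_lt hlt⟩

theorem exists_isGapPair_notMem [CompactSpace K] (hK : IsTotallyDisconnected K) {M : Set K}
    (hM : IsClosed M) (hinf : M.Infinite) {R : Set (K × K)} (hR : R.Finite)
    (hgap : ∀ e ∈ R, IsGapPair M e) : ∃ e, IsGapPair M e ∧ e ∉ R := by
  rcases R.eq_empty_or_nonempty with rfl | hne
  · obtain ⟨e, he, -⟩ := exists_isGapPair_dist_lt hK hM hinf one_pos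
    exact ⟨e, he, notMem_empty e⟩
  · obtain ⟨e₀, he₀, hmin⟩ := R.exists_min_image (fun e => dist e.1 e.2) hR hne
    obtain ⟨e, he, hlt⟩ := exists_isGapPair_dist_lt hK hM hinf (hgap e₀ he₀).dist_pos
    exact ⟨e, he, fun h => (hmin e h).not_gt hlt⟩

/-- A finite symmetric set `S` of permutations preserving the closed set `M`, with uniform charts at
scale `δ`, and sending points at distance less than `δ₁` to points at distance less than `δ`. -/
structure UniformlyCharted (S : Set (Equiv.Perm K)) (M : Set K) (δ δ₁ L : ℝ) : Prop where
  finite : S.Finite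
  inv_mem : ∀ s ∈ S, s⁻¹ ∈ S
  isClosed : IsClosed M
  mapsTo : ∀ s ∈ S, MapsTo s M M
  chart : ∀ s ∈ S, ∀ x, HasChartAt s x δ L
  dist_lt : ∀ s ∈ S, ∀ y z, dist y z < δ₁ → dist (s y) (s z) < δ
  pos : 0 < δ₁
  le : δ₁ ≤ δ
  nonneg : 0 ≤ L

/-- The gap pairs reached from `T` by at most `n` applications of elements of `S`. -/
def gapBall (S : Set (Equiv.Perm K)) (M : Set K) (T : Set (K × K)) : ℕ → Set (K × K)
  | 0 => T
  | n + 1 => gapBall S M T n ∪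
      {e | IsGapPair M e ∧ ∃ s ∈ S, ∃ e' ∈ gapBall S M T n, e = (s e'.1, s e'.2)}

section

variable {S : Set (Equiv.Perm K)} {M : Set K} {T : Set (K × K)}

theorem gapBall_mono : Monotone (gapBall S M T) :=
  monotone_nat_of_le_succ fun _ => subset_union_left

theorem finite_gapBall (hS : S.Finite) (hT : T.Finite) (n : ℕ) : (gapBall S M T n).Finite := by
  induction n with
  | zero => exact hT
  | succ n ih =>
    refine ih.union (((hS.prod ih).image fun q => ((q.1 q.2.1, q.1 q.2.2) : K × K)).subset ?_)
    rintro e ⟨-, s, hs, e', he', rfl⟩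
    exact ⟨(s, e'), ⟨hs, he'⟩, rfl⟩

theorem isGapPair_of_mem_gapBall (hT : ∀ e ∈ T, IsGapPair M e) {n : ℕ} :
    ∀ e ∈ gapBall S M T n, IsGapPair M e := by
  induction n with
  | zero => exact hT
  | succ n ih => exact fun e he => he.elim (ih e) fun h => h.1

end

namespace UniformlyCharted

variable {S : Set (Equiv.Perm K)} {M : Set K} {T : Set (K × K)} {δ δ₁ L : ℝ}

theorem isGapPair_map (h : UniformlyCharted S M δ δ₁ L) {e : K × K} (he : IsGapPair M e)
    (hlt : dist e.1 e.2 < δ₁) {s : Equiv.Perm K} (hs : s ∈ S) : IsGapPair M (s e.1, s e.2) := by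
  have key : ∀ e : K × K, IsGapPair M e → dist e.1 e.2 < δ₁ → s e.1 < s e.2 → ∀ y ∈ M,
      y ∈ Icc (s e.1) (s e.2) → y = s e.1 ∨ y = s e.2 := by
    intro e he hlt hs12 y hy hyI
    have hd := h.dist_lt s hs e.1 e.2 hlt
    have hm : ∀ z ∈ Icc (s e.1) (s e.2), z ∈ Metric.ball (s e.1) δ := fun z hz => by
      have h1 : (s e.1 : ℝ) ≤ z := hz.1
      have h2 : (z : ℝ) ≤ s e.2 := hz.2
      rw [dist_comm, Subtype.dist_eq, Real.dist_eq, abs_of_nonneg (by linarith)] at hd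
      rw [Metric.mem_ball, Subtype.dist_eq, Real.dist_eq, abs_of_nonneg (by linarith)]
      linarith
    by_contra! hne
    have l1 : s e.1 < y := hyI.1.lt_of_ne hne.1.symm
    have l2 : y < s e.2 := hyI.2.lt_of_ne hne.2
    have hyM : s⁻¹ y ∈ M := h.mapsTo _ (h.inv_mem s hs) hy
    have m1 := hm _ ⟨le_rfl, hs12.le⟩
    have m2 := hm _ ⟨hs12.le, le_rfl⟩
    have m3 := hm _ hyI
    have hbetween : s⁻¹ y ∈ uIcc e.1 e.2 := by
      rcases (h.chart _ (h.inv_mem s hs) (s e.1)).2 with H | H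
      · have a1 := H _ m1 _ m3 l1
        have a2 := H _ m3 _ m2 l2
        simp only [Equiv.Perm.inv_def, Equiv.symm_apply_apply] at a1 a2 ⊢
        exact Icc_subset_uIcc ⟨a1.le, a2.le⟩
      · have a1 := H _ m1 _ m3 l1
        have a2 := H _ m3 _ m2 l2
        simp only [Equiv.Perm.inv_def, Equiv.symm_apply_apply] at a1 a2 ⊢
        exact Icc_subset_uIcc' ⟨a2.le, a1.le⟩
    rcases he.2.2.2 _ hyM hbetween with h1 | h1
    · exact hne.1 (Equiv.Perm.inv_eq_iff_eq.1 h1)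
    · exact hne.2 (Equiv.Perm.inv_eq_iff_eq.1 h1)
  refine ⟨h.mapsTo s hs he.1, h.mapsTo s hs he.2.1, s.injective.ne he.2.2.1, fun y hy hyI => ?_⟩
  rcases lt_or_gt_of_ne (s.injective.ne he.2.2.1) with hs12 | hs12
  · rw [uIcc_of_le hs12.le] at hyI
    exact key e he hlt hs12 y hy hyI
  · rw [uIcc_of_ge hs12.le] at hyI
    exact (key e.swap he.swap (by rwa [Prod.fst_swap, Prod.snd_swap, dist_comm]) hs12 y hy hyI).symm

theorem mul_dist_le (h : UniformlyCharted S M δ δ₁ L) {s : Equiv.Perm K} (hs : s ∈ S) {u v y : K}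
    (huv : dist u v < δ₁) (hy : dist y u ≤ dist u v) :
    dist (s y) (s u) * dist u v ≤
      Real.exp (2 * L * dist u v) * (dist (s u) (s v) * dist y u) := by
  have hδ := h.le
  have hpos := h.pos
  have h1 : u ∈ Metric.ball u δ := Metric.mem_ball_self (by linarith)
  have h2 : y ∈ Metric.ball u δ := Metric.mem_ball.2 (by linarith)
  have h3 : v ∈ Metric.ball u δ := Metric.mem_ball.2 (by rw [dist_comm]; linarith)
  have mem : ∀ z : K, dist z u ≤ dist u v → (z : ℝ) ∈ Icc ((u : ℝ) - dist u v) (u + dist u v) := by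
    intro z hz
    rw [Subtype.dist_eq z, Real.dist_eq, abs_le] at hz
    constructor <;> linarith [hz.1, hz.2]
  have := (h.chart s hs u).1 (u - dist u v) (u + dist u v) u h1 y h2 u h1 v h3
    (mem u (by rw [dist_self]; exact dist_nonneg)) (mem y hy)
    (mem u (by rw [dist_self]; exact dist_nonneg)) (mem v (by rw [dist_comm]))
  simp only [← Real.dist_eq, ← Subtype.dist_eq] at this
  rw [dist_comm v u, dist_comm (s v)] at this
  convert this using 3
  ring

theorem exists_distortion (h : UniformlyCharted S M δ δ₁ L) {G : Subgroup (Equiv.Perm K)}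
    (hSG : S ⊆ G) (hT : ∀ e ∈ T, IsGapPair M e)
    (hbig : ∀ e, IsGapPair M e → e ∉ T → dist e.1 e.2 < δ₁) (n : ℕ) :
    ∀ J ∈ gapBall S M T (n + 1) \ gapBall S M T n, ∃ J₁ ∈ gapBall S M T 1 \ T, ∃ w ∈ G,
      J = (w J₁.1, w J₁.2) ∧ ∃ P : Finset (K × K), (P : Set (K × K)) ⊆ gapBall S M T n ∧
        ∀ y, dist y J₁.1 * Real.exp (2 * L * ∑ e ∈ P, dist e.1 e.2) ≤ dist J₁.1 J₁.2 →
          dist (w y) (w J₁.1) * dist J₁.1 J₁.2 ≤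
            Real.exp (2 * L * ∑ e ∈ P, dist e.1 e.2) * (dist y J₁.1 * dist J.1 J.2) := by
  classical
  induction n with
  | zero =>
    refine fun J hJ => ⟨J, hJ, 1, one_mem G, rfl, ∅, by simp, fun y _ => ?_⟩
    simp
  | succ n ih =>
    rintro J ⟨hJ | ⟨hJ, s, hs, J', hJ', rfl⟩, hJn⟩
    · exact absurd hJ hJn
    have hJ'n : J' ∉ gapBall S M T n := fun hmem =>
      hJn (Or.inr ⟨hJ, s, hs, J', hmem, rfl⟩)
    have hJ'gap : IsGapPair M J' := isGapPair_of_mem_gapBall hT J' hJ'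
    have hJ'lt : dist J'.1 J'.2 < δ₁ :=
      hbig J' hJ'gap fun hmem => hJ'n (gapBall_mono (Nat.zero_le n) hmem)
    obtain ⟨J₁, hJ₁, w, hw, hwJ, P, hP, hdist⟩ := ih J' ⟨hJ', hJ'n⟩
    refine ⟨J₁, hJ₁, s * w, mul_mem (hSG hs) hw, by rw [hwJ]; rfl, insert J' P, ?_, ?_⟩
    · rw [Finset.coe_insert]
      exact insert_subset hJ' (hP.trans (gapBall_mono (Nat.le_succ n)))
    intro y hy
    rw [Finset.sum_insert fun hmem => hJ'n (hP hmem), mul_add, Real.exp_add] at hy ⊢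
    set E := Real.exp (2 * L * ∑ e ∈ P, dist e.1 e.2)
    have hE : 0 < E := Real.exp_pos _
    have hJ'pos := hJ'gap.dist_pos
    have hJ₁pos : 0 < dist J₁.1 J₁.2 := (isGapPair_of_mem_gapBall hT J₁ hJ₁.1).dist_pos
    have hone : 1 ≤ Real.exp (2 * L * dist J'.1 J'.2) :=
      Real.one_le_exp (by have := h.nonneg; positivity)
    set E' := Real.exp (2 * L * dist J'.1 J'.2)
    have hy' : dist y J₁.1 * E ≤ dist J₁.1 J₁.2 := by
      refine le_trans ?_ hy
      have : 0 ≤ dist y J₁.1 * E := by positivity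
      nlinarith
    have h1 := hdist y hy'
    have hw1 : w J₁.1 = J'.1 := by rw [hwJ]
    rw [hw1] at h1
    have h2 : dist (w y) J'.1 ≤ dist J'.1 J'.2 := by
      refine le_of_mul_le_mul_right (h1.trans ?_) hJ₁pos
      calc E * (dist y J₁.1 * dist J'.1 J'.2) = dist J'.1 J'.2 * (dist y J₁.1 * E) := by ring
        _ ≤ _ := mul_le_mul_of_nonneg_left hy' hJ'pos.le
    have h3 := h.mul_dist_le hs hJ'lt h2
    refine le_of_mul_le_mul_right ?_ hJ'pos
    simp only [Equiv.Perm.mul_apply, hw1]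
    calc dist (s (w y)) (s J'.1) * dist J₁.1 J₁.2 * dist J'.1 J'.2
        = dist (s (w y)) (s J'.1) * dist J'.1 J'.2 * dist J₁.1 J₁.2 := by ring
      _ ≤ E' * (dist (s J'.1) (s J'.2) * dist (w y) J'.1) * dist J₁.1 J₁.2 :=
          mul_le_mul_of_nonneg_right h3 hJ₁pos.le
      _ = E' * dist (s J'.1) (s J'.2) * (dist (w y) J'.1 * dist J₁.1 J₁.2) := by ring
      _ ≤ E' * dist (s J'.1) (s J'.2) * (E * (dist y J₁.1 * dist J'.1 J'.2)) :=
          mul_le_mul_of_nonneg_left h1 (by positivity)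
      _ = _ := by ring

end UniformlyCharted

theorem Subgroup.mapsTo_of_mem_closure {X : Type*} {S : Set (Equiv.Perm X)} {N : Set X}
    (hS : ∀ s ∈ S, MapsTo s N N) (hinv : ∀ s ∈ S, s⁻¹ ∈ S) {g : Equiv.Perm X}
    (hg : g ∈ Subgroup.closure S) : MapsTo g N N := by
  suffices MapsTo g N N ∧ MapsTo (g⁻¹ : Equiv.Perm X) N N from this.1
  induction hg using Subgroup.closure_induction with
  | mem s hs => exact ⟨hS s hs, hS _ (hinv s hs)⟩
  | one => simp [mapsTo_id]
  | mul g h _ _ ihg ihh =>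
    rw [mul_inv_rev]
    exact ⟨ihg.1.comp ihh.1, ihh.2.comp ihg.2⟩
  | inv g _ ih => rw [inv_inv]; exact ih.symm

namespace UniformlyCharted

variable {S : Set (Equiv.Perm K)} {M : Set K} {δ δ₁ L : ℝ}

theorem exists_gapBall_growing [CompactSpace K] (hK : IsTotallyDisconnected K)
    (h : UniformlyCharted S M δ δ₁ L) (hinf : M.Infinite)
    (hmin : ∀ N ⊆ M, IsClosed N → N.Nonempty → (∀ s ∈ S, MapsTo s N N) → N = M) :
    ∃ T : Set (K × K), T.Finite ∧ (∀ e ∈ T, IsGapPair M e) ∧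
      (∀ e, IsGapPair M e → e ∉ T → dist e.1 e.2 < δ₁) ∧
      ∀ n, (gapBall S M T (n + 1) \ gapBall S M T n).Nonempty := by
  by_contra! hcon
  have hclosed : ∀ T : Set (K × K), T.Finite → (∀ e ∈ T, IsGapPair M e) →
      (∀ e, IsGapPair M e → e ∉ T → dist e.1 e.2 < δ₁) → ∃ C : Set (K × K), C.Finite ∧ T ⊆ C ∧
        (∀ e ∈ C, IsGapPair M e) ∧
        ∀ e ∈ C, ∀ s ∈ S, IsGapPair M (s e.1, s e.2) → (s e.1, s e.2) ∈ C := by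
    intro T hT hgap hbig
    obtain ⟨n, hn⟩ := hcon T hT hgap hbig
    refine ⟨gapBall S M T n, finite_gapBall h.finite hT n, gapBall_mono (Nat.zero_le n),
      isGapPair_of_mem_gapBall hgap, fun e he s hs hse => ?_⟩
    exact sdiff_eq_empty.1 hn (Or.inr ⟨hse, s, hs, e, he, rfl⟩)
  obtain ⟨C, hC, hTC, hCgap, hCS⟩ := hclosed {e | IsGapPair M e ∧ δ₁ ≤ dist e.1 e.2}
    (finite_setOf_isGapPair_le_dist M h.pos) (fun e he => he.1)
    (fun e he hne => not_le.1 fun hle => hne ⟨he, hle⟩)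
  obtain ⟨I, hI, hIC⟩ := exists_isGapPair_notMem hK h.isClosed hinf hC hCgap
  obtain ⟨C', hC', hCC', hC'gap, hC'S⟩ := hclosed (insert I C) (hC.insert I)
    (fun e he => he.elim (fun h => h ▸ hI) (hCgap e))
    (fun e he hne => not_le.1 fun hle => hne (Or.inr (hTC ⟨he, hle⟩)))
  have hfin : (Prod.fst '' (C' \ C)).Finite := (hC'.subset sdiff_subset).image _
  have heq := hmin (Prod.fst '' (C' \ C)) ?_ hfin.isClosed
    ⟨I.1, I, ⟨hCC' (mem_insert I C), hIC⟩, rfl⟩ ?_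
  · exact hinf (heq ▸ hfin)
  · rintro _ ⟨e, he, rfl⟩
    exact (hC'gap e he.1).1
  · rintro s hs _ ⟨e, ⟨heC', heC⟩, rfl⟩
    have hse := h.isGapPair_map (hC'gap e heC')
      (not_le.1 fun hle => heC (hTC ⟨hC'gap e heC', hle⟩)) hs
    refine ⟨(s e.1, s e.2), ⟨hC'S e heC' s hs hse, fun hmem => heC ?_⟩, rfl⟩
    have := hCS _ hmem s⁻¹ (h.inv_mem s hs)
    simp only [Equiv.Perm.inv_def, Equiv.symm_apply_apply] at this
    exact this (hC'gap e heC')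

theorem exists_contraction [CompactSpace K] (hK : IsTotallyDisconnected K)
    (h : UniformlyCharted S M δ δ₁ L) (hinf : M.Infinite)
    (hmin : ∀ N ⊆ M, IsClosed N → N.Nonempty → (∀ s ∈ S, MapsTo s N N) → N = M) :
    ∃ u ∈ M, ∃ q ∈ M, ∃ ρ > 0, ∀ ε > 0, ∃ w ∈ Subgroup.closure S,
      ∀ y, dist y u ≤ ρ → dist (w y) q < ε := by
  obtain ⟨T, hT, hgap, hbig, hgrow⟩ := h.exists_gapBall_growing hK hinf hmin
  obtain ⟨Λ, -, hΛ⟩ := exists_sum_dist_le M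
  have hdist : ∀ n, ∃ J ∈ gapBall S M T (n + 1) \ gapBall S M T n,
      ∃ J₁ ∈ gapBall S M T 1 \ T, ∃ w ∈ Subgroup.closure S, J = (w J₁.1, w J₁.2) ∧
        ∀ y, dist y J₁.1 ≤ dist J₁.1 J₁.2 / Real.exp (2 * L * Λ) →
          dist (w y) J.1 ≤ dist J.1 J.2 := by
    intro n
    obtain ⟨J, hJ⟩ := hgrow n
    obtain ⟨J₁, hJ₁, w, hw, hwJ, P, hP, hy⟩ :=
      h.exists_distortion Subgroup.subset_closure hgap hbig n J hJ
    refine ⟨J, hJ, J₁, hJ₁, w, hw, hwJ, fun y hle => ?_⟩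
    rw [le_div_iff₀ (Real.exp_pos _)] at hle
    have hexp : Real.exp (2 * L * ∑ e ∈ P, dist e.1 e.2) ≤ Real.exp (2 * L * Λ) :=
      Real.exp_le_exp.2 (mul_le_mul_of_nonneg_left
        (hΛ P fun e he => isGapPair_of_mem_gapBall hgap e (hP he))
        (by have := h.nonneg; positivity))
    have hle' := (mul_le_mul_of_nonneg_left hexp (dist_nonneg (x := y) (y := J₁.1))).trans hle
    have h1 := hy y hle'
    have hJ₁pos : 0 < dist J₁.1 J₁.2 := (isGapPair_of_mem_gapBall hgap J₁ hJ₁.1).dist_pos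
    have hw1 : w J₁.1 = J.1 := by rw [hwJ]
    rw [hw1] at h1
    refine le_of_mul_le_mul_right (h1.trans ?_) hJ₁pos
    calc _ = dist J.1 J.2 * (dist y J₁.1 * Real.exp (2 * L * ∑ e ∈ P, dist e.1 e.2)) := by ring
      _ ≤ _ := mul_le_mul_of_nonneg_left hle' dist_nonneg
  choose J hJ J₁ hJ₁ w hw hwJ hcontr using hdist
  have hJgap : ∀ n, IsGapPair M (J n) := fun n => isGapPair_of_mem_gapBall hgap _ (hJ n).1
  have hJinj : Function.Injective J := by
    have hne : ∀ m n, m < n → J m ≠ J n := fun m n hmn heq =>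
      (hJ n).2 (heq ▸ gapBall_mono (Nat.succ_le_of_lt hmn) (hJ m).1)
    intro m n heq
    by_contra hmn
    rcases lt_or_gt_of_ne hmn with hlt | hlt
    exacts [hne m n hlt heq, hne n m hlt heq.symm]
  have hfin : (gapBall S M T 1 \ T).Finite := (finite_gapBall h.finite hT 1).subset sdiff_subset
  have := hfin.to_subtype
  obtain ⟨⟨I, hI⟩, hIinf⟩ := Finite.exists_infinite_fiber
    fun n => (⟨J₁ n, hJ₁ n⟩ : (gapBall S M T 1 \ T : Set (K × K)))
  rw [Set.infinite_coe_iff] at hIinf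
  set N : Set ℕ := {n | J₁ n = I} with hN
  have hNinf : N.Infinite := hIinf.mono fun n hn => by
    simpa [Subtype.ext_iff, hN] using hn
  have hIgap : IsGapPair M I := isGapPair_of_mem_gapBall hgap I hI.1
  obtain ⟨q, hqM, φ, hφ, hlim⟩ := h.isClosed.isCompact.tendsto_subseq
    (x := fun k => (J (Nat.nth (· ∈ N) k)).1) fun k => (hJgap _).1
  refine ⟨I.1, hIgap.1, q, hqM, dist I.1 I.2 / Real.exp (2 * L * Λ),
    div_pos hIgap.dist_pos (Real.exp_pos _), fun ε hε => ?_⟩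
  have hnth : StrictMono (Nat.nth (· ∈ N)) := Nat.nth_strictMono hNinf
  have hsmall : ∀ᶠ k in Filter.atTop,
      dist (J (Nat.nth (· ∈ N) (φ k))).1 (J (Nat.nth (· ∈ N) (φ k))).2 < ε / 2 := by
    have hpre := ((finite_setOf_isGapPair_le_dist M (half_pos hε)).preimage
      (hJinj.comp (hnth.comp hφ).injective).injOn)
    rw [← Nat.cofinite_eq_atTop]
    filter_upwards [hpre.compl_mem_cofinite] with k hk
    exact not_le.1 fun hle => hk ⟨hJgap _, hle⟩
  obtain ⟨k, hk1, hk2⟩ := (hsmall.and (Metric.tendsto_nhds.1 hlim (ε / 2) (half_pos hε))).exists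
  have hnN : J₁ (Nat.nth (· ∈ N) (φ k)) = I := Nat.nth_mem_of_infinite hNinf _
  refine ⟨w (Nat.nth (· ∈ N) (φ k)), hw _, fun y hy => ?_⟩
  have h1 := hcontr (Nat.nth (· ∈ N) (φ k)) y (by rwa [hnN])
  have h2 := dist_triangle (w (Nat.nth (· ∈ N) (φ k)) y) (J (Nat.nth (· ∈ N) (φ k))).1 q
  simp only [Function.comp_apply] at hk2
  linarith

/-- Sacksteder's argument: an infinite minimal set yields two ping-pong partners, which cannot
satisfy a law of nilpotent groups of class two. -/
theorem exists_mul_ne [CompactSpace K] (hK : IsTotallyDisconnected K)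
    (h : UniformlyCharted S M δ δ₁ L) (hcont : ∀ g ∈ Subgroup.closure S, Continuous g)
    (hinf : M.Infinite)
    (hmin : ∀ N ⊆ M, IsClosed N → N.Nonempty → (∀ s ∈ S, MapsTo s N N) → N = M) :
    ∃ A ∈ Subgroup.closure S, ∃ B ∈ Subgroup.closure S, A * B * B * A ≠ B * A * A * B := by
  obtain ⟨u, hu, q, hq, ρ, hρ, hcontr⟩ := h.exists_contraction hK hinf hmin
  have hinv : ∀ {N : Set K}, (∀ s ∈ S, MapsTo s N N) → ∀ g ∈ Subgroup.closure S, MapsTo g N N :=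
    fun hN g hg => Subgroup.mapsTo_of_mem_closure hN h.inv_mem hg
  have hder : {x | AccPt x (Filter.principal M)} = M := by
    have hclosed : IsClosed {x | AccPt x (Filter.principal M)} := isClosed_derivedSet M
    refine hmin _ ?_ hclosed ?_ ?_
    · intro x hx
      exact h.isClosed.closure_subset (mem_closure_iff_clusterPt.2 hx.clusterPt)
    · obtain ⟨x, -, hx⟩ := hinf.exists_accPt_of_subset_isCompact h.isClosed.isCompact subset_rfl
      exact ⟨x, hx⟩
    · intro s hs x hx
      rw [mem_ofPred_eq, accPt_iff_nhds] at hx ⊢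
      intro U hU
      obtain ⟨y, ⟨hy, hyM⟩, hne⟩ := hx _
        ((hcont s (Subgroup.subset_closure hs)).continuousAt.preimage_mem_nhds hU)
      exact ⟨s y, ⟨hy, h.mapsTo s hs hyM⟩, s.injective.ne hne⟩
  have hdense : ∀ x ∈ M, ∀ U ∈ nhds x, ∃ g ∈ Subgroup.closure S, g q ∈ U := by
    have heq : closure {x | ∃ g ∈ Subgroup.closure S, g q = x} = M := by
      refine hmin _ (closure_minimal ?_ h.isClosed) isClosed_closure
        ⟨q, subset_closure ⟨1, one_mem _, rfl⟩⟩ fun s hs => ?_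
      · rintro _ ⟨g, hg, rfl⟩
        exact hinv h.mapsTo g hg hq
      · refine MapsTo.closure ?_ (hcont s (Subgroup.subset_closure hs))
        rintro _ ⟨g, hg, rfl⟩
        exact ⟨s * g, mul_mem (Subgroup.subset_closure hs) hg, rfl⟩
    intro x hx U hU
    rw [← heq] at hx
    obtain ⟨_, hyU, g, hg, rfl⟩ := mem_closure_iff_nhds.1 hx U hU
    exact ⟨g, hg, hyU⟩
  have hpush : ∀ x ∈ M, ∀ U ∈ nhds x, ∃ A ∈ Subgroup.closure S, ∀ y, dist y u ≤ ρ → A y ∈ U := by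
    intro x hx U hU
    obtain ⟨U', hU', hU'o, hxU'⟩ := mem_nhds_iff.1 hU
    obtain ⟨g, hg, hgq⟩ := hdense x hx U' (hU'o.mem_nhds hxU')
    obtain ⟨ε, hε, hball⟩ := Metric.mem_nhds_iff.1
      ((hcont g hg).continuousAt.preimage_mem_nhds (hU'o.mem_nhds hgq))
    obtain ⟨w, hw, hwy⟩ := hcontr ε hε
    exact ⟨g * w, mul_mem hg hw, fun y hy => hU' (hball (hwy y hy))⟩
  have huacc : AccPt u (Filter.principal M) := by rwa [← hder] at hu
  obtain ⟨v, ⟨hv, hvM⟩, hne⟩ := accPt_iff_nhds.1 huacc _ (Metric.ball_mem_nhds u hρ)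
  obtain ⟨U, V, hU, hV, hUV⟩ := t2_separation_nhds hne
  obtain ⟨A, hA, hAU⟩ := hpush v hvM _ (Filter.inter_mem hU (Metric.isOpen_ball.mem_nhds hv))
  obtain ⟨B, hB, hBV⟩ := hpush u hu _ (Filter.inter_mem hV (Metric.ball_mem_nhds u hρ))
  refine ⟨A, hA, B, hB, fun heq => ?_⟩
  have hA' : ∀ y, dist y u ≤ ρ → dist (A y) u ≤ ρ := fun y hy => (Metric.mem_ball.1 (hAU y hy).2).le
  have hB' : ∀ y, dist y u ≤ ρ → dist (B y) u ≤ ρ := fun y hy => (Metric.mem_ball.1 (hBV y hy).2).le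
  have hu0 : dist u u ≤ ρ := by rw [dist_self]; exact hρ.le
  have h1 : (A * B * B * A) u ∈ U := (hAU _ (hB' _ (hB' _ (hA' _ hu0)))).1
  have h2 : (B * A * A * B) u ∈ V := (hBV _ (hA' _ (hA' _ (hB' _ hu0)))).1
  rw [heq] at h1
  exact disjoint_left.1 hUV h1 h2

end UniformlyCharted

theorem exists_zpow_of_mem_closure_pair {G : Type*} [Group G] {a b c : G}
    (hab : a * b = c * (b * a)) (hca : Commute c a) (hcb : Commute c b) {x y : G}
    (hx : x ∈ Subgroup.closure {a, b}) (hy : y ∈ Subgroup.closure {a, b}) :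
    Commute c x ∧ ∃ i : ℤ, x * y = c ^ i * (y * x) := by
  have hcomm : ∀ x ∈ Subgroup.closure {a, b}, Commute c x := by
    intro x hx
    induction hx using Subgroup.closure_induction with
    | mem x hx => rcases hx with rfl | rfl <;> assumption
    | one => exact Commute.one_right c
    | mul x y _ _ hx hy => exact hx.mul_right hy
    | inv x _ hx => exact hx.inv_right
  have hind : ∀ x, (∀ y ∈ ({a, b} : Set G), ∃ i : ℤ, x * y = c ^ i * (y * x)) →
      ∀ y ∈ Subgroup.closure {a, b}, ∃ i : ℤ, x * y = c ^ i * (y * x) := by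
    intro x hbase y hy
    induction hy using Subgroup.closure_induction with
    | mem y hy => exact hbase y hy
    | one => exact ⟨0, by simp⟩
    | mul y z hy hz ihy ihz =>
      obtain ⟨i, hi⟩ := ihy
      obtain ⟨j, hj⟩ := ihz
      refine ⟨i + j, ?_⟩
      calc x * (y * z) = (x * y) * z := by group
        _ = c ^ i * (y * (x * z)) := by rw [hi]; group
        _ = c ^ i * ((y * c ^ j) * (z * x)) := by rw [hj]; group
        _ = c ^ (i + j) * (y * z * x) := by
          rw [← ((hcomm y hy).zpow_left j).eq]; group
    | inv y hy ih =>
      obtain ⟨i, hi⟩ := ih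
      refine ⟨-i, ?_⟩
      have hcy : c ^ i * y = y * c ^ i := ((hcomm y hy).zpow_left i).eq
      have : y * (c ^ i * x) = x * y := by rw [hi, ← mul_assoc, ← hcy, mul_assoc]
      calc x * y⁻¹ = c ^ (-i) * (y⁻¹ * (y * (c ^ i * x)) * y⁻¹) := by group
        _ = c ^ (-i) * (y⁻¹ * x) := by rw [this]; group
  have hsymm : ∀ x y : G, (∃ i : ℤ, x * y = c ^ i * (y * x)) →
      ∃ i : ℤ, y * x = c ^ i * (x * y) := by
    rintro x y ⟨i, hi⟩
    exact ⟨-i, by rw [hi]; group⟩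
  refine ⟨hcomm x hx,
    hsymm y x (hind y (fun s hs => hsymm s y (hind s (fun t ht => ?_) y hy)) x hx)⟩
  rcases hs with rfl | rfl <;> rcases ht with rfl | rfl
  · exact ⟨0, by simp⟩
  · exact ⟨1, by rw [hab, zpow_one]⟩
  · exact hsymm _ _ ⟨1, by rw [hab, zpow_one]⟩
  · exact ⟨0, by simp⟩

theorem exists_minimal_invariant_subset {X : Type*} [TopologicalSpace X] [CompactSpace X]
    (S : Set (X → X)) {C : Set X} (hC : IsClosed C) (hne : C.Nonempty)
    (hinv : ∀ s ∈ S, MapsTo s C C) : ∃ M ⊆ C, IsClosed M ∧ M.Nonempty ∧ (∀ s ∈ S, MapsTo s M M) ∧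
      ∀ N ⊆ M, IsClosed N → N.Nonempty → (∀ s ∈ S, MapsTo s N N) → N = M := by
  obtain ⟨M, hMC, hM⟩ := zorn_superset_nonempty
    {N : Set X | IsClosed N ∧ N.Nonempty ∧ ∀ s ∈ S, MapsTo s N N} (fun c hc hchain hcne => by
      have := hcne.to_subtype
      refine ⟨⋂₀ c, ⟨isClosed_sInter fun N hN => (hc hN).1, ?_, ?_⟩,
        fun N hN => sInter_subset_of_mem hN⟩
      · exact IsCompact.nonempty_sInter_of_directed_nonempty_isCompact_isClosed
          (fun N hN N' hN' => (hchain.total hN hN').elim (fun h => ⟨N, hN, subset_rfl, h⟩)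
            fun h => ⟨N', hN', h, subset_rfl⟩)
          (fun N hN => (hc hN).2.1)
          (fun N hN => (hc hN).1.isCompact) fun N hN => (hc hN).1
      · exact fun s hs x hx N hN => (hc hN).2.2 s hs (hx N hN)) C ⟨hC, hne, hinv⟩
  exact ⟨M, hMC, hM.prop.1, hM.prop.2.1, hM.prop.2.2, fun N hNM h1 h2 h3 =>
    hNM.antisymm (hM.le_of_le ⟨h1, h2, h3⟩ hNM)⟩

theorem Equiv.Perm.exists_pow_apply_eq_self_of_finite {X : Type*} {M : Set X} (hM : M.Finite)
    {g : Equiv.Perm X} (hg : MapsTo g M M) {p : X} (hp : p ∈ M) : ∃ k > 0, (g ^ k) p = p := by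
  have hmem : ∀ n : ℕ, (g ^ n) p ∈ M := fun n => by
    induction n with
    | zero => simpa
    | succ n ih => rw [pow_succ', Equiv.Perm.mul_apply]; exact hg ih
  obtain ⟨m, n, hmn, heq⟩ := hM.exists_lt_map_eq_of_forall_mem hmem
  refine ⟨n - m, Nat.sub_pos_of_lt hmn, (g ^ m).injective ?_⟩
  rw [← Equiv.Perm.mul_apply, ← pow_add, Nat.add_sub_cancel' hmn.le, heq]

theorem exists_uniformlyCharted [CompactSpace K] {S : Set (Equiv.Perm K)} (hS : S.Finite)
    (hinv : ∀ s ∈ S, s⁻¹ ∈ S) (hdiff : ∀ s ∈ S, MemDiffLip K s) : ∃ δ δ₁ L, ∀ M : Set K,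
      IsClosed M → (∀ s ∈ S, MapsTo s M M) → UniformlyCharted S M δ δ₁ L := by
  obtain ⟨δ, hδ, L, hL, hchart⟩ := exists_uniform_of_finite hS
    (P := fun (s : Equiv.Perm K) δ L => ∀ x, HasChartAt s x δ L)
    (fun s δ δ' L L' hδ hL h x => (h x).mono (Metric.ball_subset_ball hδ) hL)
    (fun s hs => (hdiff s hs).2.2.exists_uniform_chart)
  obtain ⟨δ₁, hδ₁, -, -, hdist⟩ := exists_uniform_of_finite hS
    (P := fun (s : Equiv.Perm K) δ₁ _ => ∀ y z, dist y z < δ₁ → dist (s y) (s z) < δ)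
    (fun s δ δ' _ _ hδ _ h y z hyz => h y z (hyz.trans_le hδ))
    (fun s hs => by
      obtain ⟨ε, hε, h⟩ := Metric.uniformContinuous_iff.1
        (CompactSpace.uniformContinuous_of_continuous (hdiff s hs).1) δ hδ
      exact ⟨ε, hε, 0, le_rfl, fun y z hyz => h hyz⟩)
  exact ⟨δ, min δ δ₁, L, fun M hM hmaps => ⟨hS, hinv, hM, hmaps, hchart, fun s hs y z hyz =>
    hdist s hs y z (hyz.trans_le (min_le_right _ _)), lt_min hδ hδ₁, min_le_left _ _, hL⟩⟩

theorem exists_pow_eq_one_of_commutator [CompactSpace K] (hK : IsTotallyDisconnected K)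
    {G : Subgroup (Equiv.Perm K)} (hG : ∀ g ∈ G, MemDiffLip K g) {a b c : Equiv.Perm K}
    (ha : a ∈ G) (hb : b ∈ G) (hc : c ∈ G) (hab : a * b = c * (b * a)) (hca : Commute c a)
    (hcb : Commute c b) : ∃ m > 0, c ^ m = 1 := by
  set S : Set (Equiv.Perm K) := {a, a⁻¹, b, b⁻¹} with hSdef
  have hS : S.Finite := by simp [hSdef]
  have hinv : ∀ s ∈ S, s⁻¹ ∈ S := by
    rintro s (rfl | rfl | rfl | rfl) <;> simp [hSdef]
  have hSG : S ⊆ G := by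
    rintro s (rfl | rfl | rfl | rfl)
    exacts [ha, inv_mem ha, hb, inv_mem hb]
  have hSab : Subgroup.closure S ≤ Subgroup.closure {a, b} := by
    rw [Subgroup.closure_le]
    rintro s (rfl | rfl | rfl | rfl)
    exacts [Subgroup.subset_closure (by simp), inv_mem (Subgroup.subset_closure (by simp)),
      Subgroup.subset_closure (by simp), inv_mem (Subgroup.subset_closure (by simp))]
  have hcont : ∀ g ∈ Subgroup.closure S, Continuous g := fun g hg =>
    (hG g ((Subgroup.closure_le G).2 hSG hg)).1
  obtain ⟨δ, δ₁, L, hchart⟩ := exists_uniformlyCharted hS hinv fun s hs => hG s (hSG hs)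
  have hlocal : ∀ x : K, ∃ m > 0, ∃ U ∈ nhds x, ∀ y ∈ U, (c ^ m) y = y := by
    intro x
    obtain ⟨M, hMC, hM, ⟨p, hp⟩, hMinv, hmin⟩ := exists_minimal_invariant_subset
      ((fun g : Equiv.Perm K => (g : K → K)) '' S)
      (C := closure {y | ∃ g ∈ Subgroup.closure S, g x = y}) isClosed_closure
      ⟨x, subset_closure ⟨1, one_mem _, rfl⟩⟩ (by
        rintro _ ⟨s, hs, rfl⟩
        refine MapsTo.closure ?_ (hcont s (Subgroup.subset_closure hs))
        rintro _ ⟨g, hg, rfl⟩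
        exact ⟨s * g, mul_mem (Subgroup.subset_closure hs) hg, rfl⟩)
    simp only [forall_mem_image] at hMinv hmin
    have hMfin : M.Finite := by
      by_contra hinf
      obtain ⟨A, hA, B, hB, hne⟩ := (hchart M hM hMinv).exists_mul_ne hK hcont hinf hmin
      obtain ⟨-, i, hi⟩ := exists_zpow_of_mem_closure_pair hab hca hcb (hSab hA) (hSab hB)
      have hcomm := (exists_zpow_of_mem_closure_pair hab hca hcb (hSab (mul_mem hB hA))
        (hSab hA)).1
      refine hne ?_
      calc A * B * B * A = c ^ i * (B * A) * (B * A) := by rw [← hi]; group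
        _ = B * A * (c ^ i * (B * A)) := by
          rw [← mul_assoc (B * A), ← (hcomm.zpow_left i).eq]
        _ = B * A * A * B := by rw [← hi, mul_assoc (B * A)]
    obtain ⟨k, hk, hak⟩ := Equiv.Perm.exists_pow_apply_eq_self_of_finite hMfin
      (hMinv (x := a) (Or.inl rfl)) hp
    obtain ⟨l, hl, hbl⟩ := Equiv.Perm.exists_pow_apply_eq_self_of_finite hMfin
      (hMinv (x := b) (Or.inr (Or.inr (Or.inl rfl)))) hp
    obtain ⟨ε, hε, hfix⟩ := exists_ball_pow_four_apply_eq hG (pow_mem ha k) (pow_mem hb l)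
      (pow_mem hc (k * l)) (pow_mul_pow_of_mul_eq hab hca hcb k l) (hca.pow_pow _ _)
      (hcb.pow_pow _ _) hak hbl
    obtain ⟨_, hgx, g, hg, rfl⟩ :=
      mem_closure_iff_nhds.1 (hMC hp) _ (Metric.ball_mem_nhds p hε)
    refine ⟨k * l * 4, by positivity, g ⁻¹' Metric.ball p ε,
      (hcont g hg).continuousAt.preimage_mem_nhds (Metric.isOpen_ball.mem_nhds hgx),
      fun y hy => g.injective ?_⟩
    have hcg : Commute c g :=
      (exists_zpow_of_mem_closure_pair hab hca hcb (hSab hg) (hSab hg)).1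
    rw [← Equiv.Perm.mul_apply, ← (hcg.pow_left _).eq, Equiv.Perm.mul_apply, pow_mul]
    exact hfix _ hy
  choose m hm U hU hfix using hlocal
  obtain ⟨t, -, ht⟩ := isCompact_univ.elim_nhds_subcover U fun x _ => hU x
  refine ⟨∏ x ∈ t, m x, Finset.prod_pos fun x _ => hm x, Equiv.ext fun y => ?_⟩
  obtain ⟨x, hx, hy⟩ := mem_iUnion₂.1 (ht (mem_univ y))
  obtain ⟨j, hj⟩ := Finset.dvd_prod_of_mem m hx
  rw [hj, pow_mul]
  exact Equiv.Perm.pow_apply_eq_self_of_apply_eq_self (hfix x y hy) j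

end CantorSet

/-- For `n ≥ 3` and `Γ` a finite-index subgroup of `SL_n(ℤ)`, every
homomorphism `Γ → diff^{1+Lip}(K)` has finite image. -/
theorem sl_n_finite_image (K : Set ℝ) (hK : IsCantorInR K)
    (n : ℕ) (hn : 3 ≤ n)
    (Γ : Subgroup (Matrix.SpecialLinearGroup (Fin n) ℤ))
    (hΓ : Γ.index ≠ 0)
    (φ : Γ →* Equiv.Perm K)
    (hφ : ∀ γ : Γ, MemDiffLip K (φ γ)) :
    (Set.range φ).Finite := by
  have := isCompact_iff_compactSpace.1 hK.2.1
  refine finite_range_of_commutator_pow_eq_one (by simpa using hn) hΓ φ fun a b c hab hca hcb => ?_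
  refine exists_pow_eq_one_of_commutator hK.2.2.1 (G := φ.range) ?_ ⟨a, rfl⟩ ⟨b, rfl⟩ ⟨c, rfl⟩
    (by simp only [← map_mul, hab]) (hca.map φ) (hcb.map φ)
  rintro _ ⟨γ, rfl⟩
  exact hφ γ
end
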